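/- For all integers r, m, d ≥ 2 and n ≥ 1, the Fadell–Neuwirth fibration p: F(ℝ^d, m+n) → F(ℝ^d, m), defined by p(x_1, …, x_m, x_{m+1}, …, x_{m+n}) = (x_1, …, x_m), satisfies dTC_r[p: F(ℝ^d, m+n) → F(ℝ^d, m)] = rn + m − 1 if d is odd, and = rn + m − 2 if d is even. In particular, dTC_r[p] = TC_r[p], the r-th sequential parametrized topological complexity of p. -/

import Mathlib

open MeasureTheory unitInterval Set

universe u v

/-- A (Hurewicz) fibration: a continuous map with the homotopy lifting property
with respect to all topological spaces. -/
def IsHurewiczFibration {E B : Type*} [TopologicalSpace E] [TopologicalSpace B]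
    (p : E → B) : Prop :=
  Continuous p ∧
  ∀ (X : Type u) [TopologicalSpace X] (f : X → E) (H : X × I → B),
    Continuous f → Continuous H → (∀ x, H (x, 0) = p (f x)) →
    ∃ G : X × I → E, Continuous G ∧ (∀ x, G (x, 0) = f x) ∧ ∀ z, H z = p (G z)

/-- `dsecat p`: the distributional sectional category of `p : E → B` (with `E` a metric
space), namely the smallest `n` such that the fibration
`𝔅ₙ₊₁(p) : Eₙ₊₁(p) → B` of probability measures with finite support of size at most `n+1`
contained in single fibers of `p` (with the Lévy–Prokhorov metric topology) admits a
continuous section.  (Value `⊤` if no such `n` exists.) -/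
noncomputable def dsecat {E : Type u} {B : Type v} [MetricSpace E] [TopologicalSpace B]
    (p : E → B) : ℕ∞ :=
  letI : MeasurableSpace E := borel E
  haveI : BorelSpace E := ⟨rfl⟩
  sInf {n : ℕ∞ | ∃ m : ℕ, n = (m : ℕ∞) ∧
    ∃ s : B → LevyProkhorov (ProbabilityMeasure E), Continuous s ∧
      ∀ b : B, ∃ S : Finset E, S.card ≤ m + 1 ∧ (↑S : Set E) ⊆ p ⁻¹' {b} ∧
        (s b).toMeasure (↑S : Set E) = 1}

/-- The classical sectional category (Schwarz genus) of a map: the least `n` such that the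
base admits a cover by `n+1` open sets over each of which there is a continuous partial
section. -/
noncomputable def secat {E : Type u} {B : Type v} [TopologicalSpace E] [TopologicalSpace B]
    (p : E → B) : ℕ∞ :=
  sInf {n : ℕ∞ | ∃ m : ℕ, n = (m : ℕ∞) ∧
    ∃ U : Fin (m + 1) → Set B, (∀ i, IsOpen (U i)) ∧ (⋃ i, U i) = Set.univ ∧
      ∀ i, ∃ s : U i → E, Continuous s ∧ ∀ x : U i, p (s x) = (x : B)}

/-- The point `(i)/(r-1)` of the unit interval, for `i : Fin r`. -/
noncomputable def tDiv (r : ℕ) (i : Fin r) : I :=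
  Set.projIcc (0 : ℝ) 1 zero_le_one ((i : ℝ) / (r - 1))

/-- The space `E^I_B` of paths in `E` lying in one single fiber of `p : E → B`. -/
def FibredPaths {E : Type u} {B : Type v} [TopologicalSpace E] [TopologicalSpace B]
    (p : E → B) : Type u :=
  {γ : C(I, E) // ∃ b : B, ∀ t : I, p (γ t) = b}

/-- The fibred product `E^r_B` of `r` copies of `E` over `B`. -/
def FibredProd {E : Type u} {B : Type v} [TopologicalSpace E] [TopologicalSpace B]
    (p : E → B) (r : ℕ) : Type u :=
  {x : Fin r → E // ∀ i j, p (x i) = p (x j)}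

/-- The fibration `Π_r^E : E^I_B → E^r_B`,
`γ ↦ (γ(0), γ(1/(r-1)), …, γ((r-2)/(r-1)), γ(1))`. -/
noncomputable def parmEval {E : Type u} {B : Type v} [TopologicalSpace E] [TopologicalSpace B]
    (p : E → B) (r : ℕ) : FibredPaths p → FibredProd p r :=
  fun γ => ⟨fun i => γ.1 (tDiv r i), by
    obtain ⟨b, hb⟩ := γ.2
    intro i j
    rw [hb, hb]⟩

noncomputable instance {E : Type u} {B : Type v} [MetricSpace E] [TopologicalSpace B] (p : E → B) :
    MetricSpace (FibredPaths p) :=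
  inferInstanceAs (MetricSpace {γ : C(I, E) // ∃ b : B, ∀ t : I, p (γ t) = b})

instance {E : Type u} {B : Type v} [TopologicalSpace E] [TopologicalSpace B] (p : E → B) :
    TopologicalSpace (FibredPaths p) :=
  inferInstanceAs (TopologicalSpace {γ : C(I, E) // ∃ b : B, ∀ t : I, p (γ t) = b})

instance {E : Type u} {B : Type v} [TopologicalSpace E] [TopologicalSpace B] (p : E → B)
    (r : ℕ) : TopologicalSpace (FibredProd p r) :=
  inferInstanceAs (TopologicalSpace {x : Fin r → E // ∀ i j, p (x i) = p (x j)})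

/-- The `r`-th sequential parametrized distributional complexity
`dTC_r[p : E → B] = dsecat (Π_r^E)`. -/
noncomputable def dTCfib {E : Type u} {B : Type v} [MetricSpace E] [TopologicalSpace B]
    (p : E → B) (r : ℕ) : ℕ∞ :=
  dsecat (parmEval p r)

/-- The `r`-th sequential parametrized topological complexity
`TC_r[p : E → B] = secat (Π_r^E)`. -/
noncomputable def TCfib {E : Type u} {B : Type v} [TopologicalSpace E] [TopologicalSpace B]
    (p : E → B) (r : ℕ) : ℕ∞ :=
  secat (parmEval p r)

/-- The fibration `π_r^X : X^I → X^r`, `φ ↦ (φ(0), φ(1/(r-1)), …, φ(1))`. -/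
noncomputable def freeEval (X : Type u) [TopologicalSpace X] (r : ℕ) :
    C(I, X) → (Fin r → X) :=
  fun φ i => φ (tDiv r i)

/-- The `r`-th sequential distributional complexity `dTC_r(X) = dsecat (π_r^X)`. -/
noncomputable def dTC (X : Type u) [MetricSpace X] (r : ℕ) : ℕ∞ :=
  dsecat (freeEval X r)

/-- The distributional category `dcat(X) = dsecat (P₀(X) → X)` of a pointed space,
where `P₀(X) = {φ : I → X | φ(1) = x₀}` and the fibration is evaluation at `0`. -/
noncomputable def dcat (X : Type u) [MetricSpace X] (x₀ : X) : ℕ∞ :=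
  dsecat (fun φ : {φ : C(I, X) // φ 1 = x₀} => φ.1 0)

/-- The configuration space `F(ℝ^d, k)` of `k` distinct ordered points in `ℝ^d`. -/
def Conf (d k : ℕ) : Type :=
  {x : Fin k → EuclideanSpace ℝ (Fin d) // Function.Injective x}

noncomputable instance (d k : ℕ) : MetricSpace (Conf d k) :=
  inferInstanceAs (MetricSpace {x : Fin k → EuclideanSpace ℝ (Fin d) // Function.Injective x})

/-- The Fadell–Neuwirth fibration `p : F(ℝ^d, m+n) → F(ℝ^d, m)` forgetting the last `n`
points. -/
def fadellNeuwirth (d m n : ℕ) : Conf d (m + n) → Conf d m :=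
  fun x => ⟨fun i => x.1 (Fin.castLE (Nat.le_add_right m n) i),
    x.2.comp (Fin.castLE_injective _)⟩



namespace FN

section cochains

/-- The increasing map skipping the value `i`. -/
def skip (i n : ℕ) : ℕ := if n < i then n else n + 1

/-- Coboundary of a `p`-cochain (function on sequences, depending on entries `0..p`). -/
noncomputable def cob {X : Type*} (p : ℕ) (φ : (ℕ → X) → ℝ) (ξ : ℕ → X) : ℝ :=
  ∑ i ∈ Finset.range (p + 2), (-1 : ℝ) ^ i * φ (fun n => ξ (skip i n))

/-- `φ` only depends on the entries `0..p`. -/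
def IsCoch {X : Type*} (p : ℕ) (φ : (ℕ → X) → ℝ) : Prop :=
  ∀ ξ ξ' : ℕ → X, (∀ n ≤ p, ξ n = ξ' n) → φ ξ = φ ξ'

lemma skip_skip {i j : ℕ} (h : j < i) (n : ℕ) : skip i (skip j n) = skip j (skip (i - 1) n) := by
  unfold skip; split_ifs <;> omega

lemma cob_cob {X : Type*} (p : ℕ) (φ : (ℕ → X) → ℝ) (ξ : ℕ → X) :
    cob (p + 1) (cob p φ) ξ = 0 := by
  unfold cob
  simp only [Finset.mul_sum]
  rw [← Finset.sum_product']
  refine Finset.sum_involution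
    (fun a _ => if a.2 < a.1 then (a.2, a.1 - 1) else (a.2 + 1, a.1)) ?_ ?_ ?_ ?_
  · rintro ⟨i, j⟩ _
    dsimp only
    by_cases h : j < i
    · rw [if_pos h]
      have e : (fun n => ξ (skip i (skip j n))) = fun n => ξ (skip j (skip (i - 1) n)) := by
        funext n; rw [skip_skip h]
      dsimp only
      rw [e]
      obtain ⟨k, rfl⟩ : ∃ k, i = k + 1 := ⟨i - 1, by omega⟩
      simp only [Nat.add_sub_cancel, pow_succ]
      ring
    · rw [if_neg h]
      have h' : i < j + 1 := by omega
      have e : (fun n => ξ (skip (j + 1) (skip i n))) = fun n => ξ (skip i (skip j n)) := by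
        funext n; rw [skip_skip h']; simp
      dsimp only
      rw [e]
      simp only [pow_succ]
      ring
  · rintro ⟨i, j⟩ _ _ h
    dsimp only at h
    split_ifs at h <;> simp only [Prod.mk.injEq] at h <;> omega
  · rintro ⟨i, j⟩ h
    simp only [Finset.mem_product, Finset.mem_range] at h
    dsimp only
    split_ifs <;> simp only [Finset.mem_product, Finset.mem_range] <;> omega
  · rintro ⟨i, j⟩ h
    dsimp only
    by_cases h : j < i
    · simp only [if_pos h]
      rw [if_neg (by omega)]
      exact Prod.ext (by dsimp only; try omega) (by dsimp only; try omega)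
    · simp only [if_neg h]
      rw [if_pos (by omega)]
      simp

lemma IsCoch.cob {X : Type*} {p : ℕ} {φ : (ℕ → X) → ℝ} (h : IsCoch p φ) :
    IsCoch (p + 1) (cob p φ) := by
  intro ξ ξ' hx
  unfold FN.cob
  refine Finset.sum_congr rfl fun i _ => ?_
  rw [h (fun n => ξ (skip i n)) (fun n => ξ' (skip i n))]
  intro n hn
  apply hx
  unfold skip; split_ifs <;> omega

/-- Leibniz rule. -/
lemma cob_cup {X : Type*} (p r : ℕ) (a b : (ℕ → X) → ℝ) (ha : IsCoch p a) (ξ : ℕ → X) :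
    cob (p + r) (fun ξ => a ξ * b (fun n => ξ (n + p))) ξ =
      cob p a ξ * b (fun n => ξ (n + (p + 1))) + (-1) ^ p * (a ξ * cob r b (fun n => ξ (n + p))) := by
  unfold cob
  rw [show p + r + 2 = (p + 1) + (r + 1) by ring, Finset.sum_range_add,
    Finset.sum_range_succ _ (p + 1), Finset.sum_range_succ' _ (r + 1)]
  have h1 : ∀ i ∈ Finset.range (p + 1),
      (-1 : ℝ) ^ i * (a (fun n => ξ (skip i n)) * b (fun n => ξ (skip i (n + p)))) =
      (-1 : ℝ) ^ i * a (fun n => ξ (skip i n)) * b (fun n => ξ (n + (p + 1))) := by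
    intro i hi
    have : (fun n => ξ (skip i (n + p))) = fun n => ξ (n + (p + 1)) := by
      funext n
      congr 1
      have := Finset.mem_range.1 hi
      unfold skip; split_ifs <;> omega
    rw [this]; ring
  have h2 : ∀ i ∈ Finset.range (r + 1),
      (-1 : ℝ) ^ (p + 1 + i) * (a (fun n => ξ (skip (p + 1 + i) n)) *
        b (fun n => ξ (skip (p + 1 + i) (n + p)))) =
      (-1) ^ p * (a ξ * ((-1 : ℝ) ^ (i + 1) * b (fun n => ξ (skip (i + 1) n + p)))) := by
    intro i hi
    have e1 : a (fun n => ξ (skip (p + 1 + i) n)) = a ξ := by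
      apply ha
      intro n hn
      congr 1
      unfold skip; split_ifs <;> omega
    have e2 : (fun n => ξ (skip (p + 1 + i) (n + p))) = fun n => ξ (skip (i + 1) n + p) := by
      funext n
      congr 1
      unfold skip; split_ifs <;> omega
    rw [e1, e2]
    ring
  rw [Finset.sum_congr rfl h1, Finset.sum_congr rfl h2]
  have e3 : a (fun n => ξ (skip (p + 1) n)) = a ξ := by
    apply ha
    intro n hn
    congr 1
    unfold skip; split_ifs <;> omega
  have e4 : (fun n => ξ (skip 0 n + p)) = fun n => ξ (n + (p + 1)) := by
    funext n
    congr 1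
    unfold skip; split_ifs <;> omega
  rw [e3, e4, ← Finset.sum_mul, ← Finset.mul_sum, ← Finset.mul_sum]
  ring

/-- Shift of sequences. -/
def shift {X : Type*} (p : ℕ) (ξ : ℕ → X) : ℕ → X := fun n => ξ (n + p)

/-- The prism sequence. -/
def prismSeq {Y : Type*} (i : ℕ) (a b : ℕ → Y) : ℕ → Y := fun n => if n ≤ i then a n else b (n - 1)

/-- The prism operator. -/
noncomputable def prism {Y : Type*} (q : ℕ) (w : (ℕ → Y) → ℝ) (a b : ℕ → Y) : ℝ :=
  ∑ i ∈ Finset.range q, (-1 : ℝ) ^ i * w (prismSeq i a b)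

lemma prism_identity {Y : Type*} (q : ℕ) (w : (ℕ → Y) → ℝ) (hw : IsCoch q w) (a b : ℕ → Y)
    (hcl : ∀ i ≤ q, cob q w (prismSeq i a b) = 0) :
    ∑ j ∈ Finset.range (q + 1), (-1 : ℝ) ^ j *
      prism q w (fun n => a (skip j n)) (fun n => b (skip j n)) = w b - w a := by
  have h0 : ∑ i ∈ Finset.range (q + 1), (-1 : ℝ) ^ i * cob q w (prismSeq i a b) = 0 :=
    Finset.sum_eq_zero fun i hi => by rw [hcl i (by have := Finset.mem_range.1 hi; omega), mul_zero]
  unfold cob at h0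
  simp only [Finset.mul_sum] at h0
  rw [← Finset.sum_product'] at h0
  rw [← Finset.sum_filter_add_sum_filter_not _ (fun x : ℕ × ℕ => x.2 < x.1 ∨ x.1 + 1 < x.2)] at h0
  have hA : ∑ x ∈ (Finset.range (q + 1) ×ˢ Finset.range (q + 2)).filter
        (fun x : ℕ × ℕ => x.2 < x.1 ∨ x.1 + 1 < x.2),
        (-1 : ℝ) ^ x.1 * ((-1) ^ x.2 * w (fun n => prismSeq x.1 a b (skip x.2 n))) =
      - ∑ x ∈ Finset.range (q + 1) ×ˢ Finset.range q, (-1 : ℝ) ^ x.1 * ((-1) ^ x.2 *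
        w (prismSeq x.2 (fun n => a (skip x.1 n)) (fun n => b (skip x.1 n)))) := by
    rw [← Finset.sum_neg_distrib]
    refine Finset.sum_bij' (fun x _ => if x.2 < x.1 then (x.2, x.1 - 1) else (x.2 - 1, x.1))
      (fun x _ => if x.1 ≤ x.2 then (x.2 + 1, x.1) else (x.2, x.1 + 1)) ?_ ?_ ?_ ?_ ?_
    · rintro ⟨i, j⟩ h
      simp only [Finset.mem_filter, Finset.mem_product, Finset.mem_range] at h
      dsimp only
      split_ifs <;> simp only [Finset.mem_product, Finset.mem_range] <;> omega
    · rintro ⟨i, j⟩ h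
      simp only [Finset.mem_product, Finset.mem_range] at h
      dsimp only
      split_ifs <;> simp only [Finset.mem_filter, Finset.mem_product, Finset.mem_range] <;> omega
    · rintro ⟨i, j⟩ h
      simp only [Finset.mem_filter, Finset.mem_product, Finset.mem_range] at h
      dsimp only
      by_cases h1 : j < i
      · simp only [if_pos h1]
        rw [if_pos (by omega)]
        exact Prod.ext (by dsimp only; try omega) (by dsimp only; try omega)
      · simp only [if_neg h1]
        rw [if_neg (by omega)]
        exact Prod.ext (by dsimp only; try omega) (by dsimp only; try omega)
    · rintro ⟨i, j⟩ h
      simp only [Finset.mem_product, Finset.mem_range] at h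
      dsimp only
      by_cases h1 : i ≤ j
      · simp only [if_pos h1]
        rw [if_pos (by omega)]
        simp
      · simp only [if_neg h1]
        rw [if_neg (by omega)]
        simp
    · rintro ⟨i, j⟩ h
      simp only [Finset.mem_filter, Finset.mem_product, Finset.mem_range] at h
      dsimp only
      by_cases h1 : j < i
      · simp only [if_pos h1]
        have e : (fun n => prismSeq i a b (skip j n)) =
            prismSeq (i - 1) (fun n => a (skip j n)) (fun n => b (skip j n)) := by
          funext n
          simp only [prismSeq, skip]
          split_ifs <;> first | omega | (congr 1; omega) | rfl
        rw [e]
        obtain ⟨k, rfl⟩ : ∃ k, i = k + 1 := ⟨i - 1, by omega⟩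
        simp only [Nat.add_sub_cancel, pow_succ]
        ring
      · simp only [if_neg h1]
        obtain ⟨k, rfl⟩ : ∃ k, j = k + 1 := ⟨j - 1, by omega⟩
        have e : (fun n => prismSeq i a b (skip (k + 1) n)) =
            prismSeq i (fun n => a (skip k n)) (fun n => b (skip k n)) := by
          funext n
          simp only [prismSeq, skip]
          split_ifs <;> first | omega | (congr 1; omega) | rfl
        rw [e]
        simp only [Nat.add_sub_cancel, pow_succ]
        ring
  have hB : ∑ x ∈ (Finset.range (q + 1) ×ˢ Finset.range (q + 2)).filter
        (fun x : ℕ × ℕ => ¬ (x.2 < x.1 ∨ x.1 + 1 < x.2)),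
        (-1 : ℝ) ^ x.1 * ((-1) ^ x.2 * w (fun n => prismSeq x.1 a b (skip x.2 n))) =
      w b - w a := by
    set Q : ℕ → (ℕ → Y) := fun i n => if n < i then a n else b n with hQ
    have step : ∑ x ∈ (Finset.range (q + 1) ×ˢ Finset.range (q + 2)).filter
        (fun x : ℕ × ℕ => ¬ (x.2 < x.1 ∨ x.1 + 1 < x.2)),
        (-1 : ℝ) ^ x.1 * ((-1) ^ x.2 * w (fun n => prismSeq x.1 a b (skip x.2 n))) =
        ∑ i ∈ Finset.range (q + 1), (w (Q i) - w (Q (i + 1))) := by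
      rw [Finset.sum_filter, Finset.sum_product]
      refine Finset.sum_congr rfl fun i hi => ?_
      have hi' := Finset.mem_range.1 hi
      dsimp only
      rw [← Finset.sum_filter]
      have : (Finset.range (q + 2)).filter (fun j => ¬ (j < i ∨ i + 1 < j)) = {i, i + 1} := by
        ext j; simp only [Finset.mem_filter, Finset.mem_range, Finset.mem_insert,
          Finset.mem_singleton]; omega
      rw [this, Finset.sum_pair (by omega)]
      have e1 : (fun n => prismSeq i a b (skip i n)) = Q i := by
        funext n; simp only [hQ]; simp only [prismSeq, skip]
        split_ifs <;> first | omega | (congr 1; omega) | rfl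
      have e2 : (fun n => prismSeq i a b (skip (i + 1) n)) = Q (i + 1) := by
        funext n; simp only [hQ]; simp only [prismSeq, skip]
        split_ifs <;> first | omega | (congr 1; omega) | rfl
      rw [e1, e2]
      have : (-1 : ℝ) ^ i * (-1) ^ i = 1 := by rw [← mul_pow]; simp
      rw [pow_succ]
      linear_combination (w (Q i) - w (Q (i + 1))) * this
    rw [step, Finset.sum_range_sub']
    have e1 : Q 0 = b := by funext n; simp [hQ]
    have e2 : w (Q (q + 1)) = w a := by
      apply hw
      intro n hn
      simp only [hQ]
      rw [if_pos (by omega)]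
    rw [e1, e2]
  rw [hA, hB] at h0
  unfold prism
  simp only [Finset.mul_sum]
  rw [← Finset.sum_product']
  linarith

end cochains

section kuhn

/-- The vertices of the Kuhn simplex at `x` in the direction order `g`. -/
def kuhn {D L : ℕ} (x : Fin D → ZMod L) (g : Equiv.Perm (Fin D)) (n : ℕ) : Fin D → ZMod L :=
  fun c => x c + if ((g.symm c : Fin D) : ℕ) < n then 1 else 0

/-- Evaluation on the fundamental class of the discrete torus. -/
noncomputable def kint {D L : ℕ} [NeZero L] (η : (ℕ → (Fin D → ZMod L)) → ℝ) : ℝ :=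
  ∑ x : Fin D → ZMod L, ∑ g : Equiv.Perm (Fin D),
    ((Equiv.Perm.sign g : ℤ) : ℝ) * η (kuhn x g)

lemma kint_inner {D L : ℕ} [NeZero L] (η : (ℕ → (Fin D → ZMod L)) → ℝ) (i : ℕ) (h0 : 0 < i)
    (hD : i < D) : kint (fun ξ => η (fun n => ξ (skip i n))) = 0 := by
  unfold kint
  refine Finset.sum_eq_zero fun x _ => ?_
  set τ : Equiv.Perm (Fin D) := Equiv.swap ⟨i - 1, by omega⟩ ⟨i, hD⟩ with hτ
  have key : ∀ g : Equiv.Perm (Fin D),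
      ((Equiv.Perm.sign (g * τ) : ℤ) : ℝ) * η (fun n => kuhn x (g * τ) (skip i n)) =
      - (((Equiv.Perm.sign g : ℤ) : ℝ) * η (fun n => kuhn x g (skip i n))) := by
    intro g
    have hs : Equiv.Perm.sign τ = -1 := Equiv.Perm.sign_swap (by simp [Fin.ext_iff]; omega)
    rw [Equiv.Perm.sign_mul, hs]
    have : (fun n => kuhn x (g * τ) (skip i n)) = fun n => kuhn x g (skip i n) := by
      funext n c
      unfold kuhn
      congr 1
      have : ((g * τ).symm c) = τ (g.symm c) := by
        simp [hτ, Equiv.Perm.mul_def]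
      rw [this]
      generalize g.symm c = y
      have hy : ((τ y : Fin D) : ℕ) < skip i n ↔ (y : ℕ) < skip i n := by
        rw [hτ, Equiv.swap_apply_def]
        split_ifs with h1 h2
        · subst h1; simp only [skip]; split_ifs <;> omega
        · subst h2; simp only [skip]; split_ifs <;> omega
        · rfl
      simp only [hy]
    rw [this]
    push_cast
    ring
  have := Equiv.sum_comp (Equiv.mulRight τ) (fun g : Equiv.Perm (Fin D) =>
    ((Equiv.Perm.sign g : ℤ) : ℝ) * η (fun n => kuhn x g (skip i n)))
  simp only [Equiv.coe_mulRight] at this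
  rw [Finset.sum_congr rfl (fun g _ => key g), Finset.sum_neg_distrib] at this
  linarith

lemma kint_outer {D L : ℕ} [NeZero L] (η : (ℕ → (Fin (D + 1) → ZMod L)) → ℝ) (hη : IsCoch D η) :
    kint (fun ξ => η (fun n => ξ (skip 0 n))) = (-1) ^ D * kint η := by
  unfold kint
  rw [Finset.sum_comm, Finset.sum_comm (γ := Fin (D + 1) → ZMod L), Finset.mul_sum]
  rw [← Equiv.sum_comp (Equiv.mulRight (finRotate (D + 1)))
    (fun g : Equiv.Perm (Fin (D + 1)) => (-1 : ℝ) ^ D * ∑ x : Fin (D + 1) → ZMod L,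
    ((Equiv.Perm.sign g : ℤ) : ℝ) * η (kuhn x g))]
  refine Finset.sum_congr rfl fun g _ => ?_
  simp only [Equiv.coe_mulRight]
  rw [← Equiv.sum_comp (Equiv.addRight (Pi.single (g 0) 1 : Fin (D + 1) → ZMod L)) (fun x =>
    ((Equiv.Perm.sign (g * finRotate (D + 1)) : ℤ) : ℝ) * η (kuhn x (g * finRotate (D + 1)))),
    Finset.mul_sum]
  refine Finset.sum_congr rfl fun x _ => ?_
  rw [Equiv.Perm.sign_mul, sign_finRotate]
  have : η (fun n => kuhn x g (skip 0 n)) =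
      η (kuhn ((Equiv.addRight (Pi.single (g 0) 1 : Fin (D + 1) → ZMod L)) x)
        (g * finRotate (D + 1))) := by
    apply hη
    intro n hn
    funext c
    obtain ⟨y, rfl⟩ := g.surjective c
    unfold kuhn skip
    have e : (g * finRotate (D + 1)).symm (g y) = (finRotate (D + 1)).symm y := by
      rw [Equiv.symm_apply_eq]; simp
    rw [e]
    simp only [Equiv.symm_apply_apply, Equiv.coe_addRight, Pi.add_apply]
    obtain ⟨z, rfl⟩ := (finRotate (D + 1)).surjective y
    simp only [Equiv.symm_apply_apply]
    rw [Pi.single_apply, add_assoc]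
    congr 1
    have hz := z.2
    by_cases hzl : (z : ℕ) = D
    · have : z = Fin.last D := by ext; simpa using hzl
      subst this
      rw [finRotate_last]
      simp; omega
    · have h2 : ((finRotate (D + 1) z : Fin (D + 1)) : ℕ) = z + 1 := by
        rw [coe_finRotate_of_ne_last]
        intro h; apply hzl; rw [h]; simp
      have h3 : ¬ (g (finRotate (D + 1) z) = g 0) := by
        intro h
        have := congrArg Fin.val (g.injective h)
        rw [h2] at this; simp at this
      rw [if_neg h3, h2]
      simp
  rw [this]
  push_cast
  have : (-1 : ℝ) ^ D * (-1) ^ D = 1 := by rw [← mul_pow]; simp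
  linear_combination (-((Equiv.Perm.sign g : ℤ) : ℝ) * η (kuhn ((Equiv.addRight (Pi.single (g 0) 1 : Fin (D + 1) → ZMod L)) x)
        (g * finRotate (D + 1)))) * this

lemma kint_add {D L : ℕ} [NeZero L] (η θ : (ℕ → (Fin D → ZMod L)) → ℝ) :
    kint (fun ξ => η ξ + θ ξ) = kint η + kint θ := by
  unfold kint
  simp only [mul_add, Finset.sum_add_distrib]

lemma kint_smul {D L : ℕ} [NeZero L] (c : ℝ) (η : (ℕ → (Fin D → ZMod L)) → ℝ) :
    kint (fun ξ => c * η ξ) = c * kint η := by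
  unfold kint
  simp only [Finset.mul_sum]
  refine Finset.sum_congr rfl fun _ _ => Finset.sum_congr rfl fun _ _ => by ring

lemma kint_sum {D L : ℕ} [NeZero L] {ι : Type*} (s : Finset ι)
    (η : ι → (ℕ → (Fin D → ZMod L)) → ℝ) :
    kint (fun ξ => ∑ i ∈ s, η i ξ) = ∑ i ∈ s, kint (η i) := by
  classical
  induction s using Finset.induction_on with
  | empty => simp [kint]
  | insert a s ha ih =>
    simp only [Finset.sum_insert ha]
    rw [kint_add, ih]

/-- Stokes. -/
lemma kint_cob {D L : ℕ} [NeZero L] (η : (ℕ → (Fin (D + 1) → ZMod L)) → ℝ) (hη : IsCoch D η) :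
    kint (cob D η) = 0 := by
  have : cob D η = fun ξ => ∑ i ∈ Finset.range (D + 2), (-1 : ℝ) ^ i * η (fun n => ξ (skip i n)) := by
    funext ξ; rfl
  rw [this, kint_sum]
  simp only [kint_smul (D := D + 1)]
  rw [Finset.sum_range_succ, Finset.sum_range_succ', Finset.sum_eq_zero]
  · have e : kint (fun ξ : ℕ → (Fin (D + 1) → ZMod L) => η (fun n => ξ (skip (D + 1) n))) = kint η := by
      congr 1; funext ξ
      apply hη
      intro n hn
      congr 1; unfold skip; rw [if_pos (by omega)]
    rw [e, kint_outer η hη, pow_succ]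
    ring
  · intro i hi
    rw [kint_inner η (i + 1) (by omega) (by have := Finset.mem_range.1 hi; omega), mul_zero]

end kuhn

end FN

namespace FN

section telescope

/-- Iterated cup product of `q`-cochains. -/
noncomputable def cupProd {X : Type*} (q N : ℕ) (α : ℕ → (ℕ → X) → ℝ) (ξ : ℕ → X) : ℝ :=
  ∏ k ∈ Finset.range N, α k (fun n => ξ (n + k * q))

lemma cupProd_succ {X : Type*} (q N : ℕ) (α : ℕ → (ℕ → X) → ℝ) :
    cupProd q (N + 1) α = fun ξ => cupProd q N α ξ * α N (fun n => ξ (n + N * q)) := by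
  funext ξ; unfold cupProd; rw [Finset.prod_range_succ]

lemma cupProd_isCoch {X : Type*} (q N : ℕ) (α : ℕ → (ℕ → X) → ℝ)
    (hα : ∀ k < N, IsCoch q (α k)) : IsCoch (N * q) (cupProd q N α) := by
  intro ξ ξ' h
  unfold cupProd
  refine Finset.prod_congr rfl fun k hk => ?_
  have hk' := Finset.mem_range.1 hk
  apply hα k hk'
  intro n hn
  apply h
  have : (k + 1) * q ≤ N * q := Nat.mul_le_mul_right _ hk'
  have e : (k + 1) * q = k * q + q := by ring
  omega

lemma cob_add {X : Type*} (p : ℕ) (a b : (ℕ → X) → ℝ) (ξ : ℕ → X) :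
    cob p (fun ξ => a ξ + b ξ) ξ = cob p a ξ + cob p b ξ := by
  unfold cob; simp only [mul_add, Finset.sum_add_distrib]

lemma cob_sub {X : Type*} (p : ℕ) (a b : (ℕ → X) → ℝ) (ξ : ℕ → X) :
    cob p (fun ξ => a ξ - b ξ) ξ = cob p a ξ - cob p b ξ := by
  unfold cob; simp only [mul_sub, Finset.sum_sub_distrib]

lemma cob_smul {X : Type*} (p : ℕ) (c : ℝ) (a : (ℕ → X) → ℝ) (ξ : ℕ → X) :
    cob p (fun ξ => c * a ξ) ξ = c * cob p a ξ := by
  unfold cob; rw [Finset.mul_sum]; refine Finset.sum_congr rfl fun _ _ => by ring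

lemma cupProd_closed {X : Type*} (S : Set (ℕ → X)) (hS : ∀ ξ ∈ S, ∀ p, (fun n => ξ (n + p)) ∈ S)
    (q N : ℕ) (α : ℕ → (ℕ → X) → ℝ) (hα : ∀ k < N, IsCoch q (α k))
    (hc : ∀ k < N, ∀ ξ ∈ S, cob q (α k) ξ = 0) (ξ : ℕ → X) (hξ : ξ ∈ S) :
    cob (N * q) (cupProd q N α) ξ = 0 := by
  induction N generalizing ξ with
  | zero => simp [cob, cupProd, Finset.sum_range_succ]
  | succ N ih =>
    rw [cupProd_succ, Nat.succ_mul, cob_cup _ _ _ _ (cupProd_isCoch q N α fun k hk => hα k (by omega)),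
      ih (fun k hk => hα k (by omega)) (fun k hk => hc k (by omega)) ξ hξ,
      hc N (by omega) _ (hS ξ hξ _)]
    simp

lemma telescope {X : Type*} (S : Set (ℕ → X)) (hS : ∀ ξ ∈ S, ∀ p, (fun n => ξ (n + p)) ∈ S)
    (q N : ℕ) (α β : ℕ → (ℕ → X) → ℝ) (hα : ∀ k < N + 1, IsCoch (q + 1) (α k))
    (hβ : ∀ k < N + 1, IsCoch q (β k))
    (hc : ∀ k < N + 1, ∀ ξ ∈ S, cob (q + 1) (α k) ξ = 0) :
    ∃ η : (ℕ → X) → ℝ, IsCoch (N * (q + 1) + q) η ∧ ∀ ξ ∈ S,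
      cupProd (q + 1) (N + 1) α ξ - cupProd (q + 1) (N + 1) (fun k ξ => α k ξ - cob q (β k) ξ) ξ
        = cob (N * (q + 1) + q) η ξ := by
  induction N with
  | zero =>
    refine ⟨β 0, by simpa using hβ 0 (by omega), fun ξ _ => ?_⟩
    simp [cupProd]
  | succ N ih =>
    obtain ⟨η, hη, he⟩ := ih (fun k hk => hα k (by omega)) (fun k hk => hβ k (by omega))
      (fun k hk => hc k (by omega))
    set α' : ℕ → (ℕ → X) → ℝ := fun k ξ => α k ξ - cob q (β k) ξ with hα'
    have hA' : ∀ k < N + 1 + 1, IsCoch (q + 1) (α' k) := by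
      intro k hk ξ ξ' h
      simp only [hα']
      rw [hα k hk ξ ξ' h, (hβ k hk).cob ξ ξ' h]
    have hc' : ∀ k < N + 1 + 1, ∀ ξ ∈ S, cob (q + 1) (α' k) ξ = 0 := by
      intro k hk ξ hξ
      simp only [hα']
      rw [cob_sub, hc k hk ξ hξ, cob_cob, sub_zero]
    have hP := cupProd_isCoch (q + 1) (N + 1) α' fun k hk => hA' k (by omega)
    have hPc := cupProd_closed S hS (q + 1) (N + 1) α' (fun k hk => hA' k (by omega))
      (fun k hk => hc' k (by omega))
    have hsum : N * (q + 1) + q + 1 = (N + 1) * (q + 1) := by ring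
    refine ⟨fun ξ => η ξ * α (N + 1) (fun n => ξ (n + (N * (q + 1) + q))) +
      (-1) ^ ((N + 1) * (q + 1)) * (cupProd (q + 1) (N + 1) α' ξ *
        β (N + 1) (fun n => ξ (n + (N + 1) * (q + 1)))), ?_, ?_⟩
    · intro ξ ξ' h
      dsimp only
      rw [hη ξ ξ' (fun n hn => h n (by nlinarith)), hP ξ ξ' (fun n hn => h n (by omega)),
        hα (N + 1) (by omega) (fun n => ξ (n + (N * (q + 1) + q)))
          (fun n => ξ' (n + (N * (q + 1) + q))) (fun n hn => h _ (by nlinarith)),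
        hβ (N + 1) (by omega) (fun n => ξ (n + (N + 1) * (q + 1)))
          (fun n => ξ' (n + (N + 1) * (q + 1))) (fun n hn => h _ (by nlinarith))]
    · intro ξ hξ
      rw [cob_add, cob_smul]
      have h1 := cob_cup (N * (q + 1) + q) (q + 1) η (α (N + 1)) hη ξ
      rw [hc (N + 1) (by omega) _ (hS ξ hξ _), ← he ξ hξ] at h1
      have h2 := cob_cup ((N + 1) * (q + 1)) q _ (β (N + 1)) hP ξ
      rw [hPc ξ hξ] at h2
      rw [show N * (q + 1) + q + (q + 1) = (N + 1) * (q + 1) + q by ring] at h1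
      rw [h1, h2]
      rw [cupProd_succ _ (N + 1), cupProd_succ _ (N + 1)]
      have hs : (-1 : ℝ) ^ ((N + 1) * (q + 1)) * (-1) ^ ((N + 1) * (q + 1)) = 1 := by
        rw [← mul_pow]; simp
      dsimp only
      rw [show α' (N + 1) (fun n => ξ (n + (N + 1) * (q + 1))) =
        α (N + 1) (fun n => ξ (n + (N + 1) * (q + 1))) -
          cob q (β (N + 1)) (fun n => ξ (n + (N + 1) * (q + 1))) from rfl, hsum]
      linear_combination (-(cupProd (q + 1) (N + 1) α' ξ *
        cob q (β (N + 1)) (fun n => ξ (n + (N + 1) * (q + 1))))) * hs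

lemma kint_cob_cast {D D' L : ℕ} [NeZero L] (h : D' + 1 = D) (η : (ℕ → (Fin D → ZMod L)) → ℝ)
    (hη : IsCoch D' η) : kint (cob D' η) = 0 := by
  subst h; exact kint_cob η hη

lemma kint_congr {D L : ℕ} [NeZero L] {η θ : (ℕ → (Fin D → ZMod L)) → ℝ}
    (h : ∀ x g, η (kuhn x g) = θ (kuhn x g)) : kint η = kint θ := by
  unfold kint; simp only [h]

theorem kint_telescope {L q N : ℕ} [NeZero L] (S : Set (ℕ → (Fin (N * q) → ZMod L)))
    (hS : ∀ ξ ∈ S, ∀ p, (fun n => ξ (n + p)) ∈ S) (hk : ∀ x g, kuhn x g ∈ S)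
    (hq : 1 ≤ q) (hN : 1 ≤ N)
    (α β : ℕ → (ℕ → (Fin (N * q) → ZMod L)) → ℝ) (hα : ∀ k < N, IsCoch q (α k))
    (hβ : ∀ k < N, IsCoch (q - 1) (β k))
    (hc : ∀ k < N, ∀ ξ ∈ S, cob q (α k) ξ = 0)
    (hz : ∀ ξ ∈ S, ∃ k < N, ∀ p, cob (q - 1) (β k) (fun n => ξ (n + p)) = α k (fun n => ξ (n + p))) :
    kint (cupProd q N α) = 0 := by
  obtain ⟨q, rfl⟩ : ∃ q', q = q' + 1 := ⟨q - 1, by omega⟩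
  obtain ⟨N, rfl⟩ : ∃ N', N = N' + 1 := ⟨N - 1, by omega⟩
  simp only [Nat.add_sub_cancel] at hβ hz
  obtain ⟨η, hη, he⟩ := telescope S hS q N α β hα hβ hc
  rw [← kint_cob_cast (by ring) η hη]
  refine kint_congr fun x g => ?_
  rw [← he _ (hk x g)]
  obtain ⟨k, hkN, h0⟩ := hz _ (hk x g)
  rw [eq_comm, sub_eq_self]
  unfold cupProd
  refine Finset.prod_eq_zero (Finset.mem_range.2 hkN) ?_
  dsimp only
  rw [h0, sub_self]

end telescope

end FN

namespace FN

section labels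

/-- The label of a vector: one plus the largest index of a nonnegative coordinate, or zero. -/
noncomputable def lab {d : ℕ} (v : Fin d → ℝ) : ℕ :=
  Finset.univ.sup (fun i : Fin d => if 0 ≤ v i then (i : ℕ) + 1 else 0)

lemma lab_le {d : ℕ} (v : Fin d → ℝ) : lab v ≤ d := by
  unfold lab
  refine Finset.sup_le fun i _ => ?_
  split_ifs
  · exact i.2
  · exact Nat.zero_le _

lemma lab_smul {d : ℕ} (v : Fin d → ℝ) (c : ℝ) (hc : 0 < c) : lab (fun i => c * v i) = lab v := by
  unfold lab
  congr 1; funext i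
  simp only [mul_nonneg_iff_of_pos_left hc]

lemma lab_eq_zero {d : ℕ} {v : Fin d → ℝ} (h : lab v = 0) (i : Fin d) : v i < 0 := by
  by_contra hi
  push Not at hi
  have := Finset.le_sup (f := fun i : Fin d => if 0 ≤ v i then (i : ℕ) + 1 else 0) (Finset.mem_univ i)
  unfold lab at h
  rw [h] at this
  simp [hi] at this

lemma nonneg_of_lab_eq {d : ℕ} {v : Fin d → ℝ} (i : Fin d) (h : lab v = i + 1) : 0 ≤ v i := by
  unfold lab at h
  obtain ⟨j, _, hj⟩ := Finset.exists_mem_eq_sup (Finset.univ : Finset (Fin d)) ⟨i, Finset.mem_univ _⟩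
    (fun i : Fin d => if 0 ≤ v i then (i : ℕ) + 1 else 0)
  rw [h] at hj
  split_ifs at hj with h0
  have : i = j := by ext; omega
  rwa [this]

/-- The fundamental label cochain. -/
noncomputable def omg (q : ℕ) (l : ℕ → ℕ) : ℝ :=
  Matrix.det (Matrix.of fun n j : Fin (q + 1) => if l n = (j : ℕ) then (1 : ℝ) else 0)

lemma omg_isCoch (q : ℕ) : IsCoch q (omg q) := by
  intro l l' h
  unfold omg
  congr 1
  ext n j
  simp only [Matrix.of_apply]
  rw [h n (by have := n.2; omega)]

lemma omg_eq_zero_of_eq (q : ℕ) (l : ℕ → ℕ) {a b : ℕ} (ha : a ≤ q) (hb : b ≤ q) (hab : a ≠ b)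
    (h : l a = l b) : omg q l = 0 := by
  unfold omg
  refine Matrix.det_zero_of_row_eq (i := ⟨a, by omega⟩) (j := ⟨b, by omega⟩) ?_ ?_
  · intro h'; exact hab (by simpa using h')
  · funext j; simp [h]

lemma omg_ne_zero_attains (q : ℕ) (l : ℕ → ℕ) (h : omg q l ≠ 0) (j : ℕ) (hj : j ≤ q) :
    ∃ n ≤ q, l n = j := by
  by_contra hne
  push Not at hne
  apply h
  unfold omg
  refine Matrix.det_eq_zero_of_column_eq_zero ⟨j, by omega⟩ fun n => ?_
  simp [hne n (by have := n.2; omega)]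

lemma omg_ne_zero_le (q : ℕ) (l : ℕ → ℕ) (h : omg q l ≠ 0) (n : ℕ) (hn : n ≤ q) :
    l n ≤ q := by
  by_contra hne
  push Not at hne
  apply h
  unfold omg
  refine Matrix.det_eq_zero_of_row_eq_zero ⟨n, by omega⟩ fun j => ?_
  simp only [Matrix.of_apply]
  rw [if_neg]
  have := j.2
  omega

lemma omg_id (q : ℕ) (l : ℕ → ℕ) (h : ∀ n ≤ q, l n = n) : omg q l = 1 := by
  unfold omg
  rw [← Matrix.det_one (n := Fin (q + 1)) (R := ℝ)]
  congr 1
  ext n j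
  simp only [Matrix.of_apply]
  rw [h n (by have := n.2; omega), Matrix.one_apply]
  simp [Fin.ext_iff]

lemma omg_closed (q : ℕ) (l : ℕ → ℕ) (hl : ∀ n ≤ q + 1, l n ≤ q + 1) (j0 : ℕ) (hj0 : j0 ≤ q + 1)
    (hm : ∀ n ≤ q + 1, l n ≠ j0) : cob q (omg q) l = 0 := by
  set A : Matrix (Fin (q + 2)) (Fin (q + 2)) ℝ :=
    Matrix.of fun n => Fin.cons 1 (fun j : Fin (q + 1) => if l n = (j : ℕ) then (1 : ℝ) else 0) with hA
  have hdet : A.det = cob q (omg q) l := by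
    rw [Matrix.det_succ_column_zero]
    unfold cob
    rw [← Fin.sum_univ_eq_sum_range (fun i => (-1 : ℝ) ^ i * omg q (fun n => l (skip i n)))]
    refine Finset.sum_congr rfl fun i _ => ?_
    have : A i 0 = 1 := by simp [hA]
    rw [this, mul_one]
    congr 1
    unfold omg
    congr 1
    ext n j
    simp only [hA, Matrix.submatrix_apply, Matrix.of_apply, Fin.cons_succ]
    have : ((i.succAbove n : Fin (q + 2)) : ℕ) = skip i n := by
      unfold Fin.succAbove skip
      simp only [Fin.lt_def]
      split_ifs with h1 h2 h2 <;> simp_all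
    rw [this]
  rw [← hdet]
  by_cases hj : j0 = q + 1
  · rw [← Matrix.exists_mulVec_eq_zero_iff]
    refine ⟨Fin.cons 1 (fun _ => -1), ?_, ?_⟩
    · intro h
      have := congrFun h 0
      simp at this
    · funext n
      simp only [Matrix.mulVec, dotProduct, Fin.sum_univ_succ (n := q + 1), hA, Matrix.of_apply,
        Fin.cons_zero, Fin.cons_succ, Pi.zero_apply]
      have h1 := hl n (by have := n.2; omega)
      have h2 := hm n (by have := n.2; omega)
      rw [Finset.sum_eq_single (⟨l n, by omega⟩ : Fin (q + 1))]
      · simp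
      · intro b _ hb
        rw [if_neg]
        · simp
        · intro h; apply hb; ext; simp [h]
      · simp
  · refine Matrix.det_eq_zero_of_column_eq_zero (Fin.succ ⟨j0, by omega⟩) fun n => ?_
    simp only [hA, Matrix.of_apply, Fin.cons_succ]
    rw [if_neg (hm n (by have := n.2; omega))]

lemma omg_closed_of_small (q : ℕ) (v : ℕ → (Fin (q + 1) → ℝ)) (η : ℝ)
    (hv : ∀ n m i, |v n i - v m i| ≤ η) (h0 : ∃ n i, η < |v n i|) :
    cob q (omg q) (fun n => lab (v n)) = 0 := by
  by_contra hne
  have hall : ∀ j0 ≤ q + 1, ∃ n, lab (v n) = j0 := by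
    intro j0 hj0
    by_contra hno
    push Not at hno
    exact hne (omg_closed q _ (fun n _ => lab_le _) j0 hj0 (fun n _ => hno n))
  obtain ⟨n, i, hi⟩ := h0
  obtain ⟨a, ha⟩ := hall 0 (by omega)
  obtain ⟨b, hb⟩ := hall (i + 1) (by have := i.2; omega)
  have h1 := lab_eq_zero ha i
  have h2 := nonneg_of_lab_eq i hb
  have h3 := abs_le.1 (hv n a i)
  have h4 := abs_le.1 (hv n b i)
  have : |v n i| ≤ η := abs_le.2 ⟨by linarith, by linarith⟩
  linarith

end labels

end FN

namespace FN

section degree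

/-- The `k`-th block of coordinates. -/
def blk {N q : ℕ} {Y : Type*} (k : Fin N) (x : Fin (N * q) → Y) : Fin q → Y :=
  fun a => x (finProdFinEquiv (k, a))

/-- Combinatorial properties of the labelling of the discrete torus. -/
structure GoodLab (q L : ℕ) (Λ : (Fin q → ZMod L) → ℕ) (pos R : ZMod L → Prop) : Prop where
  pos_iff : ∀ u, Λ u ≤ q → ∀ n : ℕ, Λ u ≤ n ↔ ∀ i : Fin q, pos (u i) → (i : ℕ) + 1 ≤ n
  pos_of : ∀ u (i : Fin q), Λ u = i + 1 → pos (u i)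
  re : ∀ u, Λ u ≤ q → ∀ i, R (u i)
  cross : ∀ a, R a → R (a + 1) → ¬ (pos a ↔ pos (a + 1)) → a = -1
  pos_zero : pos 0
  neg_one : ¬ pos (-1)
  small : ∀ u : Fin q → ZMod L, (∀ i, u i = -1 ∨ u i = 0) → Λ u ≤ q

/-- The product cochain associated with a selection of blocks. -/
noncomputable def selCup {N L : ℕ} (q : ℕ) (Λ : (Fin q → ZMod L) → ℕ) (f : ℕ → Fin N)
    (ξ : ℕ → (Fin (N * q) → ZMod L)) : ℝ :=
  cupProd q N (fun k ξ => omg q (fun n => Λ (blk (f k) (ξ n)))) ξ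

lemma sel_key {N L q : ℕ} (Λ : (Fin q → ZMod L) → ℕ) (j k : Fin N)
    (x : Fin (N * q) → ZMod L) (g : Equiv.Perm (Fin (N * q)))
    (h : omg q (fun n => Λ (blk j (kuhn x g (n + k * q)))) ≠ 0) (a : Fin q) :
    ∃ a' : Fin q, g (finProdFinEquiv (k, a)) = finProdFinEquiv (j, a') := by
  by_contra hno
  push Not at hno
  apply h
  refine omg_eq_zero_of_eq q _ (a := a) (b := a + 1) (by omega) (by omega) (by omega) ?_
  congr 1
  funext b
  unfold blk kuhn
  congr 1
  have h1 : (g.symm (finProdFinEquiv (j, b))) ≠ finProdFinEquiv (k, a) := by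
    intro h2
    exact hno b (by rw [← h2]; simp)
  have h2 : ((g.symm (finProdFinEquiv (j, b)) : Fin (N * q)) : ℕ) ≠ a + q * k := by
    intro h3; apply h1; ext; rw [h3]; simp
  have e : (k : ℕ) * q = q * k := mul_comm _ _
  rw [e]
  have : ((g.symm (finProdFinEquiv (j, b)) : Fin (N * q)) : ℕ) < a + q * k ↔
    ((g.symm (finProdFinEquiv (j, b)) : Fin (N * q)) : ℕ) < a + 1 + q * k := by omega
  simp only [this]

lemma selCup_ne_zero {N L q : ℕ} {Λ : (Fin q → ZMod L) → ℕ} {f : ℕ → Fin N}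
    {ξ : ℕ → (Fin (N * q) → ZMod L)} (h : selCup q Λ f ξ ≠ 0) (k : Fin N) :
    omg q (fun n => Λ (blk (f k) (ξ (n + k * q)))) ≠ 0 := by
  unfold selCup cupProd at h
  rw [Finset.prod_ne_zero_iff] at h
  exact h k (Finset.mem_range.2 k.2)

lemma kint_selCup_noninj {N L q : ℕ} [NeZero L] (hq : 1 ≤ q) (Λ : (Fin q → ZMod L) → ℕ)
    (f : ℕ → Fin N) (k k' : Fin N) (hk : k ≠ k') (hf : f k = f k') :
    kint (selCup q Λ f) = 0 := by
  unfold kint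
  refine Finset.sum_eq_zero fun x _ => Finset.sum_eq_zero fun g _ => ?_
  rw [mul_eq_zero]; right
  by_contra hne
  choose u hu using sel_key Λ (f k) k x g (selCup_ne_zero hne k)
  choose u' hu' using sel_key Λ (f k') k' x g (selCup_ne_zero hne k')
  have hinj : Function.Injective (Sum.elim u u' : Fin q ⊕ Fin q → Fin q) := by
    rw [Sum.elim_injective]
    refine ⟨?_, ?_, ?_⟩
    · intro a b hab
      have := g.injective ((hu a).trans (by rw [hab, ← hu b]))
      simpa using this
    · intro a b hab
      have := g.injective ((hu' a).trans (by rw [hab, ← hu' b]))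
      simpa using this
    · intro a b hab
      have := g.injective ((hu a).trans (by rw [hab, hf, ← hu' b]))
      simp only [EmbeddingLike.apply_eq_iff_eq, Prod.mk.injEq] at this
      exact hk this.1
  have := Fintype.card_le_of_injective _ hinj
  simp at this
  omega

lemma kint_selCup_perm {N L q : ℕ} [NeZero L] (hq : Even q) (Λ : (Fin q → ZMod L) → ℕ)
    (f : ℕ → Fin N) (F : Equiv.Perm (Fin N)) :
    kint (selCup q Λ (fun k => F (f k))) = kint (selCup q Λ f) := by
  set P : Equiv.Perm (Fin (N * q)) :=
    finProdFinEquiv.permCongr (Equiv.prodCongrLeft (fun _ : Fin q => F)) with hP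
  have hPa : ∀ k a, P (finProdFinEquiv (k, a)) = finProdFinEquiv (F k, a) := by
    intro k a
    simp [hP, Equiv.permCongr_apply]
  have hsign : Equiv.Perm.sign P = 1 := by
    rw [hP, Equiv.Perm.sign_permCongr, Equiv.Perm.sign_prodCongrLeft]
    simp only [Finset.prod_const, Finset.card_univ, Fintype.card_fin]
    obtain ⟨s, rfl⟩ := hq
    rw [pow_add, ← mul_pow]
    rcases Int.units_eq_one_or (Equiv.Perm.sign F) with h | h <;> simp [h]
  unfold kint
  rw [← Equiv.sum_comp (Equiv.arrowCongr P (Equiv.refl (ZMod L)))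
    (fun x => ∑ g : Equiv.Perm (Fin (N * q)),
    ((Equiv.Perm.sign g : ℤ) : ℝ) * selCup q Λ (fun k => F (f k)) (kuhn x g))]
  refine Finset.sum_congr rfl fun x _ => ?_
  rw [← Equiv.sum_comp (Equiv.mulLeft P) (fun g : Equiv.Perm (Fin (N * q)) =>
    ((Equiv.Perm.sign g : ℤ) : ℝ) * selCup q Λ (fun k => F (f k)) (kuhn _ g))]
  refine Finset.sum_congr rfl fun g _ => ?_
  simp only [Equiv.coe_mulLeft, Equiv.Perm.sign_mul, hsign, one_mul]
  congr 1
  unfold selCup cupProd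
  refine Finset.prod_congr rfl fun k _ => ?_
  dsimp only
  congr 1
  funext n
  congr 1
  funext a
  unfold blk
  rw [← hPa]
  unfold kuhn
  have e : (P * g).symm (P (finProdFinEquiv (f k, a))) = g.symm (finProdFinEquiv (f k, a)) := by
    rw [Equiv.symm_apply_eq]; simp
  rw [e]
  simp [Equiv.arrowCongr]

lemma strict_seq (q : ℕ) (l : ℕ → ℕ) (hl : ∀ n < q, l n < l (n + 1)) (hq : l q ≤ q) (n : ℕ)
    (hn : n ≤ q) : l n = n := by
  have h1 : ∀ n ≤ q, n ≤ l n := by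
    intro n
    induction n with
    | zero => intro _; exact Nat.zero_le _
    | succ n ih => intro h; have := ih (by omega); have := hl n (by omega); omega
  have h2 : ∀ j ≤ q, l (q - j) ≤ q - j := by
    intro j
    induction j with
    | zero => intro _; simpa using hq
    | succ j ih =>
      intro h
      have h3 := ih (by omega)
      have h4 := hl (q - (j + 1)) (by omega)
      rw [show q - (j + 1) + 1 = q - j by omega] at h4
      omega
  have h3 := h2 (q - n) (by omega)
  rw [show q - (q - n) = n by omega] at h3
  exact le_antisymm h3 (h1 n hn)

lemma kint_selCup_id {N L q : ℕ} [NeZero L] {Λ : (Fin q → ZMod L) → ℕ}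
    {pos R : ZMod L → Prop} (hΛ : GoodLab q L Λ pos R) (f : ℕ → Fin N) (hf : ∀ k : Fin N, f k = k) :
    kint (selCup q Λ f) = 1 := by
  -- value at the distinguished simplex
  have hval : selCup q Λ f (kuhn (fun _ => -1) 1) = 1 := by
    unfold selCup cupProd
    refine Finset.prod_eq_one fun k hk => ?_
    have hk' := Finset.mem_range.1 hk
    have hfk : f k = ⟨k, hk'⟩ := hf ⟨k, hk'⟩
    refine omg_id q _ fun n hn => ?_
    rw [hfk]
    set u : Fin q → ZMod L := blk ⟨k, hk'⟩ (kuhn (fun _ => -1) 1 (n + k * q)) with hu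
    have hub : ∀ b : Fin q, u b = if (b : ℕ) < n then 0 else -1 := by
      intro b
      simp only [hu, blk, kuhn]
      have : ((Equiv.symm (1 : Equiv.Perm (Fin (N * q))) (finProdFinEquiv (⟨k, hk'⟩, b)) : Fin (N * q)) : ℕ)
          = b + q * k := rfl
      rw [this, mul_comm k q]
      by_cases hb : (b : ℕ) < n
      · rw [if_pos hb, if_pos (by omega)]; simp
      · rw [if_neg hb, if_neg (by omega)]; simp
    have hle : Λ u ≤ q := hΛ.small u fun i => by
      rw [hub]; by_cases hc : (i : ℕ) < n <;> simp [hc]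
    apply le_antisymm
    · rw [hΛ.pos_iff u hle]
      intro i hi
      rw [hub] at hi
      split_ifs at hi with h
      · omega
      · exact absurd hi hΛ.neg_one
    · by_contra hlt
      push Not at hlt
      have h1 := (hΛ.pos_iff u hle (n - 1)).1 (by omega) ⟨n - 1, by omega⟩
        (by rw [hub, if_pos (by simp; omega)]; exact hΛ.pos_zero)
      simp only [] at h1
      omega
  have huniq : ∀ x g, selCup q Λ f (kuhn x g) ≠ 0 → x = (fun _ => -1) ∧ g = 1 := by
    intro x g hne
    have main : ∀ k : Fin N, (∀ b, x (finProdFinEquiv (k, b)) = -1) ∧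
        ∀ a, g (finProdFinEquiv (k, a)) = finProdFinEquiv (k, a) := by
      intro k
      have hom := selCup_ne_zero hne k
      rw [hf k] at hom
      choose h hh using sel_key Λ k k x g hom
      have hinj : Function.Injective h := by
        intro a b hab
        have := g.injective ((hh a).trans (by rw [hab, ← hh b]))
        simpa using this
      have hsurj : Function.Surjective h := Finite.surjective_of_injective hinj
      set u : ℕ → Fin q → ZMod L := fun n => blk k (kuhn x g (n + k * q)) with hu
      set l : ℕ → ℕ := fun n => Λ (u n) with hl
      have hom' : omg q l ≠ 0 := hom
      have hua : ∀ n a, u n (h a) = x (finProdFinEquiv (k, h a)) + if (a : ℕ) < n then 1 else 0 := by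
        intro n a
        simp only [hu, blk, kuhn]
        rw [← hh a]
        have : ((g.symm (g (finProdFinEquiv (k, a))) : Fin (N * q)) : ℕ) = a + q * k := by
          rw [Equiv.symm_apply_apply]; rfl
        rw [this, mul_comm (k : ℕ) q]
        congr 1
        simp only [add_lt_add_iff_right]
      have hlq : ∀ n ≤ q, l n ≤ q := omg_ne_zero_le q l hom'
      have hx : ∀ b, x (finProdFinEquiv (k, b)) = -1 := by
        intro b
        obtain ⟨a, rfl⟩ := hsurj b
        obtain ⟨n1, hn1, e1⟩ := omg_ne_zero_attains q l hom' 0 (by omega)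
        obtain ⟨n2, hn2, e2⟩ := omg_ne_zero_attains q l hom' (h a + 1) (by have := (h a).2; omega)
        have p2 : pos (u n2 (h a)) := hΛ.pos_of _ _ e2
        have p1 : ¬ pos (u n1 (h a)) := by
          intro hp
          have := (hΛ.pos_iff (u n1) (hlq n1 hn1) 0).1 (le_of_eq e1) (h a) hp
          omega
        apply hΛ.cross
        · have := hΛ.re (u 0) (hlq 0 (by omega)) (h a)
          rw [hua] at this
          simpa using this
        · have := hΛ.re (u q) (hlq q le_rfl) (h a)
          rw [hua, if_pos a.2] at this
          exact this
        · intro hiff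
          rw [hua] at p1 p2
          split_ifs at p1 p2 <;> (try rw [add_zero] at p1) <;> (try rw [add_zero] at p2) <;> tauto
      refine ⟨hx, ?_⟩
      have hua' : ∀ n a, u n (h a) = if (a : ℕ) < n then 0 else -1 := by
        intro n a
        rw [hua, hx]; by_cases hc : (a : ℕ) < n <;> simp [hc]
      have hpos : ∀ n a, pos (u n (h a)) ↔ (a : ℕ) < n := by
        intro n a
        rw [hua']
        split_ifs with hc
        · simp [hc, hΛ.pos_zero]
        · simp [hc, hΛ.neg_one]
      have hlle : ∀ n ≤ q, ∀ m, l n ≤ m ↔ ∀ a : Fin q, (a : ℕ) < n → (h a : ℕ) + 1 ≤ m := by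
        intro n hn m
        rw [hΛ.pos_iff (u n) (hlq n hn) m]
        constructor
        · intro H a ha
          exact H (h a) ((hpos n a).2 ha)
        · intro H i hi
          obtain ⟨a, rfl⟩ := hsurj i
          exact H a ((hpos n a).1 hi)
      have hstrict : ∀ n < q, l n < l (n + 1) := by
        intro n hn
        refine lt_of_le_of_ne ?_ ?_
        · rw [hlle n (by omega)]
          intro a ha
          exact (hlle (n + 1) (by omega) _).1 le_rfl a (by omega)
        · intro heq
          exact hom' (omg_eq_zero_of_eq q l (a := n) (b := n + 1) (by omega) (by omega) (by omega) heq)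
      have hln := strict_seq q l hstrict (hlq q le_rfl)
      have hha : ∀ a : Fin q, h a = a := by
        intro a
        have h1 := hln (a + 1) (by omega)
        have h0 := hln a (by omega)
        have hle := (hlle (a + 1) (by omega) _).1 h1.le a (by omega)
        by_contra hne'
        have hlt : (h a : ℕ) + 1 ≤ a := by
          have : (h a : ℕ) ≠ a := fun e => hne' (Fin.ext e)
          omega
        have : l (a + 1) ≤ a := by
          rw [hlle (a + 1) (by omega)]
          intro b hb
          by_cases hba : b = a
          · subst hba; exact hlt
          · have : (b : ℕ) ≠ a := fun e => hba (Fin.ext e)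
            have h3 := (hlle a (by omega) _).1 h0.le b (by omega)
            exact h3
        omega
      intro a
      rw [hh, hha]
    refine ⟨?_, ?_⟩
    · funext c
      obtain ⟨⟨k, b⟩, rfl⟩ := finProdFinEquiv.surjective c
      exact (main k).1 b
    · ext c
      obtain ⟨⟨k, b⟩, rfl⟩ := finProdFinEquiv.surjective c
      rw [(main k).2 b]; simp
  unfold kint
  rw [Finset.sum_eq_single (fun _ => (-1 : ZMod L))]
  · rw [Finset.sum_eq_single (1 : Equiv.Perm (Fin (N * q)))]
    · rw [hval]; simp
    · intro g _ hg
      rw [mul_eq_zero]; right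
      by_contra hne
      exact hg (huniq _ g hne).2
    · simp
  · intro x _ hx
    refine Finset.sum_eq_zero fun g _ => ?_
    rw [mul_eq_zero]; right
    by_contra hne
    exact hx (huniq x g hne).1
  · simp

end degree

end FN

namespace FN

section degree2

lemma kint_odd {N L q : ℕ} [NeZero L] (hq : Even q) (hq1 : 1 ≤ q) (hN : 2 ≤ N)
    {Λ : (Fin q → ZMod L) → ℕ}
    {pos R : ZMod L → Prop} (hΛ : GoodLab q L Λ pos R) (a : ℕ → Fin N)
    (ha : ∀ k : ℕ, (a k : ℕ) = if k < N - 1 then k else 0) :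
    kint (cupProd q N (fun k (ξ : ℕ → (Fin (N * q) → ZMod L)) =>
      omg q (fun n => Λ (blk (a k) (ξ n))) -
      omg q (fun n => Λ (blk (⟨N - 1, by omega⟩ : Fin N) (ξ n))))) = -2 := by
  classical
  set last : Fin N := ⟨N - 1, by omega⟩ with hlast
  set fs : Finset ℕ → ℕ → Fin N := fun t k => if k ∈ t then a k else last with hfs
  have hexp : cupProd q N (fun k (ξ : ℕ → (Fin (N * q) → ZMod L)) =>
      omg q (fun n => Λ (blk (a k) (ξ n))) - omg q (fun n => Λ (blk last (ξ n)))) =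
      fun ξ => ∑ t ∈ (Finset.range N).powerset, (-1 : ℝ) ^ ((Finset.range N) \ t).card *
        selCup q Λ (fs t) ξ := by
    funext ξ
    unfold selCup cupProd
    simp only [sub_eq_add_neg]
    rw [Finset.prod_add]
    refine Finset.sum_congr rfl fun t ht => ?_
    have ht' := Finset.mem_powerset.1 ht
    rw [← Finset.prod_sdiff ht', Finset.prod_neg]
    have e1 : ∀ k ∈ Finset.range N \ t,
        omg q (fun n => Λ (blk (fs t k) (ξ (n + k * q)))) =
        omg q (fun n => Λ (blk last (ξ (n + k * q)))) := by
      intro k hk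
      simp only [hfs]
      rw [if_neg (Finset.mem_sdiff.1 hk).2]
    have e2 : ∀ k ∈ t,
        omg q (fun n => Λ (blk (fs t k) (ξ (n + k * q)))) =
        omg q (fun n => Λ (blk (a k) (ξ (n + k * q)))) := by
      intro k hk
      simp only [hfs]
      rw [if_pos hk]
    rw [Finset.prod_congr rfl e1, Finset.prod_congr rfl e2]
    ring
  rw [hexp, kint_sum]
  simp only [kint_smul]
  set t1 := Finset.range N \ {N - 1} with ht1
  set t2 := Finset.range N \ {0} with ht2
  have hne : t1 ≠ t2 := by
    intro h
    have : 0 ∈ t1 := by simp [ht1]; omega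
    rw [h] at this
    simp [ht2] at this
  have hcard : ∀ j < N, (-1 : ℝ) ^ (Finset.range N \ (Finset.range N \ {j})).card = -1 := by
    intro j hj
    rw [Finset.sdiff_sdiff_eq_self (by simpa using hj)]
    simp
  have hsub : ({t1, t2} : Finset (Finset ℕ)) ⊆ (Finset.range N).powerset := by
    intro t ht
    simp only [Finset.mem_insert, Finset.mem_singleton] at ht
    rw [Finset.mem_powerset]
    rcases ht with rfl | rfl
    · exact Finset.sdiff_subset
    · exact Finset.sdiff_subset
  rw [← Finset.sum_subset hsub, Finset.sum_pair hne, hcard _ (by omega), hcard _ (by omega)]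
  · have k1 : kint (selCup q Λ (fs t1)) = 1 := by
      apply kint_selCup_id hΛ
      intro k
      have hk := k.2
      simp only [hfs, ht1]
      ext
      by_cases h : (k : ℕ) = N - 1
      · rw [if_neg (by simp [h])]; simp [hlast, h]
      · rw [if_pos (by simp [h]), ha, if_pos (by omega)]
    have k2 : kint (selCup q Λ (fs t2)) = 1 := by
      rw [← k1, ← kint_selCup_perm hq Λ (fs t1) (Equiv.swap ⟨0, by omega⟩ last)]
      refine kint_congr fun x g => ?_
      unfold selCup cupProd
      refine Finset.prod_congr rfl fun k hk => ?_
      have hkN := Finset.mem_range.1 hk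
      have : fs t2 k = (Equiv.swap ⟨0, by omega⟩ last) (fs t1 k) := by
        simp only [hfs, ht1, ht2]
        by_cases h : k = N - 1
        · rw [if_neg (by simp [h] : ¬ (k ∈ Finset.range N \ {N - 1})), if_pos (by simp [hkN]; omega),
            Equiv.swap_apply_right]
          ext
          rw [ha, if_neg (by omega)]
        · rw [if_pos (by simp [h, hkN] : (k ∈ Finset.range N \ {N - 1}))]
          by_cases h0 : k = 0
          · rw [if_neg (by simp [h0])]
            have : a k = ⟨0, by omega⟩ := by
              ext; rw [ha, if_pos (by omega), h0]
            rw [this, Equiv.swap_apply_left]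
          · have hak : (a k : ℕ) = k := by rw [ha, if_pos (by omega)]
            rw [if_pos (by simp [h0, hkN]), Equiv.swap_apply_of_ne_of_ne]
            · intro h'; rw [h'] at hak; simp at hak; omega
            · intro h'; rw [h'] at hak; simp [hlast] at hak; omega
      dsimp only
      rw [this]
    rw [k1, k2]; norm_num
  · intro t ht hnt
    have ht' := Finset.mem_powerset.1 ht
    simp only [Finset.mem_insert, Finset.mem_singleton, not_or] at hnt
    rw [mul_eq_zero]; right
    have two : ∀ k k' : ℕ, k < N → k' < N → k ≠ k' → k ∉ t → k' ∉ t →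
        kint (selCup q Λ (fs t)) = 0 := by
      intro k k' hk hk' hkk h1 h2
      refine kint_selCup_noninj hq1 Λ (fs t) ⟨k, hk⟩ ⟨k', hk'⟩ (by simpa using hkk) ?_
      simp only [hfs]
      rw [if_neg h1, if_neg h2]
    have ex : ∀ j < N, j ∉ t → t ≠ Finset.range N \ {j} → kint (selCup q Λ (fs t)) = 0 := by
      intro j hj hjt hne'
      by_contra hcon
      apply hne'
      ext k
      simp only [Finset.mem_sdiff, Finset.mem_range, Finset.mem_singleton]
      constructor
      · intro hk
        exact ⟨Finset.mem_range.1 (ht' hk), fun e => hjt (e ▸ hk)⟩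
      · rintro ⟨hk, hkj⟩
        by_contra hkt
        exact hcon (two k j hk hj hkj hkt hjt)
    by_cases h0 : 0 ∈ t
    · by_cases h1 : N - 1 ∈ t
      · refine kint_selCup_noninj hq1 Λ (fs t) ⟨0, by omega⟩ ⟨N - 1, by omega⟩ (by simp; omega) ?_
        simp only [hfs]
        rw [if_pos h0, if_pos h1]
        ext
        rw [ha, ha, if_pos (by omega), if_neg (by omega)]
      · exact ex _ (by omega) h1 hnt.1
    · exact ex _ (by omega) h0 hnt.2

/-- The map to nonzero vectors. -/
noncomputable def cvec {q : ℕ} (z : Fin q → Circle) : Fin (q + 1) → ℝ :=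
  Fin.snoc (fun i => ((z i : ℂ)).im) ((q : ℝ) - 1 - ∑ i, ((z i : ℂ)).re)

lemma lab_snoc {q : ℕ} (u : Fin q → ℝ) (c : ℝ) (h : lab (Fin.snoc u c : Fin (q + 1) → ℝ) ≤ q) :
    c < 0 ∧ lab (Fin.snoc u c : Fin (q + 1) → ℝ) = lab u := by
  have hc : c < 0 := by
    by_contra hc
    push Not at hc
    have := Finset.le_sup (f := fun i : Fin (q + 1) =>
      if 0 ≤ (Fin.snoc u c : Fin (q + 1) → ℝ) i then (i : ℕ) + 1 else 0) (Finset.mem_univ (Fin.last q))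
    unfold lab at h
    simp only [Fin.snoc_last, if_pos hc, Fin.val_last] at this
    omega
  refine ⟨hc, ?_⟩
  unfold lab
  rw [Fin.univ_castSuccEmb, Finset.sup_cons, Finset.sup_map]
  simp only [Fin.snoc_last, if_neg (not_le.2 hc)]
  rw [show ((0 : ℕ) ⊔ Finset.univ.sup ((fun i : Fin (q + 1) =>
    if 0 ≤ (Fin.snoc u c : Fin (q + 1) → ℝ) i then (i : ℕ) + 1 else 0) ∘ Fin.castSuccEmb)) =
    Finset.univ.sup ((fun i : Fin (q + 1) =>
    if 0 ≤ (Fin.snoc u c : Fin (q + 1) → ℝ) i then (i : ℕ) + 1 else 0) ∘ Fin.castSuccEmb) from bot_sup_eq _]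
  congr 1
  funext i
  simp

/-- The labelling of the discrete torus. -/
noncomputable def Lam (q L : ℕ) [NeZero L] (u : Fin q → ZMod L) : ℕ :=
  lab (cvec (fun i => ZMod.toCircle (u i)))

lemma cvec_ne_zero {q : ℕ} (z : Fin q → Circle) : cvec z ≠ 0 := by
  intro h
  have him : ∀ i, ((z i : ℂ)).im = 0 := by
    intro i
    have := congrFun h i.castSucc
    simpa [cvec] using this
  have hre : ∑ i, ((z i : ℂ)).re = q - 1 := by
    have := congrFun h (Fin.last q)
    simp [cvec] at this
    linarith
  have hpm : ∀ i, ∃ b : ℤ, ((z i : ℂ)).re = 1 - 2 * b := by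
    intro i
    have h1 : Complex.normSq (z i : ℂ) = 1 := Circle.normSq_coe _
    rw [Complex.normSq_apply, him i] at h1
    have h2 : (((z i : ℂ)).re - 1) * (((z i : ℂ)).re + 1) = 0 := by linarith
    rcases mul_eq_zero.1 h2 with h3 | h3
    · exact ⟨0, by push_cast; linarith⟩
    · exact ⟨1, by push_cast; linarith⟩
  choose b hb using hpm
  simp only [hb, Finset.sum_sub_distrib, ← Finset.mul_sum] at hre
  simp at hre
  have : (2 * ∑ i, b i : ℤ) = 1 := by
    have : (2 * ∑ i, (b i : ℝ)) = 1 := by linarith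
    exact_mod_cast this
  omega

lemma toCircle_re (L : ℕ) [NeZero L] (j : ℤ) :
    ((ZMod.toCircle ((j : ℤ) : ZMod L) : Circle) : ℂ).re = Real.cos (2 * Real.pi * j / L) := by
  rw [ZMod.toCircle_intCast]
  rw [show (2 * Real.pi * Complex.I * j / L : ℂ) = ((2 * Real.pi * j / L : ℝ) : ℂ) * Complex.I by
    push_cast; ring]
  rw [Complex.exp_ofReal_mul_I_re]

lemma toCircle_im (L : ℕ) [NeZero L] (j : ℤ) :
    ((ZMod.toCircle ((j : ℤ) : ZMod L) : Circle) : ℂ).im = Real.sin (2 * Real.pi * j / L) := by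
  rw [ZMod.toCircle_intCast]
  rw [show (2 * Real.pi * Complex.I * j / L : ℂ) = ((2 * Real.pi * j / L : ℝ) : ℂ) * Complex.I by
    push_cast; ring]
  rw [Complex.exp_ofReal_mul_I_im]

lemma goodLab (q L : ℕ) [NeZero L] (hL : 5 * q + 5 ≤ L) :
    GoodLab q L (Lam q L) (fun a => 0 ≤ ((ZMod.toCircle a : Circle) : ℂ).im)
      (fun a => 0 < ((ZMod.toCircle a : Circle) : ℂ).re) := by
  have hL0 : (0 : ℝ) < L := by exact_mod_cast (show 0 < L by omega)
  have hL5 : (5 : ℝ) ≤ L := by exact_mod_cast (show 5 ≤ L by omega)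
  have hpi := Real.pi_pos
  refine ⟨?_, ?_, ?_, ?_, ?_, ?_, ?_⟩
  · intro u hu n
    unfold Lam cvec at hu ⊢
    rw [(lab_snoc _ _ hu).2]
    unfold lab
    rw [Finset.sup_le_iff]
    constructor
    · intro H i hi
      have := H i (Finset.mem_univ _)
      rwa [if_pos hi] at this
    · intro H i _
      split_ifs with hi
      · exact H i hi
      · exact Nat.zero_le _
  · intro u i h
    have := nonneg_of_lab_eq (i.castSucc) (by simpa [Lam] using h)
    simpa [cvec] using this
  · intro u hu i
    unfold Lam cvec at hu
    have h1 := (lab_snoc _ _ hu).1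
    have h2 : ∀ j, ((ZMod.toCircle (u j) : Circle) : ℂ).re ≤ 1 := fun j =>
      (Complex.re_le_norm _).trans (le_of_eq (Circle.norm_coe _))
    have h3 : ∑ j ∈ Finset.univ.erase i, ((ZMod.toCircle (u j) : Circle) : ℂ).re ≤ q - 1 := by
      refine (Finset.sum_le_card_nsmul _ _ 1 fun j _ => h2 j).trans ?_
      rw [Finset.card_erase_of_mem (Finset.mem_univ _)]
      simp only [Finset.card_univ, Fintype.card_fin, nsmul_eq_mul, mul_one]
      rw [Nat.cast_sub (by have := i.2; omega)]
      simp
    rw [← Finset.add_sum_erase _ _ (Finset.mem_univ i)] at h1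
    linarith
  · intro a
    obtain ⟨k, hk1, hk2, rfl⟩ : ∃ k : ℤ, -(L : ℤ) < 2 * k ∧ 2 * k ≤ L ∧ (k : ZMod L) = a := by
      refine ⟨a.valMinAbs, ?_, ?_, ZMod.coe_valMinAbs a⟩
      · have := (ZMod.valMinAbs_mem_Ioc a).1; linarith
      · have := (ZMod.valMinAbs_mem_Ioc a).2; linarith
    have e : ((k : ZMod L) + 1) = ((k + 1 : ℤ) : ZMod L) := by push_cast; ring
    rw [e]
    simp only [toCircle_re, toCircle_im]
    intro h1 h2 h3
    have hk1' : -(L : ℝ) < 2 * k := by exact_mod_cast hk1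
    have hk2' : 2 * (k : ℝ) ≤ L := by exact_mod_cast hk2
    have hk3 : 4 * (k : ℝ) < L := by
      by_contra hc
      push Not at hc
      have := Real.cos_nonpos_of_pi_div_two_le_of_le (x := 2 * Real.pi * k / L)
        (by rw [le_div_iff₀ hL0]; nlinarith) (by
          rw [div_le_iff₀ hL0]; nlinarith)
      linarith
    have hk4 : 2 * ((k : ℝ) + 1) < L := by linarith
    by_cases hk : 0 ≤ k
    · exfalso
      have hk' : (0 : ℝ) ≤ k := by exact_mod_cast hk
      apply h3
      constructor
      · intro _
        apply Real.sin_nonneg_of_nonneg_of_le_pi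
        · push_cast; positivity
        · push_cast; rw [div_le_iff₀ hL0]; nlinarith
      · intro _
        apply Real.sin_nonneg_of_nonneg_of_le_pi
        · positivity
        · rw [div_le_iff₀ hL0]; nlinarith
    · by_cases hkm : k = -1
      · subst hkm; push_cast; rfl
      · exfalso
        have hk' : (k : ℝ) + 1 < 0 := by
          have : k + 1 < 0 := by omega
          exact_mod_cast this
        apply h3
        constructor
        · intro h
          have := Real.sin_neg_of_neg_of_neg_pi_lt (x := 2 * Real.pi * k / L)
            (by rw [div_lt_iff₀ hL0]; nlinarith) (by rw [lt_div_iff₀ hL0]; nlinarith)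
          linarith
        · intro h
          have := Real.sin_neg_of_neg_of_neg_pi_lt (x := 2 * Real.pi * ((k + 1 : ℤ) : ℝ) / L)
            (by push_cast; rw [div_lt_iff₀ hL0]; nlinarith)
            (by push_cast; rw [lt_div_iff₀ hL0]; nlinarith)
          linarith
  · simp
  · have := toCircle_im L (-1)
    push_cast at this
    rw [this]
    have := Real.sin_neg_of_neg_of_neg_pi_lt (x := 2 * Real.pi * (-1) / L)
            (by rw [div_lt_iff₀ hL0]; nlinarith) (by rw [lt_div_iff₀ hL0]; nlinarith)
    linarith
  · intro u hu
    by_contra hlt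
    have h1 : lab (cvec (fun i => ZMod.toCircle (u i))) = (Fin.last q : ℕ) + 1 := by
      have := lab_le (cvec (fun i => ZMod.toCircle (u i)))
      unfold Lam at hlt
      simp only [Fin.val_last]
      omega
    have h2 := nonneg_of_lab_eq (Fin.last q) h1
    simp only [cvec, Fin.snoc_last] at h2
    set θ : ℝ := 2 * Real.pi * (-1) / L with hθ
    have h3 : ∀ j, 1 - θ ^ 2 / 2 ≤ ((ZMod.toCircle (u j) : Circle) : ℂ).re := by
      intro j
      rcases hu j with h | h
      · have := toCircle_re L (-1)
        push_cast at this
        rw [h, this]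
        exact Real.one_sub_sq_div_two_le_cos
      · rw [h]
        simp
        positivity
    have h4 : (q : ℝ) * (1 - θ ^ 2 / 2) ≤ ∑ j, ((ZMod.toCircle (u j) : Circle) : ℂ).re := by
      have := Finset.card_nsmul_le_sum Finset.univ
        (fun j => ((ZMod.toCircle (u j) : Circle) : ℂ).re) _ (fun j _ => h3 j)
      simpa using this
    have h5 : q * (θ ^ 2 / 2) < 1 := by
      rw [hθ, show (q : ℝ) * ((2 * Real.pi * (-1) / L) ^ 2 / 2) = (q * 2 * Real.pi ^ 2) / L ^ 2 by
        field_simp, div_lt_one (by positivity)]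
      have : Real.pi ^ 2 ≤ 10 := by nlinarith [Real.pi_lt_d2]
      have hq0 : (0 : ℝ) ≤ q := by positivity
      have hLq : 5 * (q : ℝ) + 5 ≤ L := by exact_mod_cast hL
      nlinarith
    linarith

end degree2

end FN

namespace FN

section cluster

variable {P : Type*} [MetricSpace P] [MeasurableSpace P] [BorelSpace P]

lemma lp_le (μ ν : LevyProkhorov (ProbabilityMeasure P)) (η : ℝ) (h : dist μ ν < η) (B : Set P)
    (hB : MeasurableSet B) :
    (μ.toMeasure : Measure P).real B ≤ (ν.toMeasure : Measure P).real (Metric.thickening η B) + η := by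
  have hη : 0 < η := lt_of_le_of_lt dist_nonneg h
  have h1 : levyProkhorovEDist (μ.toMeasure : Measure P) (ν.toMeasure : Measure P) < ENNReal.ofReal η := by
    have := (edist_lt_ofReal (x := μ) (y := ν)).2 h
    exact this
  have h2 := left_measure_le_of_levyProkhorovEDist_lt h1 hB
  rw [ENNReal.toReal_ofReal hη.le] at h2
  have h3 := ENNReal.toReal_mono (by simp) h2
  rw [ENNReal.toReal_add (by simp) (by simp), ENNReal.toReal_ofReal hη.le] at h3
  exact h3

lemma cluster_one (N : ℕ) (ν : Measure P) [IsProbabilityMeasure ν] (T : Finset P)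
    (hTc : T.card ≤ N) (R t : ℕ → ℝ) (τ : ℝ) (hR : ∀ a, 0 < R a) (ht : ∀ a, 0 < t a)
    (hR1 : ∀ a, R (a + 1) * 40 = R a) (ht1 : ∀ a, t (a + 1) * (16 * N) = t a) (ht0 : t 0 * (16 * N) = 1)
    (hτ : τ ≤ t N) (hT : 1 - τ < ν.real (T : Set P)) :
    ∃ a < N, ∃ A ⊆ T, A.card = a + 1 ∧ (∀ γ ∈ A, ∀ γ' ∈ A, γ ≠ γ' → 40 * R (a + 1) < dist γ γ') ∧
      (∀ γ ∈ A, t a < ν.real {γ}) ∧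
      1 - t a / 8 ≤ ν.real (⋃ γ ∈ A, Metric.closedBall γ (R (a + 1))) := by
  classical
  have hN : 1 ≤ N := by
    rcases Nat.eq_zero_or_pos N with h | h
    · subst h; simp at ht0
    · exact h
  have hN' : (1 : ℝ) ≤ N := by exact_mod_cast hN
  have htd : ∀ a, t (a + 1) * 16 ≤ t a := fun a => by
    rw [← ht1 a]; nlinarith [ht (a + 1)]
  have hta : Antitone t := antitone_nat_of_succ_le fun a => by
    have := htd a; have := ht (a + 1); linarith
  by_contra hno
  have key : ∀ a ≤ N, ∃ A ⊆ T, a + 1 ≤ A.card ∧ (∀ γ ∈ A, ∀ γ' ∈ A, γ ≠ γ' → R a < dist γ γ') ∧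
      (∀ γ ∈ A, t a < ν.real {γ}) := by
    intro a
    induction a with
    | zero =>
      intro _
      by_contra h
      have hsmall : ∀ γ ∈ T, ν.real {γ} ≤ t 0 := by
        intro γ hγ
        by_contra hlt
        push Not at hlt
        exact h ⟨{γ}, by simpa using hγ, by simp, by
          intro a ha b hb hab
          simp only [Finset.mem_singleton] at ha hb
          exact absurd (ha.trans hb.symm) hab, by simpa using hlt⟩
      have h1 : ν.real (T : Set P) ≤ ∑ γ ∈ T, ν.real {γ} := by
        have e : (T : Set P) = ⋃ γ ∈ T, {γ} := by ext z; simp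
        rw [e]
        exact measureReal_biUnion_finset_le _ _
      have h2 : ∑ γ ∈ T, ν.real {γ} ≤ N * t 0 := by
        refine (Finset.sum_le_card_nsmul _ _ _ hsmall).trans ?_
        rw [nsmul_eq_mul]
        have : (T.card : ℝ) ≤ N := by exact_mod_cast hTc
        nlinarith [ht 0]
      have h3 : t N ≤ t 0 := hta (Nat.zero_le _)
      nlinarith
    | succ a ih =>
      intro ha
      obtain ⟨A, hAT, hAc, hAs, hAm⟩ := ih (by omega)
      have hRa : R (a + 1) < R a := by rw [← hR1 a]; nlinarith [hR (a + 1)]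
      have htaa : t (a + 1) ≤ t a := hta (Nat.le_succ a)
      by_cases hc : a + 2 ≤ A.card
      · exact ⟨A, hAT, by omega, fun γ h γ' h' hne => hRa.trans (hAs γ h γ' h' hne),
          fun γ h => lt_of_le_of_lt htaa (hAm γ h)⟩
      · have hc' : A.card = a + 1 := by omega
        by_cases hex : ∃ γ ∈ T, t (a + 1) < ν.real {γ} ∧ ∀ γ' ∈ A, R (a + 1) < dist γ γ'
        · obtain ⟨γ, hγT, hγm, hγd⟩ := hex
          have hγA : γ ∉ A := fun h => by
            have := hγd γ h
            rw [dist_self] at this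
            linarith [hR (a + 1)]
          refine ⟨insert γ A, ?_, ?_, ?_, ?_⟩
          · exact Finset.insert_subset hγT hAT
          · rw [Finset.card_insert_of_notMem hγA]; omega
          · intro x hx y hy hxy
            rw [Finset.mem_insert] at hx hy
            rcases hx with rfl | hx <;> rcases hy with rfl | hy
            · exact absurd rfl hxy
            · exact hγd _ hy
            · rw [dist_comm]; exact hγd _ hx
            · exact hRa.trans (hAs _ hx _ hy hxy)
          · intro x hx
            rw [Finset.mem_insert] at hx
            rcases hx with rfl | hx
            · exact hγm
            · exact lt_of_le_of_lt htaa (hAm _ hx)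
        · exfalso
          push Not at hex
          apply hno
          refine ⟨a, by omega, A, hAT, hc', fun γ h γ' h' hne => ?_, hAm, ?_⟩
          · have := hAs γ h γ' h' hne
            rw [← hR1 a] at this; linarith
          · set U := ⋃ γ ∈ A, Metric.closedBall γ (R (a + 1)) with hU
            set W := T.filter (fun γ => ν.real {γ} ≤ t (a + 1)) with hW
            have hsub : (T : Set P) ⊆ U ∪ (W : Set P) := by
              intro γ hγ
              by_cases hm : ν.real {γ} ≤ t (a + 1)
              · right; simp only [hW, Finset.coe_filter, Set.mem_ofPred_eq]; exact ⟨hγ, hm⟩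
              · left
                obtain ⟨γ', hγ', hd⟩ := hex γ hγ (not_le.1 hm)
                rw [hU]
                exact Set.mem_biUnion hγ' (Metric.mem_closedBall.2 hd)
            have h0 : ν.real (T : Set P) ≤ ν.real U + ν.real (W : Set P) :=
              (measureReal_mono hsub).trans (measureReal_union_le _ _)
            have h1 : ν.real (W : Set P) ≤ ∑ γ ∈ W, ν.real {γ} := by
              have e : (W : Set P) = ⋃ γ ∈ W, {γ} := by ext z; simp
              rw [e]
              exact measureReal_biUnion_finset_le _ _
            have h2 : ∑ γ ∈ W, ν.real {γ} ≤ N * t (a + 1) := by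
              refine (Finset.sum_le_card_nsmul _ _ (t (a + 1)) ?_).trans ?_
              · intro γ hγ
                exact (Finset.mem_filter.1 hγ).2
              rw [nsmul_eq_mul]
              have : (W.card : ℝ) ≤ N := by
                exact_mod_cast (Finset.card_filter_le _ _).trans hTc
              nlinarith [ht (a + 1)]
            have h3 : t N ≤ t (a + 1) := hta ha
            have h4 := ht1 a
            have h5 := htd a
            linarith
  obtain ⟨A, hAT, hAc, -⟩ := key N le_rfl
  have := Finset.card_le_card hAT
  omega

theorem cluster_family {M : Type*} [PseudoMetricSpace M] [CompactSpace M] (N : ℕ) (hN : 1 ≤ N)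
    (μ : M → LevyProkhorov (ProbabilityMeasure P)) (hμ : Continuous μ) (F : M → Set P)
    (G : Set P) (R0 : ℝ) (hR0 : 0 < R0)
    (hT : ∀ x, ∃ T : Finset P, T.card ≤ N ∧ (∀ γ ∈ T, γ ∈ F x ∧ γ ∈ G) ∧
      1 - (1 / (16 * (N : ℝ))) ^ (N + 1) < ((μ x).toMeasure : Measure P).real (T : Set P)) :
    ∃ δ > 0, ∃ (V : ℕ → Set M) (A : ℕ → M → Finset P) (ρ : ℕ → ℝ),
      (∀ k, 0 < ρ k ∧ ρ k ≤ R0) ∧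
      (∀ x, ∃ k < N, ∀ y, dist x y < δ → y ∈ V k) ∧
      (∀ k < N, ∀ y ∈ V k, (A k y).card = k + 1 ∧ (∀ γ ∈ A k y, γ ∈ F y ∧ γ ∈ G) ∧
        ∀ γ ∈ A k y, ∀ γ' ∈ A k y, γ ≠ γ' → 4 * ρ k < dist γ γ') ∧
      (∀ k < N, ∀ y ∈ V k, ∀ y' ∈ V k, dist y y' < δ → ∀ γ ∈ A k y, ∃ γ' ∈ A k y', dist γ γ' < ρ k) := by
  classical
  have hN' : (1 : ℝ) ≤ N := by exact_mod_cast hN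
  set s : ℝ := 1 / (16 * (N : ℝ)) with hs
  have hs0 : 0 < s := by positivity
  have hs16 : s * (16 * N) = 1 := by rw [hs]; field_simp
  set t : ℕ → ℝ := fun a => s ^ (a + 1) with ht
  set R : ℕ → ℝ := fun a => R0 / 40 ^ (a + 1) with hR
  have ht0 : ∀ a, 0 < t a := fun a => by simp only [ht]; positivity
  have hRp : ∀ a, 0 < R a := fun a => by simp only [hR]; positivity
  have hR1 : ∀ a, R (a + 1) * 40 = R a := fun a => by simp only [hR]; rw [pow_succ 40 (a + 1)]; field_simp
  have ht1 : ∀ a, t (a + 1) * (16 * N) = t a := fun a => by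
    simp only [ht]; rw [pow_succ s (a + 1), mul_assoc, hs16, mul_one]
  have hta : Antitone t := antitone_nat_of_succ_le fun a => by
    have := ht1 a; have := ht0 (a + 1); nlinarith
  have hRa : Antitone R := antitone_nat_of_succ_le fun a => by
    have := hR1 a; have := hRp (a + 1); linarith
  set η : ℝ := min (R N) (t N / 8) with hη
  have hη0 : 0 < η := lt_min (hRp N) (by have := ht0 N; linarith)
  have hηR : ∀ a < N, η ≤ R (a + 1) := fun a ha => (min_le_left _ _).trans (hRa ha)
  have hηt : ∀ a < N, η ≤ t a / 8 := fun a ha => (min_le_right _ _).trans (by have := hta ha.le; linarith)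
  obtain ⟨δ, hδ, hu⟩ := Metric.uniformContinuous_iff.1
    (CompactSpace.uniformContinuous_of_continuous hμ) η hη0
  let m : M → Set P → ℝ := fun x B => ((μ x).toMeasure : Measure P).real B
  have hLP : ∀ x y, dist x y < δ → ∀ B : Set P, MeasurableSet B →
      m x B ≤ m y (Metric.thickening η B) + η := fun x y hxy B hB => lp_le _ _ η (hu hxy) B hB
  have mono : ∀ x, ∀ B B' : Set P, B ⊆ B' → m x B ≤ m x B' := fun x B B' h => measureReal_mono h
  have inter : ∀ x, ∀ B B' : Set P, MeasurableSet B' → 1 < m x B + m x B' → (B ∩ B').Nonempty := by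
    intro x B B' hB' h1
    by_contra hne
    rw [Set.not_nonempty_iff_eq_empty, ← Set.disjoint_iff_inter_eq_empty] at hne
    have h2 := measureReal_union (μ := ((μ x).toMeasure : Measure P)) hne hB'
    have h3 : ((μ x).toMeasure : Measure P).real (B ∪ B') ≤ 1 := measureReal_le_one
    simp only [m] at h1
    linarith
  let Q : ℕ → M → Finset P → Prop := fun k y A => A.card = k + 1 ∧ (∀ γ ∈ A, γ ∈ F y ∧ γ ∈ G) ∧
    (∀ γ ∈ A, ∀ γ' ∈ A, γ ≠ γ' → 36 * R (k + 1) < dist γ γ') ∧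
    (∀ γ ∈ A, 3 * t k / 4 < m y (Metric.ball γ (4 * R (k + 1)))) ∧
    1 - t k / 4 ≤ m y (⋃ γ ∈ A, Metric.ball γ (4 * R (k + 1)))
  let V : ℕ → Set M := fun k => {y | ∃ A, Q k y A}
  let A : ℕ → M → Finset P := fun k y => if h : ∃ A, Q k y A then h.choose else ∅
  have hA : ∀ k, ∀ y ∈ V k, Q k y (A k y) := by
    intro k y hy
    have hy' : ∃ A, Q k y A := hy
    simp only [A, dif_pos hy']
    exact hy'.choose_spec
  refine ⟨δ, hδ, V, A, fun k => 9 * R (k + 1), ?_, ?_, ?_, ?_⟩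
  · intro k
    refine ⟨by have := hRp (k + 1); linarith, ?_⟩
    have h1 := hR1 k
    have h2 : R k ≤ R 0 := hRa (Nat.zero_le _)
    have h3 : R 0 * 40 = R0 := by simp [hR]
    have := hRp (k + 1)
    linarith
  · intro x
    obtain ⟨T, hTc, hTF, hTm⟩ := hT x
    obtain ⟨a, haN, A0, hA0T, hA0c, hA0s, hA0m, hA0u⟩ := cluster_one N ((μ x).toMeasure : Measure P) T hTc
      R t (t N) hRp ht0 hR1 ht1 (by simp [ht, hs16]) le_rfl hTm
    refine ⟨a, haN, fun y hxy => ?_⟩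
    have hr := hRp (a + 1)
    have hηr := hηR a haN
    have hηt' := hηt a haN
    obtain ⟨T', hTc', hTF', hTm'⟩ := hT y
    have htN : t N ≤ t (a + 1) := hta haN
    have htN' : t (a + 1) * 16 ≤ t a := by rw [← ht1 a]; nlinarith [ht0 (a + 1)]
    have hta0 := ht0 a
    have hball : ∀ γ ∈ A0, 7 * t a / 8 < m y (Metric.ball γ (2 * R (a + 1))) := by
      intro γ hγ
      have h1 := hLP x y hxy {γ} (measurableSet_singleton γ)
      rw [Metric.thickening_singleton] at h1
      have h2 := hA0m γ hγ
      have h3 := mono y _ _ (Metric.ball_subset_ball (x := γ) (show η ≤ 2 * R (a + 1) by linarith))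
      simp only [m] at h1 h3 ⊢
      linarith
    have hch : ∀ γ ∈ A0, ∃ γ', γ' ∈ T' ∧ dist γ' γ < 2 * R (a + 1) := by
      intro γ hγ
      have hb := hball γ hγ
      have hTm'' : 1 - t N < m y (T' : Set P) := hTm'
      obtain ⟨γ', h1, h2⟩ := inter y (T' : Set P) (Metric.ball γ (2 * R (a + 1)))
        Metric.isOpen_ball.measurableSet (by linarith)
      exact ⟨γ', h1, h2⟩
    choose! c hcT hcd using hch
    have hcs : ∀ γ ∈ A0, ∀ γ' ∈ A0, γ ≠ γ' → 36 * R (a + 1) < dist (c γ) (c γ') := by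
      intro γ hγ γ' hγ' hne
      have h1 := hA0s γ hγ γ' hγ' hne
      have h2 := hcd γ hγ
      have h3 := hcd γ' hγ'
      have h4 := dist_triangle4 γ (c γ) (c γ') γ'
      rw [dist_comm γ (c γ)] at h4
      linarith
    have hinj : Set.InjOn c A0 := by
      intro γ hγ γ' hγ' he
      by_contra hne
      have := hcs γ hγ γ' hγ' hne
      rw [he, dist_self] at this
      linarith
    refine ⟨A0.image c, ?_, ?_, ?_, ?_, ?_⟩
    · rw [Finset.card_image_of_injOn hinj, hA0c]
    · intro γ hγ
      obtain ⟨γ0, h0, rfl⟩ := Finset.mem_image.1 hγ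
      exact hTF' _ (hcT γ0 h0)
    · intro γ hγ γ' hγ' hne
      obtain ⟨γ0, h0, rfl⟩ := Finset.mem_image.1 hγ
      obtain ⟨γ1, h1, rfl⟩ := Finset.mem_image.1 hγ'
      exact hcs _ h0 _ h1 (fun e => hne (by rw [e]))
    · intro γ hγ
      obtain ⟨γ0, h0, rfl⟩ := Finset.mem_image.1 hγ
      have h1 := hball γ0 h0
      have h2 : Metric.ball γ0 (2 * R (a + 1)) ⊆ Metric.ball (c γ0) (4 * R (a + 1)) := by
        apply Metric.ball_subset_ball'
        rw [dist_comm]; have := hcd γ0 h0; linarith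
      have h3 := mono y _ _ h2
      linarith
    · have h1 := hLP x y hxy (⋃ γ ∈ A0, Metric.closedBall γ (R (a + 1)))
        (Finset.measurableSet_biUnion _ fun γ _ => Metric.isClosed_closedBall.measurableSet)
      have h2 : Metric.thickening η (⋃ γ ∈ A0, Metric.closedBall γ (R (a + 1))) ⊆
          ⋃ γ ∈ A0.image c, Metric.ball γ (4 * R (a + 1)) := by
        intro z hz
        rw [Metric.mem_thickening_iff] at hz
        obtain ⟨w, hw, hzw⟩ := hz
        simp only [Set.mem_iUnion] at hw
        obtain ⟨γ, hγ, hw⟩ := hw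
        simp only [Set.mem_iUnion]
        refine ⟨c γ, Finset.mem_image_of_mem c hγ, ?_⟩
        rw [Metric.mem_ball]
        rw [Metric.mem_closedBall] at hw
        have h3 := hcd γ hγ
        have h4 := dist_triangle4 z w γ (c γ)
        rw [dist_comm γ (c γ)] at h4
        linarith
      have h3 := mono y _ _ h2
      have h4 : 1 - t a / 8 ≤ m x (⋃ γ ∈ A0, Metric.closedBall γ (R (a + 1))) := hA0u
      linarith
  · intro k hk y hy
    obtain ⟨h1, h2, h3, -⟩ := hA k y hy
    refine ⟨h1, h2, fun γ hγ γ' hγ' hne => ?_⟩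
    have := h3 γ hγ γ' hγ' hne
    linarith
  · intro k hk y hy y' hy' hyy γ hγ
    obtain ⟨-, -, -, h4, -⟩ := hA k y hy
    obtain ⟨-, -, -, -, h5⟩ := hA k y' hy'
    have hηr := hηR k hk
    have hηt' := hηt k hk
    have ht0k := ht0 k
    have h6 := hLP y y' hyy (Metric.ball γ (4 * R (k + 1))) Metric.isOpen_ball.measurableSet
    have h7 := h4 γ hγ
    obtain ⟨z, hz1, hz2⟩ := inter y' (Metric.thickening η (Metric.ball γ (4 * R (k + 1))))
      (⋃ γ ∈ A k y', Metric.ball γ (4 * R (k + 1)))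
      (Finset.measurableSet_biUnion _ fun γ _ => Metric.isOpen_ball.measurableSet) (by linarith)
    rw [Metric.mem_thickening_iff] at hz1
    obtain ⟨w, hw, hzw⟩ := hz1
    simp only [Set.mem_iUnion] at hz2
    obtain ⟨γ', hγ', hz2⟩ := hz2
    refine ⟨γ', hγ', ?_⟩
    rw [Metric.mem_ball] at hw hz2
    have h8 := dist_triangle4 γ w z γ'
    rw [dist_comm γ w, dist_comm w z] at h8
    linarith

end cluster

end FN

namespace FN

section uniformgood

lemma good_uniform {P : Type*} [MetricSpace P] [MeasurableSpace P] [BorelSpace P]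
    {M : Type*} [TopologicalSpace M] [CompactSpace M] (N : ℕ)
    (μ : M → LevyProkhorov (ProbabilityMeasure P)) (hμ : Continuous μ) (F : M → Set P)
    (G : ℕ → Set P) (hG : Monotone G) (hG1 : ∀ n, ∃ η > 0, Metric.thickening η (G n) ⊆ G (n + 1))
    (hFG : ∀ x, ∀ γ ∈ F x, ∃ n, γ ∈ G n)
    (hS : ∀ x, ∃ S : Finset P, S.card ≤ N ∧ (∀ γ ∈ S, γ ∈ F x) ∧
      ((μ x).toMeasure : Measure P).real (S : Set P) = 1) (τ : ℝ) (hτ : 0 < τ) :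
    ∃ n, ∀ x, ∃ T : Finset P, T.card ≤ N ∧ (∀ γ ∈ T, γ ∈ F x ∧ γ ∈ G n) ∧
      1 - τ < ((μ x).toMeasure : Measure P).real (T : Set P) := by
  classical
  have hloc : ∀ x, ∃ n, ∀ᶠ y in nhds x, ∃ T : Finset P, T.card ≤ N ∧
      (∀ γ ∈ T, γ ∈ F y ∧ γ ∈ G n) ∧ 1 - τ < ((μ y).toMeasure : Measure P).real (T : Set P) := by
    intro x
    obtain ⟨S, hSc, hSF, hSm⟩ := hS x
    have hn : ∃ n, ∀ γ ∈ S, γ ∈ G n := by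
      have : ∀ γ ∈ S, ∃ n, γ ∈ G n := fun γ hγ => hFG x γ (hSF γ hγ)
      choose! c hc using this
      exact ⟨S.sup c, fun γ hγ => hG (Finset.le_sup hγ) (hc γ hγ)⟩
    obtain ⟨n, hn⟩ := hn
    obtain ⟨η, hη, hthick⟩ := hG1 n
    refine ⟨n + 1, ?_⟩
    set ε := min η (τ / 2) with hε
    have hε0 : 0 < ε := lt_min hη (by linarith)
    have hev : ∀ᶠ y in nhds x, dist (μ y) (μ x) < ε :=
      (hμ.tendsto x).eventually (Metric.ball_mem_nhds (μ x) hε0)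
    filter_upwards [hev] with y hy
    obtain ⟨S', hSc', hSF', hSm'⟩ := hS y
    refine ⟨S'.filter (fun γ => γ ∈ G (n + 1)), (Finset.card_filter_le _ _).trans hSc', ?_, ?_⟩
    · intro γ hγ
      rw [Finset.mem_filter] at hγ
      exact ⟨hSF' γ hγ.1, hγ.2⟩
    · have h1 := lp_le (μ x) (μ y) ε (by rwa [dist_comm]) (S : Set P) S.measurableSet
      rw [hSm] at h1
      set ν := ((μ y).toMeasure : Measure P)
      have hsub : Metric.thickening ε (S : Set P) ⊆ G (n + 1) :=
        (Metric.thickening_mono (min_le_left _ _) _).trans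
          ((Metric.thickening_subset_of_subset _ (fun γ hγ => hn γ hγ)).trans hthick)
      have h2 : ν.real (Metric.thickening ε (S : Set P)) ≤
          ν.real ((S'.filter (fun γ => γ ∈ G (n + 1)) : Finset P) : Set P) + ν.real ((S' : Set P)ᶜ) := by
        refine (measureReal_mono (fun z hz => ?_)).trans (measureReal_union_le _ _)
        by_cases hz' : z ∈ S'
        · left
          simp only [Finset.coe_filter, Set.mem_ofPred_eq]
          exact ⟨hz', hsub hz⟩
        · right; exact hz'
      have h3 : ν.real ((S' : Set P)ᶜ) = 0 := by
        rw [probReal_compl_eq_one_sub S'.measurableSet, hSm', sub_self]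
      have h4 : ε ≤ τ / 2 := min_le_right _ _
      linarith
  choose n hn using hloc
  obtain ⟨t, ht⟩ := isCompact_univ.elim_nhds_subcover (fun x => {y | ∃ T : Finset P, T.card ≤ N ∧
      (∀ γ ∈ T, γ ∈ F y ∧ γ ∈ G (n x)) ∧ 1 - τ < ((μ y).toMeasure : Measure P).real (T : Set P)})
      (fun x _ => hn x)
  refine ⟨t.sup n, fun x => ?_⟩
  have := ht.2 (Set.mem_univ x)
  simp only [Set.mem_iUnion] at this
  obtain ⟨y, hy, T, h1, h2, h3⟩ := this
  exact ⟨T, h1, fun γ hγ => ⟨(h2 γ hγ).1, hG (Finset.le_sup hy) (h2 γ hγ).2⟩, h3⟩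

variable {P : Type*} [MetricSpace P] {q : ℕ}

/-- The good sets. -/
def goodSet (N : ℕ) (h : ℕ → P → ℝ → (Fin (q + 1) → ℝ)) (n : ℕ) : Set P :=
  {γ | ∀ k < N, ∀ s ∈ Icc (0 : ℝ) 1, ∀ t ∈ Icc (0 : ℝ) 1, |s - t| ≤ 1 / ((n : ℝ) + 1) →
    ‖h k γ s - h k γ t‖ + 1 / ((n : ℝ) + 1) < ‖h k γ t‖}

lemma goodSet_mono (N : ℕ) (h : ℕ → P → ℝ → (Fin (q + 1) → ℝ)) : Monotone (goodSet N h) := by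
  intro n m hnm γ hγ k hk s hs t ht hst
  have hle : 1 / ((m : ℝ) + 1) ≤ 1 / ((n : ℝ) + 1) := by
    apply one_div_le_one_div_of_le (by positivity)
    have : (n : ℝ) ≤ m := by exact_mod_cast hnm
    linarith
  have := hγ k hk s hs t ht (hst.trans hle)
  linarith

lemma goodSet_thick (N : ℕ) (h : ℕ → P → ℝ → (Fin (q + 1) → ℝ)) (C : ℝ) (hC : 0 < C)
    (hL : ∀ k < N, ∀ γ γ' t, ‖h k γ t - h k γ' t‖ ≤ C * dist γ γ') (n : ℕ) :
    ∃ η > 0, Metric.thickening η (goodSet N h n) ⊆ goodSet N h (n + 1) := by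
  have hlt : 1 / (((n + 1 : ℕ) : ℝ) + 1) < 1 / ((n : ℝ) + 1) := by
    apply one_div_lt_one_div_of_lt (by positivity)
    push_cast; linarith
  set Δ := 1 / ((n : ℝ) + 1) - 1 / (((n + 1 : ℕ) : ℝ) + 1) with hΔ
  have hΔ0 : 0 < Δ := sub_pos.2 hlt
  refine ⟨Δ / (3 * C), by positivity, ?_⟩
  intro γ' hγ' k hk s hs t ht hst
  rw [Metric.mem_thickening_iff] at hγ'
  obtain ⟨γ, hγ, hd⟩ := hγ'
  have h1 := hγ k hk s hs t ht (hst.trans hlt.le)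
  have hCd : C * dist γ' γ ≤ Δ / 3 := by
    calc C * dist γ' γ ≤ C * (Δ / (3 * C)) := by gcongr
      _ = Δ / 3 := by field_simp
  have h2 := hL k hk γ' γ s
  have h3 := hL k hk γ' γ t
  have h4 : ‖h k γ' s - h k γ' t‖ ≤ ‖h k γ' s - h k γ s‖ + ‖h k γ s - h k γ t‖ + ‖h k γ' t - h k γ t‖ := by
    have : h k γ' s - h k γ' t = (h k γ' s - h k γ s) + (h k γ s - h k γ t) - (h k γ' t - h k γ t) := by
      abel
    rw [this]
    exact (norm_sub_le _ _).trans (by gcongr; exact norm_add_le _ _)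
  have h5 : ‖h k γ t‖ ≤ ‖h k γ' t‖ + ‖h k γ' t - h k γ t‖ := by
    have : h k γ t = h k γ' t - (h k γ' t - h k γ t) := by abel
    calc ‖h k γ t‖ = ‖h k γ' t - (h k γ' t - h k γ t)‖ := by rw [← this]
      _ ≤ _ := norm_sub_le _ _
  linarith

lemma goodSet_cover (N : ℕ) (h : ℕ → P → ℝ → (Fin (q + 1) → ℝ)) (γ : P)
    (hc : ∀ k < N, Continuous (h k γ)) (hne : ∀ k < N, ∀ t ∈ Icc (0 : ℝ) 1, h k γ t ≠ 0) :
    ∃ n, γ ∈ goodSet N h n := by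
  have hone : ∀ k < N, ∃ n : ℕ, ∀ s ∈ Icc (0 : ℝ) 1, ∀ t ∈ Icc (0 : ℝ) 1,
      |s - t| ≤ 1 / ((n : ℝ) + 1) → ‖h k γ s - h k γ t‖ + 1 / ((n : ℝ) + 1) < ‖h k γ t‖ := by
    intro k hk
    obtain ⟨t0, ht0, hmin⟩ := isCompact_Icc.exists_isMinOn (nonempty_Icc.2 (zero_le_one (α := ℝ)))
      ((hc k hk).norm.continuousOn)
    have hc0 : 0 < ‖h k γ t0‖ := norm_pos_iff.2 (hne k hk t0 ht0)
    set c := ‖h k γ t0‖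
    have huc := isCompact_Icc.uniformContinuousOn_of_continuous (s := Icc (0 : ℝ) 1)
      (hc k hk).continuousOn
    rw [Metric.uniformContinuousOn_iff] at huc
    obtain ⟨δ, hδ, hu⟩ := huc (c / 2) (by linarith)
    obtain ⟨n, hn⟩ := exists_nat_one_div_lt (show 0 < min δ (c / 2) from lt_min hδ (by linarith))
    refine ⟨n, fun s hs t ht hst => ?_⟩
    have h1 := hu s hs t ht (by rw [Real.dist_eq]; exact lt_of_le_of_lt hst (hn.trans_le (min_le_left _ _)))
    rw [dist_eq_norm] at h1
    have h2 : c ≤ ‖h k γ t‖ := hmin ht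
    have h3 := hn.trans_le (min_le_right _ _)
    linarith
  choose! n hn using hone
  refine ⟨(Finset.range N).sup n, fun k hk s hs t ht hst => ?_⟩
  have hle : n k ≤ (Finset.range N).sup n := Finset.le_sup (Finset.mem_range.2 hk)
  have hle' : 1 / (((Finset.range N).sup n : ℕ) + 1 : ℝ) ≤ 1 / ((n k : ℝ) + 1) := by
    apply one_div_le_one_div_of_le (by positivity)
    have : (n k : ℝ) ≤ ((Finset.range N).sup n : ℕ) := by exact_mod_cast hle
    linarith
  have := hn k hk s hs t ht (hst.trans hle')
  linarith

end uniformgood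

end FN


namespace FN

lemma cob_transfer {Z P : Type*} [PseudoMetricSpace P] (q : ℕ) (A : Z → Finset P) (mt : Z → P → P)
    (ρ : ℝ) (B : (ℕ → P) → ℝ) (ξ : ℕ → Z) (c : ℝ)
    (hcard : ∀ n m, (A (ξ n)).card = (A (ξ m)).card)
    (hsep : ∀ n, ∀ γ ∈ A (ξ n), ∀ γ' ∈ A (ξ n), γ ≠ γ' → 4 * ρ < dist γ γ')
    (hmt : ∀ n m, ∀ γ ∈ A (ξ n), mt (ξ m) γ ∈ A (ξ m) ∧ dist γ (mt (ξ m) γ) < ρ) :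
    cob q (fun ξ => c * ∑ γ ∈ A (ξ 0), B (fun n => mt (ξ n) γ)) ξ =
      c * ∑ γ ∈ A (ξ 0), cob q B (fun n => mt (ξ n) γ) := by
  classical
  have key : ∀ j, ∑ γ ∈ A (ξ (skip j 0)), B (fun n => mt (ξ (skip j n)) γ) =
      ∑ γ ∈ A (ξ 0), B (fun n => mt (ξ (skip j n)) γ) := by
    intro j
    set a := skip j 0 with ha
    have inj : Set.InjOn (mt (ξ a)) (A (ξ 0)) := by
      intro γ hγ γ' hγ' h
      by_contra hne
      have h1 := hsep 0 γ hγ γ' hγ' hne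
      have h2 := (hmt 0 a γ hγ).2
      have h3 := (hmt 0 a γ' hγ').2
      rw [← h] at h3
      have := dist_triangle_right γ γ' (mt (ξ a) γ)
      have := (dist_nonneg : 0 ≤ dist γ (mt (ξ a) γ))
      linarith
    have himg : (A (ξ 0)).image (mt (ξ a)) = A (ξ a) := by
      apply Finset.eq_of_subset_of_card_le
      · intro γ' h
        obtain ⟨γ, hγ, rfl⟩ := Finset.mem_image.1 h
        exact (hmt 0 a γ hγ).1
      · rw [Finset.card_image_of_injOn inj, hcard 0 a]
    rw [← himg, Finset.sum_image inj]
    refine Finset.sum_congr rfl fun γ hγ => ?_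
    congr 1
    funext n
    by_contra hne
    obtain ⟨h1, h2⟩ := hmt 0 a γ hγ
    obtain ⟨h3, h4⟩ := hmt a (skip j n) _ h1
    obtain ⟨h5, h6⟩ := hmt 0 (skip j n) γ hγ
    have h7 := hsep _ _ h3 _ h5 hne
    have h8 := dist_triangle_left (mt (ξ (skip j n)) (mt (ξ a) γ)) (mt (ξ (skip j n)) γ) (mt (ξ a) γ)
    have h9 := dist_triangle_left (mt (ξ a) γ) (mt (ξ (skip j n)) γ) γ
    have := (dist_nonneg : 0 ≤ dist γ (mt (ξ a) γ))
    linarith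
  unfold cob
  simp only [key]
  rw [Finset.sum_comm, Finset.mul_sum]
  refine Finset.sum_congr rfl fun j _ => ?_
  rw [← Finset.mul_sum]
  ring

/-- The chain homotopy operator subdivided in time. -/
noncomputable def Bop {P : Type*} (q T : ℕ) (h : P → ℝ → (Fin (q + 1) → ℝ)) (Γ : ℕ → P) : ℝ :=
  ∑ t ∈ Finset.range T, prism q (omg q) (fun n => lab (h (Γ n) ((t : ℝ) / T)))
    (fun n => lab (h (Γ n) (((t + 1 : ℕ) : ℝ) / T)))

lemma Bop_isCoch {P : Type*} (q T : ℕ) (hq : 1 ≤ q) (h : P → ℝ → (Fin (q + 1) → ℝ)) :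
    IsCoch (q - 1) (Bop q T h) := by
  intro Γ Γ' hΓ
  unfold Bop prism
  refine Finset.sum_congr rfl fun t _ => Finset.sum_congr rfl fun i hi => ?_
  congr 1
  apply omg_isCoch
  intro n hn
  have := Finset.mem_range.1 hi
  unfold prismSeq
  split_ifs
  · beta_reduce; rw [hΓ n (by omega)]
  · beta_reduce; rw [hΓ (n - 1) (by omega)]

lemma cob_Bop {P : Type*} (q T : ℕ) (hq : 1 ≤ q) (hT : 1 ≤ T) (h : P → ℝ → (Fin (q + 1) → ℝ))
    (Γ : ℕ → P)
    (hcl : ∀ t < T, ∀ i ≤ q, cob q (omg q) (prismSeq i (fun n => lab (h (Γ n) ((t : ℝ) / T)))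
      (fun n => lab (h (Γ n) (((t + 1 : ℕ) : ℝ) / T)))) = 0) :
    cob (q - 1) (Bop q T h) Γ =
      omg q (fun n => lab (h (Γ n) 1)) - omg q (fun n => lab (h (Γ n) 0)) := by
  unfold cob Bop
  rw [show q - 1 + 2 = q + 1 by omega]
  simp only [Finset.mul_sum]
  rw [Finset.sum_comm]
  have : ∀ t ∈ Finset.range T, ∑ j ∈ Finset.range (q + 1), (-1 : ℝ) ^ j *
      prism q (omg q) (fun n => lab (h (Γ (skip j n)) ((t : ℝ) / T)))
        (fun n => lab (h (Γ (skip j n)) (((t + 1 : ℕ) : ℝ) / T))) =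
      omg q (fun n => lab (h (Γ n) (((t + 1 : ℕ) : ℝ) / T))) -
        omg q (fun n => lab (h (Γ n) ((t : ℝ) / T))) := by
    intro t ht
    exact prism_identity q (omg q) (omg_isCoch q) (fun n => lab (h (Γ n) ((t : ℝ) / T)))
      (fun n => lab (h (Γ n) (((t + 1 : ℕ) : ℝ) / T))) (hcl t (Finset.mem_range.1 ht))
  rw [Finset.sum_congr rfl this, Finset.sum_range_sub
    (fun t : ℕ => omg q (fun n => lab (h (Γ n) ((t : ℝ) / T))))]
  have hT' : (T : ℝ) ≠ 0 := by positivity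
  simp [div_self hT']

lemma closed_est {P : Type*} [PseudoMetricSpace P] (q : ℕ) (h : P → ℝ → (Fin (q + 1) → ℝ))
    (C R0 ε : ℝ) (hC : 0 ≤ C) (hε : 3 * C * R0 ≤ ε) (hR0 : 0 < R0)
    (hL : ∀ γ γ' t, ‖h γ t - h γ' t‖ ≤ C * dist γ γ') (γ : P) (s t : ℝ)
    (hs : ‖h γ t - h γ s‖ + ε < ‖h γ s‖) (Γ : ℕ → P) (hΓ : ∀ n, dist γ (Γ n) ≤ R0) (i : ℕ) :
    cob q (omg q) (prismSeq i (fun n => lab (h (Γ n) s)) (fun n => lab (h (Γ n) t))) = 0 := by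
  set v : ℕ → (Fin (q + 1) → ℝ) := prismSeq i (fun n => h (Γ n) s) (fun n => h (Γ n) t) with hv
  have e : prismSeq i (fun n => lab (h (Γ n) s)) (fun n => lab (h (Γ n) t)) = fun n => lab (v n) := by
    funext n
    simp only [hv, prismSeq]
    split_ifs <;> rfl
  rw [e]
  set o := ‖h γ t - h γ s‖ with ho
  have ho0 : 0 ≤ o := norm_nonneg _
  have hb : ∀ n u, ‖h (Γ n) u - h γ u‖ ≤ C * R0 := fun n u => by
    refine (hL _ _ _).trans ?_
    rw [dist_comm]
    exact mul_le_mul_of_nonneg_left (hΓ n) hC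
  have hCR : 0 ≤ C * R0 := by positivity
  have hvn : ∀ n, ‖v n - h γ s‖ ≤ C * R0 ∨ ‖v n - h γ t‖ ≤ C * R0 := by
    intro n
    simp only [hv, prismSeq]
    split_ifs
    · exact Or.inl (hb _ _)
    · exact Or.inr (hb _ _)
  have hdiff : ∀ n m, ‖v n - v m‖ ≤ 2 * C * R0 + o := by
    intro n m
    have ho' : ‖h γ s - h γ t‖ = o := by rw [ho, norm_sub_rev]
    rcases hvn n with h1 | h1 <;> rcases hvn m with h2 | h2
    · have : v n - v m = (v n - h γ s) - (v m - h γ s) := by abel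
      rw [this]; refine (norm_sub_le _ _).trans ?_; linarith
    · have : v n - v m = (v n - h γ s) + (h γ s - h γ t) - (v m - h γ t) := by abel
      rw [this]; refine (norm_sub_le _ _).trans ?_
      have := norm_add_le (v n - h γ s) (h γ s - h γ t); linarith
    · have : v n - v m = (v n - h γ t) + (h γ t - h γ s) - (v m - h γ s) := by abel
      rw [this]; refine (norm_sub_le _ _).trans ?_
      have := norm_add_le (v n - h γ t) (h γ t - h γ s); linarith
    · have : v n - v m = (v n - h γ t) - (v m - h γ t) := by abel
      rw [this]; refine (norm_sub_le _ _).trans ?_; linarith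
  refine omg_closed_of_small q v (2 * C * R0 + o) (fun n m j => ?_) ?_
  · have := norm_le_pi_norm (v n - v m) j
    rw [Pi.sub_apply, Real.norm_eq_abs] at this
    exact this.trans (hdiff n m)
  · by_contra hcon
    push Not at hcon
    have h0 : ‖v 0‖ ≤ 2 * C * R0 + o := by
      rw [pi_norm_le_iff_of_nonneg (by nlinarith)]
      exact fun j => hcon 0 j
    have hv0 : v 0 = h (Γ 0) s := by simp [hv, prismSeq]
    have h1 := hb 0 s
    rw [hv0] at h0
    have h2 := norm_sub_norm_le (h γ s) (h (Γ 0) s)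
    rw [norm_sub_rev] at h2
    nlinarith

end FN


namespace FN

/-- The embedding of the discrete torus into the torus. -/
noncomputable def grid (q N L : ℕ) [NeZero L] (x : Fin (N * q) → ZMod L) : Fin N → Fin q → Circle :=
  fun k a => ZMod.toCircle (x (finProdFinEquiv (k, a)))

lemma toCircle_step (δ : ℝ) (hδ : 0 < δ) : ∃ L0 : ℕ, ∀ L ≥ L0, ∀ _ : NeZero L, ∀ x : ZMod L,
    dist (ZMod.toCircle (x + 1)) (ZMod.toCircle x) < δ := by
  have ht : Filter.Tendsto (fun L : ℕ => Complex.exp (2 * Real.pi * Complex.I * (1 : ℤ) / (L : ℂ)))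
      Filter.atTop (nhds 1) := by
    have h0 : Filter.Tendsto (fun L : ℕ => (2 * Real.pi * Complex.I * (1 : ℤ) / (L : ℂ)))
        Filter.atTop (nhds 0) := by
      apply tendsto_const_div_atTop_nhds_zero_nat
    have := (Complex.continuous_exp.tendsto 0).comp h0
    rwa [Complex.exp_zero] at this
  obtain ⟨L0, h⟩ := (Metric.tendsto_atTop.1 ht) δ hδ
  refine ⟨L0, fun L hL hn x => ?_⟩
  have h1 := h L hL
  rw [AddChar.map_add_eq_mul]
  change dist ((ZMod.toCircle x * ZMod.toCircle (1 : ZMod L) : Circle) : ℂ) ((ZMod.toCircle x : Circle) : ℂ) < δ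
  rw [dist_eq_norm]
  have e : ((ZMod.toCircle x * ZMod.toCircle (1 : ZMod L) : Circle) : ℂ) - (ZMod.toCircle x : Circle) =
      (ZMod.toCircle x : Circle) * (((ZMod.toCircle (1 : ZMod L) : Circle) : ℂ) - 1) := by
    push_cast; ring
  rw [e, norm_mul, Circle.norm_coe, one_mul]
  have e2 := ZMod.toCircle_intCast (N := L) 1
  rw [Int.cast_one] at e2
  rw [e2, ← dist_eq_norm]
  exact h1

lemma kuhn_grid (q N L : ℕ) [NeZero L] (δ : ℝ) (hδ : 0 < δ)
    (h : ∀ x : ZMod L, dist (ZMod.toCircle (x + 1)) (ZMod.toCircle x) < δ)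
    (x : Fin (N * q) → ZMod L) (g : Equiv.Perm (Fin (N * q))) (n m : ℕ) :
    dist (grid q N L (kuhn x g n)) (grid q N L (kuhn x g m)) < δ := by
  rw [dist_pi_lt_iff hδ]
  intro k
  rw [dist_pi_lt_iff hδ]
  intro a
  simp only [grid, kuhn]
  split_ifs
  · simpa using hδ
  · rw [add_zero]; exact h _
  · rw [add_zero, dist_comm]; exact h _
  · simpa using hδ

lemma const_closed {M : Type*} [PseudoMetricSpace M] [CompactSpace M] {q : ℕ}
    (a : M → (Fin (q + 1) → ℝ)) (ha : Continuous a) (hne : ∀ x, a x ≠ 0) :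
    ∃ δ > 0, ∀ ξ : ℕ → M, (∀ n m, dist (ξ n) (ξ m) < δ) →
      cob q (omg q) (fun n => lab (a (ξ n))) = 0 := by
  by_cases hM : Nonempty M
  · obtain ⟨x0, -, hx0⟩ := isCompact_univ.exists_isMinOn (univ_nonempty (α := M)) ha.norm.continuousOn
    have hc : 0 < ‖a x0‖ := norm_pos_iff.2 (hne x0)
    have huc := CompactSpace.uniformContinuous_of_continuous ha
    obtain ⟨δ, hδ, h⟩ := Metric.uniformContinuous_iff.1 huc (‖a x0‖ / 2) (by positivity)
    refine ⟨δ, hδ, fun ξ hξ => ?_⟩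
    refine omg_closed_of_small q (fun n => a (ξ n)) (‖a x0‖ / 2) (fun n m i => ?_) ?_
    · have h1 := h (hξ n m)
      rw [dist_eq_norm] at h1
      have := norm_le_pi_norm (a (ξ n) - a (ξ m)) i
      rw [Pi.sub_apply, Real.norm_eq_abs] at this
      linarith
    · by_contra hcon
      push Not at hcon
      have h0 : ‖a (ξ 0)‖ ≤ ‖a x0‖ / 2 := by
        rw [pi_norm_le_iff_of_nonneg (by positivity)]
        exact fun j => hcon 0 j
      have := hx0 (mem_univ (ξ 0))
      rw [Set.mem_ofPred_eq] at this
      linarith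
  · exact ⟨1, one_pos, fun ξ => absurd ⟨ξ 0⟩ hM⟩

theorem main_vanish {P : Type*} [MetricSpace P] [MeasurableSpace P] [BorelSpace P]
    (q N : ℕ) (hq : 1 ≤ q) (hN : 1 ≤ N)
    (μ : (Fin N → Fin q → Circle) → LevyProkhorov (ProbabilityMeasure P)) (hμ : Continuous μ)
    (F : (Fin N → Fin q → Circle) → Set P)
    (hS : ∀ x, ∃ S : Finset P, S.card ≤ N ∧ (∀ γ ∈ S, γ ∈ F x) ∧
      ((μ x).toMeasure : Measure P).real (S : Set P) = 1)
    (h : ℕ → P → ℝ → (Fin (q + 1) → ℝ)) (C : ℝ) (hC : 0 < C)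
    (hL : ∀ k < N, ∀ γ γ' t, ‖h k γ t - h k γ' t‖ ≤ C * dist γ γ')
    (hc : ∀ k < N, ∀ γ, Continuous (h k γ))
    (hne : ∀ k < N, ∀ x, ∀ γ ∈ F x, ∀ t ∈ Icc (0 : ℝ) 1, h k γ t ≠ 0)
    (a b : ℕ → (Fin N → Fin q → Circle) → (Fin (q + 1) → ℝ))
    (ha : ∀ k < N, Continuous (a k)) (hb : ∀ k < N, Continuous (b k))
    (ha0 : ∀ k < N, ∀ x, a k x ≠ 0) (hb0 : ∀ k < N, ∀ x, b k x ≠ 0)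
    (hla : ∀ k < N, ∀ x, ∀ γ ∈ F x, lab (h k γ 0) = lab (a k x))
    (hlb : ∀ k < N, ∀ x, ∀ γ ∈ F x, lab (h k γ 1) = lab (b k x)) :
    ∃ L0 : ℕ, ∀ L ≥ L0, ∀ _ : NeZero L,
      kint (cupProd q N (fun k (ξ : ℕ → (Fin (N * q) → ZMod L)) =>
        omg q (fun n => lab (a k (grid q N L (ξ n)))) -
          omg q (fun n => lab (b k (grid q N L (ξ n)))))) = 0 := by
  classical
  have hτ : 0 < (1 / (16 * (N : ℝ))) ^ (N + 1) := by
    have : (0 : ℝ) < N := by exact_mod_cast hN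
    positivity
  obtain ⟨n0, hn0⟩ := good_uniform N μ hμ F (goodSet N h) (goodSet_mono N h)
    (goodSet_thick N h C hC hL)
    (fun x γ hγ => goodSet_cover N h γ (fun k hk => hc k hk γ) (fun k hk => hne k hk x γ hγ))
    hS _ hτ
  set ε : ℝ := 1 / ((n0 : ℝ) + 1) with hε
  have hε0 : 0 < ε := by positivity
  set R0 := ε / (3 * C) with hR0
  have hR00 : 0 < R0 := by positivity
  obtain ⟨δ, hδ, V, A, ρ, hρ, hV, hA, hAA⟩ := cluster_family N hN μ hμ F (goodSet N h n0) R0 hR00 hn0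
  -- uniform delta for closedness
  have hcl : ∀ f : ℕ → (Fin N → Fin q → Circle) → (Fin (q + 1) → ℝ), (∀ k < N, Continuous (f k)) →
      (∀ k < N, ∀ x, f k x ≠ 0) → ∃ δ > 0, ∀ k < N, ∀ ξ : ℕ → (Fin N → Fin q → Circle),
      (∀ n m, dist (ξ n) (ξ m) < δ) → cob q (omg q) (fun n => lab (f k (ξ n))) = 0 := by
    intro f hf hf0
    have : ∀ K ≤ N, ∃ δ > 0, ∀ k < K, ∀ ξ : ℕ → (Fin N → Fin q → Circle),
        (∀ n m, dist (ξ n) (ξ m) < δ) → cob q (omg q) (fun n => lab (f k (ξ n))) = 0 := by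
      intro K
      induction K with
      | zero => exact fun _ => ⟨1, one_pos, fun k hk => absurd hk (by omega)⟩
      | succ K ih =>
        intro hK
        obtain ⟨δ1, h1, h1'⟩ := ih (by omega)
        obtain ⟨δ2, h2, h2'⟩ := const_closed (f K) (hf K (by omega)) (hf0 K (by omega))
        refine ⟨min δ1 δ2, lt_min h1 h2, fun k hk ξ hξ => ?_⟩
        rcases Nat.lt_succ_iff_lt_or_eq.1 hk with h3 | rfl
        · exact h1' k h3 ξ fun n m => (hξ n m).trans_le (min_le_left _ _)
        · exact h2' ξ fun n m => (hξ n m).trans_le (min_le_right _ _)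
    exact this N le_rfl
  obtain ⟨δa, hδa, hca⟩ := hcl a ha ha0
  obtain ⟨δb, hδb, hcb⟩ := hcl b hb hb0
  set δ' := min δ (min δa δb) with hδ'
  have hδ'0 : 0 < δ' := lt_min hδ (lt_min hδa hδb)
  obtain ⟨L0, hL0⟩ := toCircle_step δ' hδ'0
  refine ⟨L0, fun L hLL hnz => ?_⟩
  have hstep := hL0 L hLL hnz
  set mt : ℕ → (Fin N → Fin q → Circle) → P → P := fun k y γ =>
    if hh : ∃ γ' ∈ A k y, dist γ γ' < ρ k then hh.choose else γ with hmt
  have hmt' : ∀ k y γ, (∃ γ' ∈ A k y, dist γ γ' < ρ k) →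
      mt k y γ ∈ A k y ∧ dist γ (mt k y γ) < ρ k := by
    intro k y γ hh
    simp only [hmt, dif_pos hh]
    exact hh.choose_spec
  set T := n0 + 1 with hT
  refine kint_telescope {ξ | ∀ n m, dist (grid q N L (ξ n)) (grid q N L (ξ m)) < δ'}
    (fun ξ hξ p n m => hξ _ _) (fun x g n m => kuhn_grid q N L δ' hδ'0 hstep x g n m) hq hN _
    (fun k ξ => (-(1 / ((k : ℝ) + 1))) * ∑ γ ∈ A k (grid q N L (ξ 0)),
      Bop q T (h k) (fun n => mt k (grid q N L (ξ n)) γ)) ?_ ?_ ?_ ?_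
  · intro k hk ξ ξ' hξ
    beta_reduce
    congr 1
    · exact omg_isCoch q _ _ fun n hn => by rw [hξ n hn]
    · exact omg_isCoch q _ _ fun n hn => by rw [hξ n hn]
  · intro k hk ξ ξ' hξ
    beta_reduce
    rw [hξ 0 (by omega)]
    congr 1
    refine Finset.sum_congr rfl fun γ _ => ?_
    exact Bop_isCoch q T hq (h k) _ _ fun n hn => by rw [hξ n hn]
  · intro k hk ξ hξ
    rw [cob_sub q (fun ξ => omg q (fun n => lab (a k (grid q N L (ξ n)))))]
    have e1 := hca k hk (fun n => grid q N L (ξ n)) fun n m =>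
      (hξ n m).trans_le ((min_le_right _ _).trans (min_le_left _ _))
    have e2 := hcb k hk (fun n => grid q N L (ξ n)) fun n m =>
      (hξ n m).trans_le ((min_le_right _ _).trans (min_le_right _ _))
    have e3 : cob q (fun ξ : ℕ → (Fin (N * q) → ZMod L) =>
      omg q (fun n => lab (a k (grid q N L (ξ n))))) ξ = 0 := e1
    have e4 : cob q (fun ξ : ℕ → (Fin (N * q) → ZMod L) =>
      omg q (fun n => lab (b k (grid q N L (ξ n))))) ξ = 0 := e2
    rw [e3, e4, sub_zero]
  · intro ξ0 hξ0
    obtain ⟨k, hk, hkV⟩ := hV (grid q N L (ξ0 0))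
    refine ⟨k, hk, fun p => ?_⟩
    set ξ : ℕ → (Fin N → Fin q → Circle) := fun n => grid q N L (ξ0 (n + p)) with hξ
    have hξV : ∀ n, ξ n ∈ V k := fun n => hkV _ ((hξ0 _ _).trans_le (min_le_left _ _))
    have hξd : ∀ n m, dist (ξ n) (ξ m) < δ := fun n m => (hξ0 _ _).trans_le (min_le_left _ _)
    have hm : ∀ n m, ∀ γ ∈ A k (ξ n), mt k (ξ m) γ ∈ A k (ξ m) ∧ dist γ (mt k (ξ m) γ) < ρ k :=
      fun n m γ hγ => hmt' _ _ _ (hAA k hk _ (hξV n) _ (hξV m) (hξd n m) γ hγ)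
    have e := cob_transfer (q - 1) (A k) (mt k) (ρ k) (Bop q T (h k)) ξ (-(1 / ((k : ℝ) + 1)))
      (fun n m => by rw [(hA k hk _ (hξV n)).1, (hA k hk _ (hξV m)).1])
      (fun n => (hA k hk _ (hξV n)).2.2) hm
    refine Eq.trans e ?_
    have hsum : ∀ γ ∈ A k (ξ 0), cob (q - 1) (Bop q T (h k)) (fun n => mt k (ξ n) γ) =
        omg q (fun n => lab (b k (ξ n))) - omg q (fun n => lab (a k (ξ n))) := by
      intro γ hγ
      rw [cob_Bop q T hq (by omega) (h k)]
      · have hF : ∀ n, mt k (ξ n) γ ∈ F (ξ n) := fun n =>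
          ((hA k hk _ (hξV n)).2.1 _ (hm 0 n γ hγ).1).1
        simp only [fun n => hla k hk _ _ (hF n), fun n => hlb k hk _ _ (hF n)]
      · intro t ht i hi
        have hTpos : (0 : ℝ) < T := by rw [hT]; positivity
        have hTc : (T : ℝ) = (n0 : ℝ) + 1 := by rw [hT]; push_cast; ring
        refine closed_est q (h k) C R0 ε hC.le ?_ hR00 (hL k hk) γ _ _ ?_ _ ?_ i
        · rw [hR0]; apply le_of_eq; field_simp
        · refine ((hA k hk _ (hξV 0)).2.1 γ hγ).2 k hk _ ?_ _ ?_ ?_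
          · refine ⟨by positivity, ?_⟩
            rw [div_le_one hTpos]
            exact_mod_cast ht
          · refine ⟨by positivity, ?_⟩
            rw [div_le_one hTpos]
            exact_mod_cast ht.le
          · rw [← sub_div, ← hTc, abs_div, abs_of_pos hTpos]
            push_cast
            simp
        · intro n
          exact (hm 0 n γ hγ).2.le.trans (hρ k).2
    rw [Finset.sum_congr rfl hsum, Finset.sum_const, (hA k hk _ (hξV 0)).1, nsmul_eq_mul]
    have : ((k : ℝ) + 1) ≠ 0 := by positivity
    push_cast
    field_simp
    ring

end FN


namespace FN

/-- Clamp to the unit interval. -/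
noncomputable def cl (u : ℝ) : ℝ := max 0 (min 1 u)

lemma cl_cont : Continuous cl := by unfold cl; fun_prop
lemma cl_nonneg (u : ℝ) : 0 ≤ cl u := le_max_left _ _
lemma cl_le_one (u : ℝ) : cl u ≤ 1 := max_le zero_le_one (min_le_left _ _)
lemma cl_of_le {u : ℝ} (h : u ≤ 0) : cl u = 0 := by
  unfold cl; exact max_eq_left ((min_le_right _ _).trans h)
lemma cl_of_ge {u : ℝ} (h : 1 ≤ u) : cl u = 1 := by
  unfold cl; rw [min_eq_left h]; exact max_eq_right zero_le_one

/-- Coordinates of a path of configurations. -/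
noncomputable def Xc {d m n : ℕ} (γ : FibredPaths (fadellNeuwirth d m n)) (s : I) (i : Fin (m + n)) :
    Fin d → ℝ := WithLp.ofLp ((γ.1 s).1 i)

lemma Xc_lip {d m n : ℕ} (γ γ' : FibredPaths (fadellNeuwirth d m n)) (s : I) (i : Fin (m + n)) :
    ‖Xc γ s i - Xc γ' s i‖ ≤ dist γ γ' := by
  have h1 : dist (γ.1 s) (γ'.1 s) ≤ dist γ γ' := ContinuousMap.dist_apply_le_dist (f := γ.1) (g := γ'.1) s
  have h2 : dist ((γ.1 s).1 i) ((γ'.1 s).1 i) ≤ dist (γ.1 s) (γ'.1 s) :=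
    dist_le_pi_dist (γ.1 s).1 (γ'.1 s).1 i
  refine le_trans ?_ (h2.trans h1)
  rw [pi_norm_le_iff_of_nonneg dist_nonneg]
  intro a
  rw [dist_eq_norm]
  exact PiLp.norm_apply_le ((γ.1 s).1 i - (γ'.1 s).1 i) a

lemma Xc_cont {d m n : ℕ} (γ : FibredPaths (fadellNeuwirth d m n)) (i : Fin (m + n)) :
    Continuous (fun s => Xc γ s i) := by
  unfold Xc
  have h1 : Continuous (fun s => (γ.1 s).1) := continuous_subtype_val.comp γ.1.continuous
  exact (PiLp.continuous_ofLp 2 (fun _ : Fin d => ℝ)).comp ((continuous_apply i).comp h1)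

lemma Xc_ne {d m n : ℕ} (γ : FibredPaths (fadellNeuwirth d m n)) (s : I) {i j : Fin (m + n)}
    (h : i ≠ j) : Xc γ s i - Xc γ s j ≠ 0 := by
  intro h0
  apply h
  apply (γ.1 s).2
  exact WithLp.ofLp_injective 2 (sub_eq_zero.1 h0)

/-- Data of a class. -/
structure ClassData (r k : ℕ) where
  i : Fin k
  j : Fin k
  i1 : Fin k
  j1 : Fin k
  i2 : Fin k
  j2 : Fin k
  l : Fin r
  l' : Fin r

/-- The homotopy attached to a class. -/
noncomputable def hh {d m n r : ℕ} (D : ClassData r (m + n)) (γ : FibredPaths (fadellNeuwirth d m n))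
    (t : ℝ) : Fin d → ℝ :=
  (Xc γ (Set.projIcc 0 1 zero_le_one
      ((1 - cl (3 * t - 1)) * (tDiv r D.l : ℝ) + cl (3 * t - 1) * (tDiv r D.l' : ℝ))) D.i -
    Xc γ (Set.projIcc 0 1 zero_le_one
      ((1 - cl (3 * t - 1)) * (tDiv r D.l : ℝ) + cl (3 * t - 1) * (tDiv r D.l' : ℝ))) D.j) +
  cl (1 - 3 * t) • ((Xc γ (tDiv r D.l) D.i1 - Xc γ (tDiv r D.l) D.j1) -
    (Xc γ (tDiv r D.l) D.i - Xc γ (tDiv r D.l) D.j)) +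
  cl (3 * t - 2) • ((Xc γ (tDiv r D.l') D.i2 - Xc γ (tDiv r D.l') D.j2) -
    (Xc γ (tDiv r D.l') D.i - Xc γ (tDiv r D.l') D.j))

variable {d m n r : ℕ}

lemma hh_cont (D : ClassData r (m + n)) (γ : FibredPaths (fadellNeuwirth d m n)) :
    Continuous (hh D γ) := by
  unfold hh
  have h1 := cl_cont
  have hp : Continuous (fun t : ℝ => Set.projIcc (0 : ℝ) 1 zero_le_one
      ((1 - cl (3 * t - 1)) * (tDiv r D.l : ℝ) + cl (3 * t - 1) * (tDiv r D.l' : ℝ))) := by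
    apply continuous_projIcc.comp
    fun_prop
  have hi := (Xc_cont γ D.i).comp hp
  have hj := (Xc_cont γ D.j).comp hp
  simp only [Function.comp_def] at hi hj
  have h2 : Continuous (fun t : ℝ => cl (1 - 3 * t)) := by fun_prop
  have h3 : Continuous (fun t : ℝ => cl (3 * t - 2)) := by fun_prop
  exact ((hi.sub hj).add (h2.smul continuous_const)).add (h3.smul continuous_const)

lemma hh_lip (D : ClassData r (m + n)) (γ γ' : FibredPaths (fadellNeuwirth d m n)) (t : ℝ) :
    ‖hh D γ t - hh D γ' t‖ ≤ 10 * dist γ γ' := by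
  have hd : ∀ s i j, ‖(Xc γ s i - Xc γ s j) - (Xc γ' s i - Xc γ' s j)‖ ≤ 2 * dist γ γ' := by
    intro s i j
    have h1 := Xc_lip γ γ' s i
    have h2 := Xc_lip γ γ' s j
    rw [sub_sub_sub_comm]
    refine (norm_sub_le _ _).trans ?_
    linarith
  have hd2 : ∀ (c : ℝ) s i j i' j', 0 ≤ c → c ≤ 1 →
      ‖c • ((Xc γ s i - Xc γ s j) - (Xc γ s i' - Xc γ s j')) -
        c • ((Xc γ' s i - Xc γ' s j) - (Xc γ' s i' - Xc γ' s j'))‖ ≤ 4 * dist γ γ' := by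
    intro c s i j i' j' h0 h1
    rw [← smul_sub, norm_smul, Real.norm_of_nonneg h0]
    have h3 := hd s i j
    have h4 := hd s i' j'
    rw [sub_sub_sub_comm]
    have h5 := norm_sub_le ((Xc γ s i - Xc γ s j) - (Xc γ' s i - Xc γ' s j))
      ((Xc γ s i' - Xc γ s j') - (Xc γ' s i' - Xc γ' s j'))
    refine (mul_le_of_le_one_left (norm_nonneg _) h1).trans ?_
    linarith
  unfold hh
  rw [add_sub_add_comm, add_sub_add_comm]
  refine (norm_add_le _ _).trans ?_
  have a1 := hd2 (cl (3 * t - 2)) (tDiv r D.l') D.i2 D.j2 D.i D.j (cl_nonneg _) (cl_le_one _)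
  have a2 := hd2 (cl (1 - 3 * t)) (tDiv r D.l) D.i1 D.j1 D.i D.j (cl_nonneg _) (cl_le_one _)
  refine (add_le_add (norm_add_le _ _) le_rfl).trans ?_
  have a3 := hd (Set.projIcc 0 1 zero_le_one
      ((1 - cl (3 * t - 1)) * (tDiv r D.l : ℝ) + cl (3 * t - 1) * (tDiv r D.l' : ℝ))) D.i D.j
  linarith

lemma hh_first (D : ClassData r (m + n)) (γ : FibredPaths (fadellNeuwirth d m n)) (t : ℝ)
    (ht : t ≤ 1 / 3) : hh D γ t = (Xc γ (tDiv r D.l) D.i1 - Xc γ (tDiv r D.l) D.j1) +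
      (1 - cl (1 - 3 * t)) • ((Xc γ (tDiv r D.l) D.i - Xc γ (tDiv r D.l) D.j) -
        (Xc γ (tDiv r D.l) D.i1 - Xc γ (tDiv r D.l) D.j1)) := by
  unfold hh
  rw [cl_of_le (show 3 * t - 1 ≤ 0 by linarith), cl_of_le (show 3 * t - 2 ≤ 0 by linarith)]
  simp only [sub_zero, one_mul, zero_mul, add_zero, Set.projIcc_val, zero_smul]
  module

lemma hh_last (D : ClassData r (m + n)) (γ : FibredPaths (fadellNeuwirth d m n)) (t : ℝ)
    (ht : 2 / 3 ≤ t) : hh D γ t = (Xc γ (tDiv r D.l') D.i2 - Xc γ (tDiv r D.l') D.j2) +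
      (1 - cl (3 * t - 2)) • ((Xc γ (tDiv r D.l') D.i - Xc γ (tDiv r D.l') D.j) -
        (Xc γ (tDiv r D.l') D.i2 - Xc γ (tDiv r D.l') D.j2)) := by
  unfold hh
  rw [cl_of_ge (show 1 ≤ 3 * t - 1 by linarith), cl_of_le (show 1 - 3 * t ≤ 0 by linarith)]
  simp only [sub_self, one_mul, zero_mul, add_zero, zero_add, Set.projIcc_val, zero_smul]
  module

lemma hh_zero (D : ClassData r (m + n)) (γ : FibredPaths (fadellNeuwirth d m n)) :
    hh D γ 0 = Xc γ (tDiv r D.l) D.i1 - Xc γ (tDiv r D.l) D.j1 := by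
  rw [hh_first D γ 0 (by norm_num), cl_of_ge (by norm_num)]
  simp

lemma hh_one (D : ClassData r (m + n)) (γ : FibredPaths (fadellNeuwirth d m n)) :
    hh D γ 1 = Xc γ (tDiv r D.l') D.i2 - Xc γ (tDiv r D.l') D.j2 := by
  rw [hh_last D γ 1 (by norm_num), cl_of_ge (by norm_num)]
  simp

lemma ne_zero_of_err {d : ℕ} (c e : Fin d → ℝ) (s : ℝ) (hs0 : 0 ≤ s) (hs1 : s ≤ 1) (h : ‖e‖ < ‖c‖) :
    c + s • e ≠ 0 := by
  intro h0
  have : c = -(s • e) := eq_neg_of_add_eq_zero_left h0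
  have h1 : ‖c‖ ≤ ‖e‖ := by
    rw [this, norm_neg, norm_smul, Real.norm_of_nonneg hs0]
    exact mul_le_of_le_one_left (norm_nonneg _) hs1
  linarith

lemma hh_ne (D : ClassData r (m + n)) (γ : FibredPaths (fadellNeuwirth d m n)) (hij : D.i ≠ D.j)
    (h1 : ‖(Xc γ (tDiv r D.l) D.i - Xc γ (tDiv r D.l) D.j) -
        (Xc γ (tDiv r D.l) D.i1 - Xc γ (tDiv r D.l) D.j1)‖ <
      ‖Xc γ (tDiv r D.l) D.i1 - Xc γ (tDiv r D.l) D.j1‖)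
    (h2 : ‖(Xc γ (tDiv r D.l') D.i - Xc γ (tDiv r D.l') D.j) -
        (Xc γ (tDiv r D.l') D.i2 - Xc γ (tDiv r D.l') D.j2)‖ <
      ‖Xc γ (tDiv r D.l') D.i2 - Xc γ (tDiv r D.l') D.j2‖) (t : ℝ) : hh D γ t ≠ 0 := by
  rcases le_total t (1 / 3) with ht | ht
  · rw [hh_first D γ t ht]
    exact ne_zero_of_err _ _ _ (by linarith [cl_le_one (1 - 3 * t)])
      (by linarith [cl_nonneg (1 - 3 * t)]) h1
  · rcases le_total t (2 / 3) with ht' | ht'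
    · unfold hh
      rw [cl_of_le (show 3 * t - 2 ≤ 0 by linarith), cl_of_le (show 1 - 3 * t ≤ 0 by linarith)]
      simp only [zero_smul, add_zero]
      exact Xc_ne γ _ hij
    · rw [hh_last D γ t ht']
      exact ne_zero_of_err _ _ _ (by linarith [cl_le_one (3 * t - 2)])
        (by linarith [cl_nonneg (3 * t - 2)]) h2

end FN


namespace FN

/-- The configuration attached to a family of unit vectors. -/
noncomputable def cfg {d : ℕ} (r m n : ℕ) (V : ℕ → Fin d → ℝ) (l i : ℕ) : Fin d → ℝ :=
  if i = 0 then 0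
  else if i < m - 1 then (-((i : ℝ) + 1)) • V (i - 1)
  else if i = m - 1 then (10 * ((m : ℝ) + 10)) • V (m - 2 + r * n)
  else if l = 1 then (10 * ((m : ℝ) + 10)) • V (m - 2 + r * n) -
    (1 / ((i : ℝ) + 2)) • V (m - 2 + ((i - m) * r + 1))
  else (1 / ((i : ℝ) + 2)) • V (m - 2 + ((i - m) * r + l))

section
variable {d r m n : ℕ} (V : ℕ → Fin d → ℝ)

lemma cfg_zero (l : ℕ) : cfg r m n V l 0 = 0 := by simp [cfg]
lemma cfg_mid (l i : ℕ) (h0 : i ≠ 0) (h1 : i < m - 1) :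
    cfg r m n V l i = (-((i : ℝ) + 1)) • V (i - 1) := by simp [cfg, h0, h1]
lemma cfg_last (hm : 2 ≤ m) (l : ℕ) :
    cfg r m n V l (m - 1) = (10 * ((m : ℝ) + 10)) • V (m - 2 + r * n) := by
  have : m - 1 ≠ 0 := by omega
  simp [cfg, this]
lemma cfg_zone (hm : 2 ≤ m) (i : ℕ) (h : m ≤ i) :
    cfg r m n V 1 i = (10 * ((m : ℝ) + 10)) • V (m - 2 + r * n) -
    (1 / ((i : ℝ) + 2)) • V (m - 2 + ((i - m) * r + 1)) := by
  have h1 : i ≠ 0 := by omega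
  have h2 : ¬ i < m - 1 := by omega
  have h3 : i ≠ m - 1 := by omega
  simp [cfg, h1, h2, h3]
lemma cfg_z (hm : 2 ≤ m) (l i : ℕ) (h : m ≤ i) (hl : l ≠ 1) :
    cfg r m n V l i = (1 / ((i : ℝ) + 2)) • V (m - 2 + ((i - m) * r + l)) := by
  have h1 : i ≠ 0 := by omega
  have h2 : ¬ i < m - 1 := by omega
  have h3 : i ≠ m - 1 := by omega
  simp [cfg, h1, h2, h3, hl]

lemma norm_smul_V (hV : ∀ k, ‖V k‖ = 1) (c : ℝ) (hc : 0 ≤ c) (k : ℕ) : ‖c • V k‖ = c := by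
  rw [norm_smul, hV, mul_one, Real.norm_of_nonneg hc]

lemma cfg_mid_norm (hV : ∀ k, ‖V k‖ = 1) (l i : ℕ) (h0 : i ≠ 0) (h1 : i < m - 1) : ‖cfg r m n V l i‖ = (i : ℝ) + 1 := by
  rw [cfg_mid V l i h0 h1, neg_smul, norm_neg, norm_smul_V V hV _ (by positivity)]

lemma eps_bd (i : ℕ) : (0 : ℝ) < 1 / ((i : ℝ) + 2) ∧ 1 / ((i : ℝ) + 2) ≤ 1 / 2 := by
  constructor
  · positivity
  · apply one_div_le_one_div_of_le (by norm_num)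
    have : (0 : ℝ) ≤ i := by positivity
    linarith

lemma eps_lt {i j : ℕ} (h : i < j) : 1 / ((j : ℝ) + 2) < 1 / ((i : ℝ) + 2) := by
  apply one_div_lt_one_div_of_lt (by positivity)
  have : (i : ℝ) < j := by exact_mod_cast h
  linarith

lemma cfg_ne (hV : ∀ k, ‖V k‖ = 1) (hm : 2 ≤ m) (l i j : ℕ) (hij : i < j) : cfg r m n V l i ≠ cfg r m n V l j := by
  intro he
  have hn : ‖cfg r m n V l i‖ = ‖cfg r m n V l j‖ := by rw [he]
  have hR : ‖cfg r m n V l (m - 1)‖ = 10 * ((m : ℝ) + 10) := by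
    rw [cfg_last V hm, norm_smul_V V hV _ (by positivity)]
  have hi0 : (0 : ℝ) ≤ i := by positivity
  have hj0 : (0 : ℝ) ≤ j := by positivity
  have hm0 : (0 : ℝ) ≤ m := by positivity
  -- lower part
  have hlow : i < m - 1 → ‖cfg r m n V l i‖ < m ∧ (‖cfg r m n V l i‖ = 0 ∨ 2 ≤ ‖cfg r m n V l i‖) := by
    intro h
    by_cases h0 : i = 0
    · subst h0
      rw [cfg_zero, norm_zero]
      exact ⟨by have : (2 : ℝ) ≤ m := by exact_mod_cast hm
                linarith, Or.inl rfl⟩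
    · rw [cfg_mid_norm V hV l i h0 h]
      have h1 : ((i + 1 : ℕ) : ℝ) < m := by exact_mod_cast (by omega : i + 1 < m)
      have h2 : ((1 : ℕ) : ℝ) ≤ i := by exact_mod_cast (by omega : 1 ≤ i)
      push_cast at h1 h2
      exact ⟨h1, Or.inr (by linarith)⟩
  have hjb := eps_bd j
  have hib := eps_bd i
  rcases lt_trichotomy j (m - 1) with hj | hj | hj
  · rw [cfg_mid_norm V hV l j (by omega) hj] at hn
    by_cases h0 : i = 0
    · subst h0
      rw [cfg_zero, norm_zero] at hn
      linarith
    · rw [cfg_mid_norm V hV l i h0 (by omega)] at hn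
      have : (i : ℝ) < j := by exact_mod_cast hij
      linarith
  · have := (hlow (by omega)).1
    rw [hj, hR] at hn
    linarith
  · by_cases hl : l = 1
    · subst hl
      rcases lt_trichotomy i (m - 1) with hi | hi | hi
      · have h1 := (hlow hi).1
        rw [cfg_zone V hm j (by omega)] at hn
        have h2 := norm_sub_norm_le ((10 * ((m : ℝ) + 10)) • V (m - 2 + r * n))
          ((1 / ((j : ℝ) + 2)) • V (m - 2 + ((j - m) * r + 1)))
        rw [norm_smul_V V hV _ (by positivity), norm_smul_V V hV _ (by positivity)] at h2
        linarith
      · rw [hi, cfg_last V hm, cfg_zone V hm j (by omega)] at he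
        have h3 := sub_eq_self.1 he.symm
        have h4 := norm_smul_V V hV _ hjb.1.le (m - 2 + ((j - m) * r + 1))
        rw [h3, norm_zero] at h4
        linarith
      · rw [cfg_zone V hm i (by omega), cfg_zone V hm j (by omega)] at he
        have h3 := sub_right_injective he
        have h4 := norm_smul_V V hV _ hjb.1.le (m - 2 + ((j - m) * r + 1))
        have h5 := norm_smul_V V hV _ hib.1.le (m - 2 + ((i - m) * r + 1))
        have h6 := eps_lt hij
        beta_reduce at h3
        rw [h3] at h5
        linarith
    · have hz : ∀ a, m - 1 < a → ‖cfg r m n V l a‖ = 1 / ((a : ℝ) + 2) := by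
        intro a ha
        rw [cfg_z V hm l a (by omega) hl, norm_smul_V V hV _ (by positivity)]
      rw [hz j hj] at hn
      rcases lt_trichotomy i (m - 1) with hi | hi | hi
      · have h1 := (hlow hi).2
        rcases h1 with h1 | h1 <;> linarith
      · rw [hi, hR] at hn; linarith
      · rw [hz i hi] at hn
        have h6 := eps_lt hij
        linarith

end

lemma class_exists {d : ℕ} (r m n : ℕ) (hr : 2 ≤ r) (hm : 2 ≤ m) (hn : 1 ≤ n) (k : ℕ)
    (hk : k < m - 2 + r * n) : ∃ D : ClassData r (m + n), D.i ≠ D.j ∧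
    ∀ V : ℕ → Fin d → ℝ, (∀ k, ‖V k‖ = 1) →
      ‖(cfg r m n V D.l D.i - cfg r m n V D.l D.j) - (cfg r m n V D.l D.i1 - cfg r m n V D.l D.j1)‖ <
        ‖cfg r m n V D.l D.i1 - cfg r m n V D.l D.j1‖ ∧
      ‖(cfg r m n V D.l' D.i - cfg r m n V D.l' D.j) -
        (cfg r m n V D.l' D.i2 - cfg r m n V D.l' D.j2)‖ <
        ‖cfg r m n V D.l' D.i2 - cfg r m n V D.l' D.j2‖ ∧
      (∃ c : ℝ, 0 < c ∧ cfg r m n V D.l D.i1 - cfg r m n V D.l D.j1 = c • V k) ∧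
      (∃ c : ℝ, 0 < c ∧ cfg r m n V D.l' D.i2 - cfg r m n V D.l' D.j2 = c • V (m - 2 + r * n)) := by
  have hm0 : (2 : ℝ) ≤ m := by exact_mod_cast hm
  by_cases hmid : k < m - 2
  · refine ⟨⟨⟨m, by omega⟩, ⟨k + 1, by omega⟩, ⟨0, by omega⟩, ⟨k + 1, by omega⟩, ⟨m - 1, by omega⟩,
      ⟨0, by omega⟩, ⟨0, by omega⟩, ⟨1, by omega⟩⟩, ?_, ?_⟩
    · simp only [ne_eq, Fin.mk.injEq]; omega
    intro V hV
    dsimp only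
    rw [cfg_z V hm 0 m le_rfl (by omega), cfg_mid V 0 (k + 1) (by omega) (by omega), cfg_zero,
      cfg_zone V hm m le_rfl, cfg_mid V 1 (k + 1) (by omega) (by omega), cfg_last V hm, cfg_zero]
    have hb := eps_bd m
    have hk1 : ((k + 1 : ℕ) : ℝ) + 1 < m := by exact_mod_cast (by omega : k + 1 + 1 < m)
    have hk2 : (0 : ℝ) ≤ (k + 1 : ℕ) := by positivity
    refine ⟨?_, ?_, ⟨((k + 1 : ℕ) : ℝ) + 1, by positivity, ?_⟩, ⟨10 * ((m : ℝ) + 10), by positivity, ?_⟩⟩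
    · rw [sub_sub_sub_cancel_right, sub_zero, zero_sub, neg_smul, neg_neg,
        norm_smul_V V hV _ hb.1.le, norm_smul_V V hV _ (by positivity)]
      linarith
    · rw [sub_zero, neg_smul, sub_neg_eq_add, norm_smul_V V hV _ (by positivity)]
      rw [show ∀ A B C : Fin d → ℝ, A - B + C - A = C - B by intros; abel]
      refine (norm_sub_le _ _).trans_lt ?_
      rw [norm_smul_V V hV _ (by positivity), norm_smul_V V hV _ hb.1.le]
      linarith
    · rw [zero_sub, neg_smul, neg_neg]; rfl
    · rw [sub_zero]
  · obtain ⟨k', rfl⟩ : ∃ k', k = m - 2 + k' := ⟨k - (m - 2), by omega⟩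
    have hk' : k' < r * n := by omega
    have hr0 : 0 < r := by omega
    have hj : k' / r < n := Nat.div_lt_of_lt_mul hk'
    have hl : k' % r < r := Nat.mod_lt _ hr0
    have hdm : k' / r * r + k' % r = k' := by rw [mul_comm]; exact Nat.div_add_mod k' r
    generalize k' / r = J at *
    generalize k' % r = l at *
    subst hdm
    by_cases hl1 : l = 1
    · refine ⟨⟨⟨m - 1, by omega⟩, ⟨m + J, by omega⟩, ⟨m - 1, by omega⟩, ⟨m + J, by omega⟩,
        ⟨m - 1, by omega⟩, ⟨0, by omega⟩, ⟨1, by omega⟩, ⟨0, by omega⟩⟩, ?_, ?_⟩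
      · simp only [ne_eq, Fin.mk.injEq]; omega
      intro V hV
      dsimp only
      have hb := eps_bd (m + J)
      rw [cfg_last V hm, cfg_last V hm, cfg_zone V hm _ (by omega), cfg_zero,
        cfg_z V hm 0 (m + J) (by omega) (by omega), sub_sub_cancel, sub_self, norm_zero,
        norm_smul_V V hV _ hb.1.le, sub_zero]
      rw [Nat.add_sub_cancel_left, hl1]
      refine ⟨hb.1, ?_, ⟨_, hb.1, rfl⟩, ⟨_, by positivity, rfl⟩⟩
      rw [sub_sub_cancel_left, norm_neg, norm_smul_V V hV _ hb.1.le, norm_smul_V V hV _ (by positivity)]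
      linarith
    · refine ⟨⟨⟨m + J, by omega⟩, ⟨0, by omega⟩, ⟨m + J, by omega⟩, ⟨0, by omega⟩,
        ⟨m - 1, by omega⟩, ⟨0, by omega⟩, ⟨l, hl⟩, ⟨1, by omega⟩⟩, ?_, ?_⟩
      · simp only [ne_eq, Fin.mk.injEq]; omega
      intro V hV
      dsimp only
      have hb := eps_bd (m + J)
      rw [cfg_last V hm, cfg_zone V hm _ (by omega), cfg_zero, cfg_zero,
        cfg_z V hm l (m + J) (by omega) hl1, sub_self, norm_zero]
      simp only [sub_zero]
      rw [norm_smul_V V hV _ hb.1.le]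
      rw [Nat.add_sub_cancel_left]
      refine ⟨hb.1, ?_, ⟨_, hb.1, rfl⟩, ⟨_, by positivity, rfl⟩⟩
      rw [sub_sub_cancel_left, norm_neg, norm_smul_V V hV _ hb.1.le, norm_smul_V V hV _ (by positivity)]
      linarith

end FN


namespace FN

lemma cvec_cont (q : ℕ) : Continuous (cvec (q := q)) := by
  unfold cvec
  refine continuous_pi fun i => ?_
  refine Fin.lastCases ?_ (fun j => ?_) i
  · simp only [Fin.snoc_last]
    fun_prop
  · simp only [Fin.snoc_castSucc]
    fun_prop

/-- Normalised vector. -/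
noncomputable def nv {q : ℕ} (z : Fin q → Circle) : Fin (q + 1) → ℝ := ‖cvec z‖⁻¹ • cvec z

lemma nv_cont (q : ℕ) : Continuous (nv (q := q)) := by
  unfold nv
  exact ((cvec_cont q).norm.inv₀ fun z => norm_ne_zero_iff.2 (cvec_ne_zero z)).smul (cvec_cont q)

lemma nv_norm {q : ℕ} (z : Fin q → Circle) : ‖nv z‖ = 1 := by
  unfold nv
  rw [norm_smul, norm_inv, norm_norm, inv_mul_cancel₀ (norm_ne_zero_iff.2 (cvec_ne_zero z))]

lemma lab_nv {q : ℕ} (z : Fin q → Circle) : lab (nv z) = lab (cvec z) :=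
  lab_smul (cvec z) _ (inv_pos.2 (norm_pos_iff.2 (cvec_ne_zero z)))

/-- The family of unit vectors attached to a point of the torus. -/
noncomputable def VV (q N : ℕ) (x : Fin N → Fin q → Circle) (k : ℕ) : Fin (q + 1) → ℝ :=
  if h : k < N then nv (x ⟨k, h⟩) else nv (fun _ => 1)

lemma VV_cont (q N k : ℕ) : Continuous (fun x => VV q N x k) := by
  unfold VV
  split_ifs with h
  · exact (nv_cont q).comp (continuous_apply _)
  · exact continuous_const

lemma VV_norm (q N : ℕ) (x : Fin N → Fin q → Circle) (k : ℕ) : ‖VV q N x k‖ = 1 := by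
  unfold VV
  split_ifs <;> exact nv_norm _

lemma cfg_cont {d r m n : ℕ} {M : Type*} [TopologicalSpace M] (V : M → ℕ → Fin d → ℝ)
    (hV : ∀ k, Continuous (fun x => V x k)) (l i : ℕ) : Continuous (fun x => cfg r m n (V x) l i) := by
  have hc : ∀ (c : ℝ) (k : ℕ), Continuous (fun x => c • V x k) := by
    intro c k
    have := hV k
    fun_prop
  unfold cfg
  split_ifs
  · exact continuous_const
  · exact hc _ _
  · exact hc _ _
  · exact (hc _ _).sub (hc _ _)
  · exact hc _ _

lemma cfg_inj {d r m n : ℕ} (hm : 2 ≤ m) (V : ℕ → Fin d → ℝ) (hV : ∀ k, ‖V k‖ = 1) (l : ℕ) :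
    Function.Injective (fun i : Fin (m + n) => (WithLp.toLp 2 (cfg r m n V l i) :
      EuclideanSpace ℝ (Fin d))) := by
  intro i j h
  have h' : cfg r m n V l i = cfg r m n V l j := WithLp.toLp_injective 2 h
  rcases lt_trichotomy i j with hij | hij | hij
  · exact absurd h' (cfg_ne V hV hm l i j hij)
  · exact hij
  · exact absurd h'.symm (cfg_ne V hV hm l j i hij)

/-- The torus of configurations. -/
noncomputable def cfgMap (q r m n N : ℕ) (hm : 2 ≤ m) (x : Fin N → Fin q → Circle) :
    FibredProd (fadellNeuwirth (q + 1) m n) r :=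
  ⟨fun l => ⟨fun i => WithLp.toLp 2 (cfg r m n (VV q N x) l i), cfg_inj hm _ (VV_norm q N x) l⟩, by
    intro l l'
    apply Subtype.ext
    funext i
    change WithLp.toLp 2 (cfg r m n (VV q N x) l i) = WithLp.toLp 2 (cfg r m n (VV q N x) l' i)
    congr 1
    have hi := i.2
    unfold cfg
    have : (i : ℕ) = 0 ∨ (i : ℕ) < m - 1 ∨ (i : ℕ) = m - 1 := by omega
    rcases this with h | h | h
    · simp [h]
    · simp [h]
    · have h0 : m - 1 ≠ 0 := by omega
      simp [h, h0]⟩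

lemma cfgMap_cont (q r m n N : ℕ) (hm : 2 ≤ m) : Continuous (cfgMap q r m n N hm) := by
  refine Continuous.subtype_mk ?_ _
  refine continuous_pi fun l => ?_
  refine Continuous.subtype_mk (continuous_pi fun i => ?_) _
  exact (PiLp.continuous_toLp 2 (fun _ : Fin (q + 1) => ℝ)).comp
    (cfg_cont (fun x => VV q N x) (VV_cont q N) l i)

/-- There is a section of measures with at most `N` atoms. -/
def DSec {E : Type*} {B : Type*} [MetricSpace E] [TopologicalSpace B] (p : E → B) (N : ℕ) : Prop :=
  letI : MeasurableSpace E := borel E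
  haveI : BorelSpace E := ⟨rfl⟩
  ∃ s : B → LevyProkhorov (ProbabilityMeasure E), Continuous s ∧
      ∀ b : B, ∃ S : Finset E, S.card ≤ N ∧ (↑S : Set E) ⊆ p ⁻¹' {b} ∧
        (s b).toMeasure (↑S : Set E) = 1

theorem main_vanish_sec {P B : Type*} [MetricSpace P] [TopologicalSpace B] (p : P → B)
    (q N : ℕ) (hq : 1 ≤ q) (hN : 1 ≤ N) (hsec : DSec p N)
    (f : (Fin N → Fin q → Circle) → B) (hf : Continuous f)
    (h : ℕ → P → ℝ → (Fin (q + 1) → ℝ)) (C : ℝ) (hC : 0 < C)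
    (hL : ∀ k < N, ∀ γ γ' t, ‖h k γ t - h k γ' t‖ ≤ C * dist γ γ')
    (hc : ∀ k < N, ∀ γ, Continuous (h k γ))
    (hne : ∀ k < N, ∀ x, ∀ γ ∈ p ⁻¹' {f x}, ∀ t ∈ Icc (0 : ℝ) 1, h k γ t ≠ 0)
    (a b : ℕ → (Fin N → Fin q → Circle) → (Fin (q + 1) → ℝ))
    (ha : ∀ k < N, Continuous (a k)) (hb : ∀ k < N, Continuous (b k))
    (ha0 : ∀ k < N, ∀ x, a k x ≠ 0) (hb0 : ∀ k < N, ∀ x, b k x ≠ 0)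
    (hla : ∀ k < N, ∀ x, ∀ γ ∈ p ⁻¹' {f x}, lab (h k γ 0) = lab (a k x))
    (hlb : ∀ k < N, ∀ x, ∀ γ ∈ p ⁻¹' {f x}, lab (h k γ 1) = lab (b k x)) :
    ∃ L0 : ℕ, ∀ L ≥ L0, ∀ _ : NeZero L,
      kint (cupProd q N (fun k (ξ : ℕ → (Fin (N * q) → ZMod L)) =>
        omg q (fun n => lab (a k (grid q N L (ξ n)))) -
          omg q (fun n => lab (b k (grid q N L (ξ n)))))) = 0 := by
  letI : MeasurableSpace P := borel P
  haveI : BorelSpace P := ⟨rfl⟩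
  obtain ⟨s, hs, hS⟩ := hsec
  refine main_vanish q N hq hN (fun x => s (f x)) (hs.comp hf) (fun x => p ⁻¹' {f x}) ?_
    h C hC hL hc hne a b ha hb ha0 hb0 hla hlb
  intro x
  obtain ⟨S, h1, h2, h3⟩ := hS (f x)
  refine ⟨S, h1, fun γ hγ => h2 hγ, ?_⟩
  have h4 := congrArg (fun z : NNReal => (z : ℝ)) h3
  exact h4

lemma vanish_of_section (q r m n N : ℕ) (hq : 1 ≤ q) (hr : 2 ≤ r) (hm : 2 ≤ m) (hn : 1 ≤ n)
    (hN : 1 ≤ N) (hsec : DSec (parmEval (fadellNeuwirth (q + 1) m n) r) N) :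
    ∃ L0 : ℕ, ∀ L ≥ L0, ∀ _ : NeZero L,
      kint (cupProd q N (fun k (ξ : ℕ → (Fin (N * q) → ZMod L)) =>
        omg q (fun j => lab (VV q N (grid q N L (ξ j)) (if k < m - 2 + r * n then k else 0))) -
          omg q (fun j => lab (VV q N (grid q N L (ξ j)) (m - 2 + r * n))))) = 0 := by
  classical
  have hrn : 0 < r * n := Nat.mul_pos (by omega) (by omega)
  have hcl : ∀ k : ℕ, (if k < m - 2 + r * n then k else 0) < m - 2 + r * n := by
    intro k; split_ifs <;> omega
  choose D hD1 hD2 using fun k : ℕ => class_exists (d := q + 1) r m n hr hm hn _ (hcl k)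
  have hX : ∀ x, ∀ γ ∈ parmEval (fadellNeuwirth (q + 1) m n) r ⁻¹' {cfgMap q r m n N hm x},
      ∀ (l : Fin r) (i : Fin (m + n)), Xc γ (tDiv r l) i = cfg r m n (VV q N x) l i := by
    intro x γ hγ l i
    have h1 : parmEval (fadellNeuwirth (q + 1) m n) r γ = cfgMap q r m n N hm x := hγ
    have h2 := congrFun (congrArg Subtype.val h1) l
    have h3 := congrFun (congrArg Subtype.val h2) i
    have h4 := congrArg WithLp.ofLp h3
    exact h4
  refine main_vanish_sec (parmEval (fadellNeuwirth (q + 1) m n) r) q N hq hN hsec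
    (cfgMap q r m n N hm) (cfgMap_cont q r m n N hm)
    (fun k => hh (D k)) 10 (by norm_num) (fun k _ => hh_lip (D k)) (fun k _ => hh_cont (D k)) ?_
    (fun k x => VV q N x (if k < m - 2 + r * n then k else 0)) (fun k x => VV q N x (m - 2 + r * n))
    (fun k _ => VV_cont q N _) (fun k _ => VV_cont q N _) ?_ ?_ ?_ ?_
  · intro k _ x γ hγ t _
    obtain ⟨h1, h2, -, -⟩ := hD2 k (VV q N x) (VV_norm q N x)
    apply hh_ne (D k) γ (hD1 k)
    · simp only [hX x γ hγ]; exact h1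
    · simp only [hX x γ hγ]; exact h2
  · intro k _ x h0
    have := VV_norm q N x (if k < m - 2 + r * n then k else 0)
    beta_reduce at h0
    rw [h0, norm_zero] at this
    exact zero_ne_one this
  · intro k _ x h0
    have := VV_norm q N x (m - 2 + r * n)
    beta_reduce at h0
    rw [h0, norm_zero] at this
    exact zero_ne_one this
  · intro k _ x γ hγ
    obtain ⟨-, -, ⟨c, hc, h3⟩, -⟩ := hD2 k (VV q N x) (VV_norm q N x)
    rw [hh_zero, hX x γ hγ, hX x γ hγ, h3]
    exact lab_smul _ c hc
  · intro k _ x γ hγ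
    obtain ⟨-, -, -, ⟨c, hc, h3⟩⟩ := hD2 k (VV q N x) (VV_norm q N x)
    rw [hh_one, hX x γ hγ, hX x γ hγ, h3]
    exact lab_smul _ c hc

lemma lab_VV (q N L : ℕ) [NeZero L] (x : Fin (N * q) → ZMod L) (k : Fin N) :
    lab (VV q N (grid q N L x) k) = Lam q L (blk k x) := by
  unfold VV
  rw [dif_pos k.2, lab_nv]
  rfl

theorem no_section_even (q r m n : ℕ) (hq : 1 ≤ q) (hr : 2 ≤ r) (hm : 2 ≤ m) (hn : 1 ≤ n) :
    ¬ DSec (parmEval (fadellNeuwirth (q + 1) m n) r) (m - 2 + r * n) := by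
  intro hS
  have hrn : 0 < r * n := Nat.mul_pos (by omega) (by omega)
  set N := m - 2 + r * n with hNdef
  have hN : 1 ≤ N := by omega
  obtain ⟨L0, hL0⟩ := vanish_of_section q r m n N hq hr hm hn hN hS
  set L := max L0 (5 * q + 5) with hL
  have hnz : NeZero L := ⟨by have := le_max_right L0 (5 * q + 5); omega⟩
  have h0 := hL0 L (le_max_left _ _) hnz
  have h1 := kint_selCup_id (goodLab q L (le_max_right _ _))
    (fun k : ℕ => if h : k < N then (⟨k, h⟩ : Fin N) else ⟨0, hN⟩) (fun k => by simp)
  have e : cupProd q N (fun k (ξ : ℕ → (Fin (N * q) → ZMod L)) =>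
        omg q (fun j => lab (VV q N (grid q N L (ξ j)) (if k < m - 2 + r * n then k else 0))) -
          omg q (fun j => lab (VV q N (grid q N L (ξ j)) (m - 2 + r * n)))) =
      selCup q (Lam q L) (fun k : ℕ => if h : k < N then (⟨k, h⟩ : Fin N) else ⟨0, hN⟩) := by
    funext ξ
    unfold selCup cupProd
    refine Finset.prod_congr rfl fun k hk => ?_
    have hk' := Finset.mem_range.1 hk
    have e2 : omg q (fun j => lab (VV q N (grid q N L (ξ (j + k * q))) (m - 2 + r * n))) = 0 := by
      apply omg_eq_zero_of_eq q _ (Nat.zero_le q) hq (by norm_num)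
      simp [VV, hNdef]
    beta_reduce
    rw [e2, sub_zero, dif_pos hk']
    congr 1
    funext j
    rw [if_pos hk']
    exact lab_VV q N L _ ⟨k, hk'⟩
  rw [e, h1] at h0
  exact one_ne_zero h0

theorem no_section_odd (q r m n : ℕ) (hq : 1 ≤ q) (hqe : Even q) (hr : 2 ≤ r) (hm : 2 ≤ m) (hn : 1 ≤ n) :
    ¬ DSec (parmEval (fadellNeuwirth (q + 1) m n) r) (m - 2 + r * n + 1) := by
  intro hS
  have hrn : 0 < r * n := Nat.mul_pos (by omega) (by omega)
  set N := m - 2 + r * n + 1 with hNdef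
  have hN : 2 ≤ N := by omega
  obtain ⟨L0, hL0⟩ := vanish_of_section q r m n N hq hr hm hn (by omega) hS
  set L := max L0 (5 * q + 5) with hL
  have hnz : NeZero L := ⟨by have := le_max_right L0 (5 * q + 5); omega⟩
  have h0 := hL0 L (le_max_left _ _) hnz
  have h1 := kint_odd hqe hq hN (goodLab q L (le_max_right _ _))
    (fun k : ℕ => if h : k < N - 1 then (⟨k, by omega⟩ : Fin N) else ⟨0, by omega⟩)
    (fun k => by split_ifs <;> rfl)
  have e : cupProd q N (fun k (ξ : ℕ → (Fin (N * q) → ZMod L)) =>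
        omg q (fun j => lab (VV q N (grid q N L (ξ j)) (if k < m - 2 + r * n then k else 0))) -
          omg q (fun j => lab (VV q N (grid q N L (ξ j)) (m - 2 + r * n)))) =
      cupProd q N (fun k (ξ : ℕ → (Fin (N * q) → ZMod L)) =>
        omg q (fun j => Lam q L (blk (if h : k < N - 1 then (⟨k, by omega⟩ : Fin N) else
          ⟨0, by omega⟩) (ξ j))) -
        omg q (fun j => Lam q L (blk (⟨N - 1, by omega⟩ : Fin N) (ξ j)))) := by
    congr 1
    funext k ξ
    have e2 : ∀ x, lab (VV q N (grid q N L x) (m - 2 + r * n)) =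
        Lam q L (blk (⟨N - 1, by omega⟩ : Fin N) x) := fun x =>
      lab_VV q N L x ⟨N - 1, by omega⟩
    simp only [e2]
    congr 2
    funext j
    rw [← lab_VV]
    congr 2
    by_cases hk : k < m - 2 + r * n
    · rw [if_pos hk, dif_pos (by omega)]
    · rw [if_neg hk, dif_neg (by omega)]
  rw [e, h1] at h0
  norm_num at h0

end FN


namespace FN

open Classical in
/-- A finite open cover with partial sections yields a section by measures. -/
theorem DSec_of_cover {E B : Type*} [MetricSpace E] [TopologicalSpace.SeparableSpace E]
    [TopologicalSpace B]
    [NormalSpace B] (p : E → B) (k : ℕ) (U : Fin (k + 1) → Set B) (hU : ∀ i, IsOpen (U i))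
    (hcov : (⋃ i, U i) = Set.univ)
    (hs : ∀ i, ∃ s : U i → E, Continuous s ∧ ∀ x : U i, p (s x) = (x : B)) :
    DSec p (k + 1) := by
  letI : MeasurableSpace E := borel E
  haveI : BorelSpace E := ⟨rfl⟩
  rcases isEmpty_or_nonempty B with hB | hB
  · exact ⟨fun b => (hB.false b).elim, continuous_of_const fun b => (hB.false b).elim,
      fun b => (hB.false b).elim⟩
  choose s hsc hsp using hs
  obtain ⟨b0⟩ := hB
  have hE : Nonempty E := by
    have : b0 ∈ ⋃ i, U i := by rw [hcov]; trivial
    obtain ⟨i, hi⟩ := Set.mem_iUnion.1 this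
    exact ⟨s i ⟨b0, hi⟩⟩
  obtain ⟨e0⟩ := hE
  obtain ⟨f, hf⟩ := PartitionOfUnity.exists_isSubordinate_of_locallyFinite (s := Set.univ)
    isClosed_univ U hU (locallyFinite_of_finite _) (by rw [hcov])
  let t : Fin (k + 1) → B → E := fun i b => if h : b ∈ U i then s i ⟨b, h⟩ else e0
  have htc : ∀ i, ContinuousOn (t i) (U i) := by
    intro i
    rw [continuousOn_iff_continuous_restrict]
    convert hsc i using 1
    funext x
    simp [t]
  have hU0 : ∀ i b, f i b ≠ 0 → b ∈ U i := fun i b h => hf i (subset_tsupport _ h)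
  have htp : ∀ i b, f i b ≠ 0 → p (t i b) = b := by
    intro i b h
    simp only [t, dif_pos (hU0 i b h)]
    exact hsp i _
  have hsum : ∀ b, ∑ i, f i b = 1 := by
    intro b
    rw [← finsum_eq_sum_of_fintype]
    exact f.sum_eq_one (Set.mem_univ b)
  let μ : B → Measure E := fun b => ∑ i, ENNReal.ofReal (f i b) • Measure.dirac (t i b)
  have hμ1 : ∀ b, IsProbabilityMeasure (μ b) := by
    intro b
    constructor
    simp only [μ, Measure.coe_finset_sum, Finset.sum_apply, Measure.smul_apply, measure_univ,
      smul_eq_mul, mul_one]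
    rw [← ENNReal.ofReal_sum_of_nonneg (fun i _ => f.nonneg i b), hsum, ENNReal.ofReal_one]
  let P : B → ProbabilityMeasure E := fun b => ⟨μ b, hμ1 b⟩
  have hintegral : ∀ (g : BoundedContinuousFunction E ℝ) (b : B),
      ∫ w, g w ∂(μ b) = ∑ i, f i b * g (t i b) := by
    intro g b
    simp only [μ]
    rw [integral_finset_sum_measure]
    · refine Finset.sum_congr rfl fun i _ => ?_
      rw [integral_smul_measure, integral_dirac, ENNReal.toReal_ofReal (f.nonneg i b), smul_eq_mul]
    · intro i _
      exact (g.integrable _).smul_measure ENNReal.ofReal_ne_top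
  have hPc : Continuous P := by
    rw [continuous_iff_continuousAt]
    intro b
    unfold ContinuousAt
    rw [ProbabilityMeasure.tendsto_iff_forall_integral_tendsto]
    intro g
    change Filter.Tendsto (fun c => ∫ w, g w ∂(μ c)) _ (nhds (∫ w, g w ∂(μ b)))
    simp only [hintegral]
    refine tendsto_finset_sum _ fun i _ => ?_
    by_cases hb : b ∈ tsupport (f i)
    · have h1 : ContinuousAt (t i) b := (htc i).continuousAt ((hU i).mem_nhds (hf i hb))
      exact ((f i).continuous.continuousAt.mul (g.continuous.continuousAt.comp h1))
    · have : (fun c => f i c * g (t i c)) =ᶠ[nhds b] fun _ => 0 := by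
        filter_upwards [(isClosed_tsupport (f i)).isOpen_compl.mem_nhds hb] with c hc
        rw [image_eq_zero_of_notMem_tsupport hc, zero_mul]
      rw [image_eq_zero_of_notMem_tsupport hb, zero_mul]
      exact tendsto_const_nhds.congr' this.symm
  refine ⟨fun b => LevyProkhorov.ofMeasure (P b),
    LevyProkhorov.probabilityMeasureHomeomorph.continuous.comp hPc, fun b => ?_⟩
  refine ⟨(Finset.univ.filter fun i => f i b ≠ 0).image fun i => t i b, ?_, ?_, ?_⟩
  · refine Finset.card_image_le.trans ((Finset.card_le_univ _).trans ?_)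
    simp
  · intro w hw
    simp only [Finset.coe_image, Set.mem_image, Finset.mem_coe, Finset.mem_filter,
      Finset.mem_univ, true_and] at hw
    obtain ⟨i, hi, rfl⟩ := hw
    exact htp i b hi
  · set S := (Finset.univ.filter fun i => f i b ≠ 0).image fun i => t i b with hS
    have h1 : μ b (↑S : Set E) = 1 := by
      simp only [μ, Measure.coe_finset_sum, Finset.sum_apply, Measure.smul_apply, smul_eq_mul]
      rw [← ENNReal.ofReal_one, ← hsum b, ENNReal.ofReal_sum_of_nonneg (fun i _ => f.nonneg i b)]
      refine Finset.sum_congr rfl fun i _ => ?_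
      by_cases h : f i b = 0
      · simp [h]
      · have : t i b ∈ (↑S : Set E) := by
          rw [Finset.mem_coe, hS, Finset.mem_image]
          exact ⟨i, by simp [h], rfl⟩
        rw [Measure.dirac_apply_of_mem this, mul_one]
    change ((P b) : ProbabilityMeasure E) (↑S : Set E) = 1
    have h2 : ((P b : Measure E)) (↑S : Set E) = 1 := h1
    rw [← ProbabilityMeasure.ennreal_coeFn_eq_coeFn_toMeasure] at h2
    exact_mod_cast h2

instance secondCountableConf (d k : ℕ) : SecondCountableTopology (Conf d k) :=
  inferInstanceAs (SecondCountableTopology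
    {x : Fin k → EuclideanSpace ℝ (Fin d) // Function.Injective x})

theorem dTC_le_TC (r m d n : ℕ) :
    dTCfib (fadellNeuwirth d m n) r ≤ TCfib (fadellNeuwirth d m n) r := by
  have i1 : @SecondCountableTopology (FibredPaths (fadellNeuwirth d m n))
      UniformSpace.toTopologicalSpace :=
    inferInstanceAs (SecondCountableTopology
      {γ : C(I, Conf d (m+n)) // ∃ b : Conf d m, ∀ t : I, fadellNeuwirth d m n (γ t) = b})
  have i2 : NormalSpace (FibredProd (fadellNeuwirth d m n) r) :=
    inferInstanceAs (NormalSpace {x : Fin r → Conf d (m+n) //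
      ∀ i j, fadellNeuwirth d m n (x i) = fadellNeuwirth d m n (x j)})
  have i3 : @TopologicalSpace.SeparableSpace (FibredPaths (fadellNeuwirth d m n))
      UniformSpace.toTopologicalSpace := inferInstance
  refine le_sInf ?_
  rintro _ ⟨k, rfl, U, hU, hcov, hs⟩
  refine sInf_le ⟨k, rfl, ?_⟩
  exact DSec_of_cover (parmEval (fadellNeuwirth d m n) r) k U hU hcov hs

theorem le_dTC {E B : Type*} [MetricSpace E] [TopologicalSpace B] (p : E → B) (N : ℕ)
    (h : ¬ DSec p N) : (N : ℕ∞) ≤ dsecat p := by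
  refine le_sInf ?_
  rintro _ ⟨k, rfl, hk⟩
  by_contra hlt
  have hlt' : k < N := by exact_mod_cast not_le.1 hlt
  apply h
  obtain ⟨s, hs, hb⟩ := hk
  refine ⟨s, hs, fun b => ?_⟩
  obtain ⟨S, h1, h2, h3⟩ := hb b
  exact ⟨S, by omega, h2, h3⟩

end FN


namespace FN

lemma exists_gap (w : ℕ → ℝ) (hw : Monotone w) (a b T : ℕ) (hab : a ≤ b) (hT : b - a < T) (s : ℝ)
    (hs : 0 < s) (h : s ≤ w b - w a) :
    ∃ k, a ≤ k ∧ k < b ∧ s / T ≤ w (k + 1) - w k ∧ w (k + 1) - w k ≤ w b - w a := by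
  by_contra hc
  push Not at hc
  have hTpos : (0 : ℝ) < T := by exact_mod_cast (by omega : 0 < T)
  have h1 : ∀ k, a ≤ k → k < b → w (k + 1) - w k ≤ s / T := by
    intro k hk hkb
    by_contra hlt
    have := hc k hk hkb (not_le.1 hlt).le
    have h2 : w (k + 1) ≤ w b := hw (by omega)
    have h3 : w a ≤ w k := hw hk
    linarith
  have h2 : ∀ e : ℕ, a + e ≤ b → w (a + e) - w a ≤ e * (s / T) := by
    intro e
    induction e with
    | zero => simp
    | succ e ih =>
      intro he
      have := ih (by omega)
      have h3 := h1 (a + e) (by omega) (by omega)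
      rw [← add_assoc]
      push_cast
      linarith
  have h3 := h2 (b - a) (by omega)
  rw [Nat.add_sub_of_le hab] at h3
  have h4 : ((b - a : ℕ) : ℝ) < T := by exact_mod_cast hT
  have h5 : ((b - a : ℕ) : ℝ) * (s / T) < T * (s / T) :=
    mul_lt_mul_of_pos_right h4 (div_pos hs hTpos)
  rw [mul_div_cancel₀ _ hTpos.ne'] at h5
  linarith

lemma pigeon {ι : Type*} [Fintype ι] (y : ι → ℝ) (K : ℕ) (s t : Fin K → ℝ) (hs : ∀ c, 0 < s c)
    (hsep : ∀ c c', c < c' → t c' < s c / Fintype.card ι)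
    (h : ∀ c, ∃ i j, s c ≤ y i - y j ∧ y i - y j ≤ t c) : K ≤ Fintype.card ι - 1 := by
  set T := Fintype.card ι with hT
  rcases Nat.eq_zero_or_pos T with h0 | hpos
  · have : IsEmpty ι := Fintype.card_eq_zero_iff.1 h0
    by_contra hK
    obtain ⟨i, _⟩ := h ⟨0, by omega⟩
    exact this.false i
  let e : ι ≃ Fin T := Fintype.equivFin ι
  let f : Equiv.Perm (Fin T) := Tuple.sort (y ∘ e.symm)
  have hf : Monotone ((y ∘ e.symm) ∘ f) := Tuple.monotone_sort _
  let w : ℕ → ℝ := fun k => ((y ∘ e.symm) ∘ f) ⟨min k (T - 1), by omega⟩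
  have hw : Monotone w := by
    intro k l hkl
    apply hf
    simp only [Fin.mk_le_mk]
    omega
  have hpos' : ∀ i : ι, w (f.symm (e i)) = y i := by
    intro i
    have : (⟨min ((f.symm (e i) : Fin T) : ℕ) (T - 1), by omega⟩ : Fin T) = f.symm (e i) := by
      apply Fin.ext
      have := (f.symm (e i)).2
      simp only
      omega
    simp only [w, Function.comp_apply, this, Equiv.apply_symm_apply, Equiv.symm_apply_apply]
  have hg : ∀ c, ∃ k : Fin (T - 1), s c / T ≤ w (k + 1) - w k ∧ w (k + 1) - w k ≤ t c := by
    intro c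
    obtain ⟨i, j, h1, h2⟩ := h c
    rw [← hpos' i, ← hpos' j] at h1 h2
    have hlt : (f.symm (e j) : ℕ) ≤ (f.symm (e i) : ℕ) := by
      by_contra hle
      have := hw (not_le.1 hle).le
      linarith [hs c]
    obtain ⟨k, hk1, hk2, hk3, hk4⟩ := exists_gap w hw _ _ T hlt (by omega) (s c) (hs c) h1
    exact ⟨⟨k, by omega⟩, hk3, hk4.trans h2⟩
  choose k hk1 hk2 using hg
  have hinj : Function.Injective k := by
    intro c c' hcc
    rcases lt_trichotomy c c' with hl | hl | hl
    · have := hsep _ _ hl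
      have a1 := hk1 c
      have a2 := hk2 c'
      rw [hcc] at a1
      linarith
    · exact hl
    · have := hsep _ _ hl
      have a1 := hk1 c'
      have a2 := hk2 c
      rw [hcc] at a2
      linarith
  simpa using Fintype.card_le_of_injective k hinj

/-- An isometry `J` with `J v` orthogonal to `v`, in even dimension. -/
lemma exists_J (d : ℕ) (hd : Even d) : ∃ J : EuclideanSpace ℝ (Fin d) → EuclideanSpace ℝ (Fin d),
    Continuous J ∧ (∀ v, ‖J v‖ = ‖v‖) ∧ ∀ v, inner ℝ v (J v) = 0 := by
  obtain ⟨k, hk⟩ := hd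
  have E : Fin k × Bool ≃ Fin d := Fintype.equivOfCardEq (by simp; omega)
  let τ : Equiv.Perm (Fin d) :=
    E.symm.trans (((Equiv.refl (Fin k)).prodCongr Equiv.boolNot).trans E)
  let ε : Fin d → ℝ := fun i => if (E.symm i).2 = true then 1 else -1
  have hε : ∀ i, ε (τ i) = - ε i := by
    intro i
    simp only [ε, τ, Equiv.trans_apply, Equiv.symm_apply_apply]
    obtain ⟨a, b⟩ := E.symm i
    cases b <;> simp [Equiv.boolNot]
  have hττ : ∀ i, τ (τ i) = i := by
    intro i
    simp only [τ, Equiv.trans_apply, Equiv.symm_apply_apply]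
    rw [← E.apply_symm_apply i]
    congr 1
    rw [E.symm_apply_apply]
    obtain ⟨a, b⟩ := E.symm i
    cases b <;> simp [Equiv.boolNot]
  have hε2 : ∀ i, ε i ^ 2 = 1 := by
    intro i
    simp only [ε]
    split_ifs <;> norm_num
  refine ⟨fun v => WithLp.toLp 2 fun i => ε i * v (τ i), by fun_prop, fun v => ?_, fun v => ?_⟩
  · rw [EuclideanSpace.norm_eq, EuclideanSpace.norm_eq]
    congr 1
    simp only [Real.norm_eq_abs, sq_abs, mul_pow, hε2, one_mul]
    exact Equiv.sum_comp τ fun i => v i ^ 2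
  · rw [PiLp.inner_apply]
    simp only [RCLike.inner_apply, conj_trivial]
    have h := Equiv.sum_comp τ fun i => ε i * v (τ i) * v i
    simp only [hε, hττ] at h
    have h2 : ∑ x, -ε x * v x * v (τ x) = - ∑ i, ε i * v (τ i) * v i := by
      rw [← Finset.sum_neg_distrib]
      exact Finset.sum_congr rfl fun i _ => by ring
    linarith

end FN


namespace FN

section motion

variable {V : Type*} [NormedAddCommGroup V] [InnerProductSpace ℝ V]

/-- Three-parameter motion. -/
noncomputable def mv (e e' z : V) (sh H a b c : ℝ) : V :=
  ((1 - c) * (inner ℝ e z + a * sh)) • e + (1 - b) • (z - (inner ℝ e z : ℝ) • e) + (b * H) • e'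

lemma mv_phase1 (e e' z : V) (sh H a : ℝ) : mv e e' z sh H a 0 0 = z + (a * sh) • e := by
  unfold mv
  simp only [sub_zero, one_mul, one_smul, zero_mul, zero_smul, add_zero, add_smul]
  abel

lemma inner_mv (e e' z : V) (sh H a b c : ℝ) (he : ‖e‖ = 1) (hee : inner ℝ e e' = (0 : ℝ)) :
    inner ℝ e (mv e e' z sh H a b c) = (1 - c) * (inner ℝ e z + a * sh) := by
  unfold mv
  have h1 : inner ℝ e e = (1 : ℝ) := by rw [real_inner_self_eq_norm_sq, he]; norm_num
  simp only [inner_add_right, inner_smul_right, inner_sub_right, h1, hee]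
  ring

lemma inner_mv' (e e' z : V) (sh H a c : ℝ) (he : ‖e'‖ = 1) (hee : inner ℝ e e' = (0 : ℝ)) :
    inner ℝ e' (mv e e' z sh H a 1 c) = H := by
  unfold mv
  have h1 : inner ℝ e' e' = (1 : ℝ) := by rw [real_inner_self_eq_norm_sq, he]; norm_num
  have h2 : inner ℝ e' e = (0 : ℝ) := by rw [real_inner_comm]; exact hee
  simp only [inner_add_right, inner_smul_right, h1, h2, sub_self, zero_smul, inner_zero_right]
  ring

/-- One-parameter motion. -/
noncomputable def mo (e e' z : V) (sh H s : ℝ) : V :=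
  mv e e' z sh H (cl (3 * s)) (cl (3 * s - 1)) (cl (3 * s - 2))

lemma mo_zero (e e' z : V) (sh H : ℝ) : mo e e' z sh H 0 = z := by
  unfold mo
  rw [cl_of_le (by norm_num), cl_of_le (by norm_num), cl_of_le (by norm_num), mv_phase1]
  simp

lemma mo_one (e e' z : V) (sh H : ℝ) : mo e e' z sh H 1 = H • e' := by
  unfold mo
  rw [cl_of_ge (by norm_num), cl_of_ge (by norm_num), cl_of_ge (by norm_num)]
  simp [mv]

lemma phases (s : ℝ) : (cl (3 * s - 1) = 0 ∧ cl (3 * s - 2) = 0) ∨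
    (cl (3 * s) = 1 ∧ cl (3 * s - 2) = 0) ∨ (cl (3 * s - 1) = 1) := by
  rcases le_total s (1 / 3) with h | h
  · exact Or.inl ⟨cl_of_le (by linarith), cl_of_le (by linarith)⟩
  rcases le_total s (2 / 3) with h' | h'
  · exact Or.inr (Or.inl ⟨cl_of_ge (by linarith), cl_of_le (by linarith)⟩)
  · exact Or.inr (Or.inr (cl_of_ge (by linarith)))

lemma abs_cl_mul_lt (u sh δ : ℝ) (h : |sh| < δ) : |cl u * sh| < δ := by
  rw [abs_mul, abs_of_nonneg (cl_nonneg u)]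
  have := mul_le_mul_of_nonneg_right (cl_le_one u) (abs_nonneg sh)
  linarith

lemma mo_ne_pt (e e' z w : V) (sh H δ : ℝ) (he : ‖e‖ = 1) (he' : ‖e'‖ = 1)
    (hee : inner ℝ e e' = (0 : ℝ)) (hδ : δ ≤ ‖z - w‖) (hsh : |sh| < δ / 2)
    (hne : inner ℝ e z + sh ≠ (inner ℝ e w : ℝ)) (hH : ‖w‖ < H) (s : ℝ) :
    mo e e' z sh H s ≠ w := by
  intro h
  unfold mo at h
  rcases phases s with ⟨h1, h2⟩ | ⟨h1, h2⟩ | h1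
  · rw [h1, h2, mv_phase1] at h
    have h3 : z - w = -((cl (3 * s) * sh) • e) := by rw [← h]; abel
    rw [h3, norm_neg, norm_smul, he, mul_one, Real.norm_eq_abs] at hδ
    have := abs_cl_mul_lt (3 * s) sh _ hsh
    linarith [abs_nonneg sh]
  · apply hne
    rw [← h, inner_mv _ _ _ _ _ _ _ _ he hee, h1, h2]
    ring
  · rw [h1] at h
    have h3 := inner_mv' e e' z sh H (cl (3 * s)) (cl (3 * s - 2)) he' hee
    rw [h] at h3
    have h4 := real_inner_le_norm e' w
    rw [he', one_mul] at h4
    linarith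

lemma mo_ne_mo (e e' z w : V) (sh sh' H H' δ : ℝ) (he : ‖e‖ = 1) (he' : ‖e'‖ = 1)
    (hee : inner ℝ e e' = (0 : ℝ)) (hδ : δ ≤ ‖z - w‖) (hsh : |sh| < δ / 2) (hsh' : |sh'| < δ / 2)
    (hne : inner ℝ e z + sh ≠ (inner ℝ e w + sh' : ℝ)) (hH : H ≠ H') (s : ℝ) :
    mo e e' z sh H s ≠ mo e e' w sh' H' s := by
  intro h
  unfold mo at h
  rcases phases s with ⟨h1, h2⟩ | ⟨h1, h2⟩ | h1
  · rw [h1, h2, mv_phase1, mv_phase1] at h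
    have h3 : z - w = (cl (3 * s) * sh') • e - (cl (3 * s) * sh) • e := by
      rw [sub_eq_sub_iff_add_eq_add, h]; abel
    rw [h3, ← sub_smul, norm_smul, he, mul_one, Real.norm_eq_abs] at hδ
    have a1 := abs_cl_mul_lt (3 * s) sh _ hsh
    have a2 := abs_cl_mul_lt (3 * s) sh' _ hsh'
    have a3 := abs_sub (cl (3 * s) * sh') (cl (3 * s) * sh)
    linarith
  · apply hne
    have h3 := congrArg (fun v => inner ℝ e v) h
    simp only [inner_mv _ _ _ _ _ _ _ _ he hee, h1, h2] at h3
    linarith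
  · rw [h1] at h
    apply hH
    have h3 := congrArg (fun v => inner ℝ e' v) h
    simpa only [inner_mv' _ _ _ _ _ _ _ he' hee] using h3

lemma mo_cont {X : Type*} [TopologicalSpace X] (e e' z : X → V) (sh H s : X → ℝ)
    (he : Continuous e) (he' : Continuous e') (hz : Continuous z) (hsh : Continuous sh)
    (hH : Continuous H) (hs : Continuous s) :
    Continuous fun x => mo (e x) (e' x) (z x) (sh x) (H x) (s x) := by
  have h1 : Continuous fun x => cl (3 * s x) := cl_cont.comp (by fun_prop)
  have h2 : Continuous fun x => cl (3 * s x - 1) := cl_cont.comp (by fun_prop)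
  have h3 : Continuous fun x => cl (3 * s x - 2) := cl_cont.comp (by fun_prop)
  have h4 : Continuous fun x => (inner ℝ (e x) (z x) : ℝ) := he.inner hz
  unfold mo mv
  fun_prop

end motion

/-- The local time around the `l`-th visit. -/
noncomputable def tloc (r l : ℕ) (t : ℝ) : ℝ := cl (2 * |((r : ℝ) - 1) * t - l|)

lemma tloc_self (r : ℕ) (hr : 2 ≤ r) (l : Fin r) : tloc r l (tDiv r l : ℝ) = 0 := by
  have hr' : (2 : ℝ) ≤ r := by exact_mod_cast hr
  have hl : ((l : ℕ) : ℝ) + 1 ≤ r := by exact_mod_cast l.2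
  have : (tDiv r l : ℝ) = (l : ℝ) / (r - 1) := by
    unfold tDiv
    rw [Set.projIcc_of_mem]
    constructor
    · apply div_nonneg <;> [positivity; linarith]
    · rw [div_le_one (by linarith)]
      linarith
  unfold tloc
  rw [this, mul_div_cancel₀ _ (by linarith : (r : ℝ) - 1 ≠ 0)]
  apply cl_of_le
  simp

lemma tloc_one (r : ℕ) (hr : 2 ≤ r) (t : ℝ) : ∃ l0 : Fin r, ∀ l : Fin r, l ≠ l0 → tloc r l t = 1 := by
  by_cases h : ∃ l0 : Fin r, |((r : ℝ) - 1) * t - (l0 : ℕ)| < 1 / 2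
  · obtain ⟨l0, h0⟩ := h
    refine ⟨l0, fun l hl => cl_of_ge ?_⟩
    have h1 : (1 : ℝ) ≤ |((l : ℕ) : ℝ) - (l0 : ℕ)| := by
      have : (1 : ℤ) ≤ |((l : ℕ) : ℤ) - (l0 : ℕ)| := by
        apply Int.one_le_abs
        have := fun h => hl (Fin.ext h)
        omega
      exact_mod_cast this
    have h2 : |((l : ℕ) : ℝ) - (l0 : ℕ)| ≤
        |((r : ℝ) - 1) * t - (l0 : ℕ)| + |((r : ℝ) - 1) * t - (l : ℕ)| := by
      have := abs_sub (((r : ℝ) - 1) * t - (l0 : ℕ)) (((r : ℝ) - 1) * t - (l : ℕ))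
      rwa [sub_sub_sub_cancel_left] at this
    linarith
  · push Not at h
    refine ⟨⟨0, by omega⟩, fun l _ => cl_of_ge ?_⟩
    linarith [h l]

lemma tloc_cont (r l : ℕ) : Continuous (tloc r l) := by
  have := cl_cont
  unfold tloc
  fun_prop

end FN


namespace FN

section planner

variable {d r m n : ℕ}

/-- The `i`-th point of the `l`-th configuration. -/
noncomputable def pt (x : FibredProd (fadellNeuwirth d m n) r) (l : Fin r) (i : Fin (m + n)) :
    EuclideanSpace ℝ (Fin d) := (x.1 l).1 i

lemma pt_cont (l : Fin r) (i : Fin (m + n)) :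
    Continuous fun x : FibredProd (fadellNeuwirth d m n) r => pt x l i := by
  have h1 : Continuous fun x : FibredProd (fadellNeuwirth d m n) r => x.1 := continuous_subtype_val
  have h2 : Continuous fun c : Conf d (m + n) => c.1 := continuous_subtype_val
  exact (continuous_apply i).comp (h2.comp ((continuous_apply l).comp h1))

lemma pt_inj (x : FibredProd (fadellNeuwirth d m n) r) (l : Fin r) {i j : Fin (m + n)}
    (h : i ≠ j) : pt x l i ≠ pt x l j := fun h' => h ((x.1 l).2 h')

lemma pt_base (x : FibredProd (fadellNeuwirth d m n) r) (l l' : Fin r) (i : Fin (m + n))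
    (hi : (i : ℕ) < m) : pt x l i = pt x l' i := by
  have h := x.2 l l'
  have h1 := congrFun (congrArg Subtype.val h) ⟨i, hi⟩
  exact h1

/-- Height of the canonical position. -/
noncomputable def ht (x : FibredProd (fadellNeuwirth d m n) r) (l : Fin r) (i : Fin (m + n)) : ℝ :=
  (∑ k : Fin (m + n), if (k : ℕ) < m then ‖pt x l k‖ else 0) + 1 + (i : ℕ)

lemma ht_cont (l : Fin r) (i : Fin (m + n)) :
    Continuous fun x : FibredProd (fadellNeuwirth d m n) r => ht x l i := by
  unfold ht
  have : Continuous fun x : FibredProd (fadellNeuwirth d m n) r =>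
      ∑ k : Fin (m + n), if (k : ℕ) < m then ‖pt x l k‖ else 0 := by
    refine continuous_finsetSum _ fun k _ => ?_
    split_ifs
    · exact (pt_cont l k).norm
    · exact continuous_const
  fun_prop

lemma lt_ht (x : FibredProd (fadellNeuwirth d m n) r) (l : Fin r) (i k : Fin (m + n))
    (hk : (k : ℕ) < m) : ‖pt x l k‖ < ht x l i := by
  have h := Finset.single_le_sum (f := fun k : Fin (m + n) => if (k : ℕ) < m then ‖pt x l k‖ else 0)
    (fun k _ => by positivity) (Finset.mem_univ k)
  simp only [hk, if_true] at h
  unfold ht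
  have : (0 : ℝ) ≤ (i : ℕ) := by positivity
  linarith

/-- The position of the `i`-th point at time `t`. -/
noncomputable def pos (l1 : Fin r) (e e' : FibredProd (fadellNeuwirth d m n) r →
    EuclideanSpace ℝ (Fin d)) (sc : FibredProd (fadellNeuwirth d m n) r → ℝ)
    (x : FibredProd (fadellNeuwirth d m n) r) (t : ℝ) (i : Fin (m + n)) : EuclideanSpace ℝ (Fin d) :=
  if (i : ℕ) < m then pt x l1 i else
    ht x l1 i • e' x + ∑ l : Fin r,
      (mo (e x) (e' x) (pt x l i) (sc x * ((i : ℕ) + 1)) (ht x l1 i) (tloc r l t) - ht x l1 i • e' x)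

lemma pos_eq (l1 : Fin r) (e e' : FibredProd (fadellNeuwirth d m n) r →
    EuclideanSpace ℝ (Fin d)) (sc : FibredProd (fadellNeuwirth d m n) r → ℝ)
    (x : FibredProd (fadellNeuwirth d m n) r) (t : ℝ) (i : Fin (m + n)) (hi : ¬ (i : ℕ) < m)
    (l0 : Fin r) (hl : ∀ l : Fin r, l ≠ l0 → tloc r l t = 1) :
    pos l1 e e' sc x t i =
      mo (e x) (e' x) (pt x l0 i) (sc x * ((i : ℕ) + 1)) (ht x l1 i) (tloc r l0 t) := by
  unfold pos
  rw [if_neg hi, Finset.sum_eq_single l0]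
  · abel
  · intro l _ hne
    rw [hl l hne, mo_one, sub_self]
  · intro h
    exact absurd (Finset.mem_univ _) h

lemma pos_cont (l1 : Fin r) (e e' : FibredProd (fadellNeuwirth d m n) r →
    EuclideanSpace ℝ (Fin d)) (sc : FibredProd (fadellNeuwirth d m n) r → ℝ)
    (he : Continuous e) (he' : Continuous e') (hsc : Continuous sc)
    {Y : Type*} [TopologicalSpace Y] (f : Y → FibredProd (fadellNeuwirth d m n) r) (g : Y → ℝ)
    (hf : Continuous f) (hg : Continuous g) (i : Fin (m + n)) :
    Continuous fun z : Y => pos l1 e e' sc (f z) (g z) i := by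
  unfold pos
  split_ifs with hi
  · exact (pt_cont l1 i).comp hf
  · have a1 := (ht_cont (d := d) (m := m) (n := n) l1 i).comp hf
    have a2 : Continuous fun z : Y => ht (f z) l1 i • e' (f z) := a1.smul (he'.comp hf)
    refine a2.add (continuous_finsetSum _ fun l _ => Continuous.sub ?_ a2)
    exact mo_cont _ _ _ _ _ _ (he.comp hf) (he'.comp hf) ((pt_cont l i).comp hf)
      ((hsc.comp hf).mul continuous_const) a1 ((tloc_cont r l).comp hg)

theorem planner (hr : 2 ≤ r) (l1 : Fin r) (U : Set (FibredProd (fadellNeuwirth d m n) r))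
    (e e' : FibredProd (fadellNeuwirth d m n) r → EuclideanSpace ℝ (Fin d))
    (sc δ : FibredProd (fadellNeuwirth d m n) r → ℝ)
    (he : Continuous e) (he' : Continuous e') (hsc : Continuous sc)
    (he1 : ∀ x, ‖e x‖ = 1) (he1' : ∀ x, ‖e' x‖ = 1) (hee : ∀ x, inner ℝ (e x) (e' x) = (0 : ℝ))
    (hδ : ∀ x l i j, i ≠ j → δ x ≤ ‖pt x l i - pt x l j‖)
    (hsd : ∀ x, ∀ i : Fin (m + n), |sc x * ((i : ℕ) + 1)| < δ x / 2)
    (h1 : ∀ x ∈ U, ∀ l, ∀ i j : Fin (m + n), ¬ (i : ℕ) < m → (j : ℕ) < m →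
      inner ℝ (e x) (pt x l i) + sc x * ((i : ℕ) + 1) ≠ (inner ℝ (e x) (pt x l j) : ℝ))
    (h2 : ∀ x ∈ U, ∀ l, ∀ i j : Fin (m + n), ¬ (i : ℕ) < m → ¬ (j : ℕ) < m → i ≠ j →
      inner ℝ (e x) (pt x l i) + sc x * ((i : ℕ) + 1) ≠
        (inner ℝ (e x) (pt x l j) + sc x * ((j : ℕ) + 1) : ℝ)) :
    ∃ s : U → FibredPaths (fadellNeuwirth d m n), Continuous s ∧
      ∀ x : U, parmEval (fadellNeuwirth d m n) r (s x) = (x : FibredProd (fadellNeuwirth d m n) r) := by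
  have hinj : ∀ x ∈ U, ∀ t : ℝ, Function.Injective (pos l1 e e' sc x t) := by
    intro x hx t i j hij
    by_contra hne
    obtain ⟨l0, hl0⟩ := tloc_one r hr t
    have key : ∀ i j : Fin (m + n), ¬ (i : ℕ) < m → (j : ℕ) < m →
        pos l1 e e' sc x t i ≠ pos l1 e e' sc x t j := by
      intro i j hi hj
      rw [pos_eq l1 e e' sc x t i hi l0 hl0]
      have : pos l1 e e' sc x t j = pt x l0 j := by
        unfold pos
        rw [if_pos hj]
        exact pt_base x _ _ j hj
      rw [this]
      refine mo_ne_pt _ _ _ _ _ _ (δ x) (he1 x) (he1' x) (hee x) (hδ x l0 i j ?_) (hsd x i)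
        (h1 x hx l0 i j hi hj) ?_ _
      · rintro rfl
        exact hi hj
      · rw [pt_base x l0 l1 j hj]
        exact lt_ht x l1 i j hj
    by_cases hi : (i : ℕ) < m
    · by_cases hj : (j : ℕ) < m
      · unfold pos at hij
        rw [if_pos hi, if_pos hj] at hij
        exact pt_inj x l1 hne hij
      · exact key j i hj hi hij.symm
    · by_cases hj : (j : ℕ) < m
      · exact key i j hi hj hij
      · rw [pos_eq l1 e e' sc x t i hi l0 hl0, pos_eq l1 e e' sc x t j hj l0 hl0] at hij
        refine mo_ne_mo _ _ _ _ _ _ _ _ (δ x) (he1 x) (he1' x) (hee x) (hδ x l0 i j hne) (hsd x i)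
          (hsd x j) (h2 x hx l0 i j hi hj hne) ?_ _ hij
        unfold ht
        intro h
        apply hne
        apply Fin.ext
        have : ((i : ℕ) : ℝ) = (j : ℕ) := by linarith
        exact_mod_cast this
  let F : U × I → Conf d (m + n) := fun z => ⟨pos l1 e e' sc z.1.1 z.2.1, hinj z.1.1 z.1.2 z.2.1⟩
  have hF : Continuous F := by
    have h4 : Continuous fun z : U × I => pos l1 e e' sc z.1.1 z.2.1 :=
      continuous_pi fun i => pos_cont l1 e e' sc he he' hsc (fun z : U × I => z.1.1)
        (fun z : U × I => z.2.1) (continuous_subtype_val.comp continuous_fst)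
        (continuous_subtype_val.comp continuous_snd) i
    exact Continuous.subtype_mk h4 _
  let G : C(U, C(I, Conf d (m + n))) := ContinuousMap.curry ⟨F, hF⟩
  have hfib : ∀ x : U, ∀ t : I, fadellNeuwirth d m n (G x t) = fadellNeuwirth d m n (x.1.1 l1) := by
    intro x t
    apply Subtype.ext
    funext i
    change pos l1 e e' sc x.1 t.1 (Fin.castLE (Nat.le_add_right m n) i) =
      pt x.1 l1 (Fin.castLE (Nat.le_add_right m n) i)
    unfold pos
    rw [if_pos (by simp)]
  refine ⟨fun x => ⟨G x, _, hfib x⟩, ?_, ?_⟩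
  · exact Continuous.subtype_mk G.continuous _
  · intro x
    apply Subtype.ext
    funext l
    apply Subtype.ext
    funext i
    change pos l1 e e' sc x.1 (tDiv r l : ℝ) i = pt x.1 l i
    by_cases hi : (i : ℕ) < m
    · unfold pos
      rw [if_pos hi]
      exact pt_base _ _ _ _ hi
    · obtain ⟨l0, hl0⟩ := tloc_one r hr (tDiv r l : ℝ)
      have : l = l0 := by
        by_contra hne
        have := hl0 l hne
        rw [tloc_self r hr l] at this
        norm_num at this
      subst this
      rw [pos_eq l1 e e' sc x.1 _ i hi l hl0, tloc_self r hr l, mo_zero]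

end planner

end FN


namespace FN

section cover

variable {d r m n : ℕ}

/-- The separation function. -/
noncomputable def dl (x : FibredProd (fadellNeuwirth d m n) r) : ℝ :=
  (1 + ∑ l : Fin r, ∑ i : Fin (m + n), ∑ j : Fin (m + n), ‖pt x l i - pt x l j‖⁻¹)⁻¹

lemma dl_sum_nonneg (x : FibredProd (fadellNeuwirth d m n) r) :
    0 ≤ ∑ l : Fin r, ∑ i : Fin (m + n), ∑ j : Fin (m + n), ‖pt x l i - pt x l j‖⁻¹ := by
  positivity

lemma dl_pos (x : FibredProd (fadellNeuwirth d m n) r) : 0 < dl x := by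
  have := dl_sum_nonneg x
  unfold dl
  positivity

lemma dl_cont : Continuous (dl (d := d) (r := r) (m := m) (n := n)) := by
  unfold dl
  refine Continuous.inv₀ ?_ fun x => by
    have := dl_sum_nonneg x
    positivity
  refine continuous_const.add (continuous_finsetSum _ fun l _ => continuous_finsetSum _ fun i _ =>
    continuous_finsetSum _ fun j _ => ?_)
  by_cases h : i = j
  · subst h
    simp only [sub_self, norm_zero, inv_zero]
    exact continuous_const
  · exact ((pt_cont l i).sub (pt_cont l j)).norm.inv₀ fun x =>
      norm_ne_zero_iff.2 (sub_ne_zero.2 (pt_inj x l h))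

lemma le_triple_sum {k : ℕ} (g : Fin r → Fin k → Fin k → ℝ) (hg : ∀ l i j, 0 ≤ g l i j)
    (l : Fin r) (i j : Fin k) : g l i j ≤ ∑ l, ∑ i, ∑ j, g l i j := by
  have a1 : g l i j ≤ ∑ j, g l i j :=
    Finset.single_le_sum (fun j _ => hg l i j) (Finset.mem_univ j)
  have a2 : ∑ j, g l i j ≤ ∑ i, ∑ j, g l i j :=
    Finset.single_le_sum (f := fun i => ∑ j, g l i j)
      (fun i _ => Finset.sum_nonneg fun j _ => hg l i j) (Finset.mem_univ i)
  have a3 : ∑ i, ∑ j, g l i j ≤ ∑ l, ∑ i, ∑ j, g l i j :=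
    Finset.single_le_sum (f := fun l => ∑ i, ∑ j, g l i j)
      (fun l _ => Finset.sum_nonneg fun i _ => Finset.sum_nonneg fun j _ => hg l i j)
      (Finset.mem_univ l)
  linarith

lemma dl_le (x : FibredProd (fadellNeuwirth d m n) r) (l : Fin r) (i j : Fin (m + n))
    (h : i ≠ j) : dl x ≤ ‖pt x l i - pt x l j‖ := by
  have hp : 0 < ‖pt x l i - pt x l j‖ := norm_pos_iff.2 (sub_ne_zero.2 (pt_inj x l h))
  have a1 := le_triple_sum (fun l i j => ‖pt x l i - pt x l j‖⁻¹)
    (fun _ _ _ => inv_nonneg.2 (norm_nonneg _)) l i j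
  have a0 := dl_sum_nonneg x
  unfold dl
  rw [inv_le_comm₀ (by linarith) hp]
  linarith

/-- All moving and fixed points. -/
noncomputable def item (l1 : Fin r) (x : FibredProd (fadellNeuwirth d m n) r) :
    Fin m ⊕ (Fin r × Fin n) → EuclideanSpace ℝ (Fin d)
  | Sum.inl i => pt x l1 (Fin.castAdd n i)
  | Sum.inr p => pt x p.1 (Fin.natAdd m p.2)

lemma item_cont (l1 : Fin r) (a : Fin m ⊕ (Fin r × Fin n)) :
    Continuous fun x : FibredProd (fadellNeuwirth d m n) r => item l1 x a := by
  rcases a with i | p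
  · exact pt_cont _ _
  · exact pt_cont _ _

lemma exists_item (l1 l : Fin r) (i : Fin (m + n)) : ∃ a : Fin m ⊕ (Fin r × Fin n),
    ∀ x : FibredProd (fadellNeuwirth d m n) r, item l1 x a = pt x l i := by
  refine Fin.addCases (fun i => ?_) (fun j => ?_) i
  · exact ⟨Sum.inl i, fun x => pt_base x l1 l _ (by simp)⟩
  · exact ⟨Sum.inr (l, j), fun x => rfl⟩

/-- The scales. -/
noncomputable def scl (c : ℕ) (x : FibredProd (fadellNeuwirth d m n) r) : ℝ :=
  dl x / (((m + r * n : ℕ) : ℝ) + 2) ^ (2 * (c + 1))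

lemma scl_pos (c : ℕ) (x : FibredProd (fadellNeuwirth d m n) r) : 0 < scl c x := by
  have := dl_pos x
  unfold scl
  positivity

lemma scl_cont (c : ℕ) : Continuous (scl (d := d) (r := r) (m := m) (n := n) c) := by
  have := dl_cont (d := d) (r := r) (m := m) (n := n)
  unfold scl
  fun_prop

lemma scl_succ (c : ℕ) (x : FibredProd (fadellNeuwirth d m n) r) :
    scl c x = (((m + r * n : ℕ) : ℝ) + 2) ^ 2 * scl (c + 1) x := by
  unfold scl
  have : (((m + r * n : ℕ) : ℝ) + 2) ≠ 0 := by positivity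
  rw [show 2 * (c + 1 + 1) = 2 + 2 * (c + 1) by ring, pow_add]
  field_simp

lemma dl_eq (x : FibredProd (fadellNeuwirth d m n) r) :
    dl x = (((m + r * n : ℕ) : ℝ) + 2) ^ 2 * scl 0 x := by
  unfold scl
  have : (((m + r * n : ℕ) : ℝ) + 2) ≠ 0 := by positivity
  field_simp

lemma scl_anti (x : FibredProd (fadellNeuwirth d m n) r) : Antitone fun c => scl c x := by
  apply antitone_nat_of_succ_le
  intro c
  rw [scl_succ c x]
  have h := scl_pos (c + 1) x
  have : (0 : ℝ) ≤ ((m + r * n : ℕ) : ℝ) := by positivity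
  have h1 : (1 : ℝ) ≤ (((m + r * n : ℕ) : ℝ) + 2) ^ 2 := by nlinarith
  exact le_mul_of_one_le_left h.le h1

theorem TC_le (hr : 2 ≤ r) (hm : 2 ≤ m) (l1 : Fin r) (K : ℕ)
    (e e' : FibredProd (fadellNeuwirth d m n) r → EuclideanSpace ℝ (Fin d))
    (he : Continuous e) (he' : Continuous e')
    (he1 : ∀ x, ‖e x‖ = 1) (he1' : ∀ x, ‖e' x‖ = 1) (hee : ∀ x, inner ℝ (e x) (e' x) = (0 : ℝ))
    (hK : m + r * n ≤ K + 1 ∨ (m + r * n ≤ K + 2 ∧ ∀ x, ∃ a b,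
      dl x ≤ (inner ℝ (e x) (item l1 x a) - inner ℝ (e x) (item l1 x b) : ℝ))) :
    TCfib (fadellNeuwirth d m n) r ≤ (K : ℕ∞) := by
  have hcard : Fintype.card (Fin m ⊕ (Fin r × Fin n)) = m + r * n := by simp
  have hTpos : (0 : ℝ) < ((m + r * n : ℕ) : ℝ) := by
    exact_mod_cast (by omega : 0 < m + r * n)
  have hTn : m + n ≤ m + r * n := by nlinarith
  set T : ℝ := ((m + r * n : ℕ) : ℝ) with hT
  have hiT : ∀ i : Fin (m + n), ((i : ℕ) : ℝ) + 1 ≤ T := by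
    intro i
    have : (i : ℕ) + 1 ≤ m + r * n := by have := i.2; omega
    rw [hT]
    exact_mod_cast this
  let y : FibredProd (fadellNeuwirth d m n) r → Fin m ⊕ (Fin r × Fin n) → ℝ :=
    fun x a => inner ℝ (e x) (item l1 x a)
  have hy : ∀ a, Continuous fun x => y x a := fun a => he.inner (item_cont l1 a)
  let U : Fin (K + 1) → Set (FibredProd (fadellNeuwirth d m n) r) := fun c =>
    ⋂ a, ⋂ b, ({x | |y x a - y x b| < scl c x} ∪ {x | (T + 1) * scl c x < |y x a - y x b|})
  have hUmem : ∀ c x, x ∈ U c → ∀ a b, |y x a - y x b| < scl c x ∨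
      (T + 1) * scl c x < |y x a - y x b| := by
    intro c x hx a b
    exact Set.mem_iInter.1 (Set.mem_iInter.1 hx a) b
  refine sInf_le ⟨K, rfl, U, ?_, ?_, ?_⟩
  · intro c
    refine isOpen_iInter_of_finite fun a => isOpen_iInter_of_finite fun b => ?_
    have h1 := ((hy a).sub (hy b)).abs
    have h2 : Continuous fun x : FibredProd (fadellNeuwirth d m n) r => scl c x := scl_cont c
    exact (isOpen_lt h1 h2).union (isOpen_lt (continuous_const.mul h2) h1)
  · refine Set.eq_univ_of_forall fun x => ?_
    by_contra hx
    have hbad : ∀ c : Fin (K + 1), ∃ a b, scl c x ≤ y x a - y x b ∧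
        y x a - y x b ≤ (T + 1) * scl c x := by
      intro c
      have h1 : x ∉ U c := fun h => hx (Set.mem_iUnion.2 ⟨c, h⟩)
      have h2 : ∃ a b, ¬ (|y x a - y x b| < scl c x ∨ (T + 1) * scl c x < |y x a - y x b|) := by
        by_contra hno
        push Not at hno
        apply h1
        refine Set.mem_iInter.2 fun a => Set.mem_iInter.2 fun b => ?_
        by_cases h : |y x a - y x b| < scl c x
        · exact Or.inl h
        · exact Or.inr (by
            by_contra h'
            have := hno a b
            tauto)
      obtain ⟨a, b, hab⟩ := h2
      push Not at hab
      rcases le_total 0 (y x a - y x b) with h | h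
      · rw [abs_of_nonneg h] at hab
        exact ⟨a, b, hab⟩
      · rw [abs_of_nonpos h, neg_sub] at hab
        exact ⟨b, a, hab⟩
    have hsq : T * (T + 1) < (T + 2) ^ 2 := by nlinarith
    have hsep : ∀ c c' : ℕ, c < c' → (T + 1) * scl c' x < scl c x / T := by
      intro c c' h
      have h1 := scl_anti x (show c + 1 ≤ c' from h)
      have h2 := scl_succ c x
      have h3 := scl_pos c' x
      rw [lt_div_iff₀ hTpos, h2]
      calc (T + 1) * scl c' x * T = (T * (T + 1)) * scl c' x := by ring
        _ < (T + 2) ^ 2 * scl c' x := mul_lt_mul_of_pos_right hsq h3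
        _ ≤ (T + 2) ^ 2 * scl (c + 1) x := mul_le_mul_of_nonneg_left h1 (by positivity)
    rcases hK with hK | ⟨hK, hbig⟩
    · have := pigeon (y x) (K + 1) (fun c => scl c x) (fun c => (T + 1) * scl c x)
        (fun c => scl_pos _ _) (fun c c' h => by rw [hcard]; exact hsep _ _ h) hbad
      rw [hcard] at this
      omega
    · obtain ⟨a, b, hab⟩ := hbig x
      have := pigeon (y x) (K + 1 + 1)
        (Fin.cons (dl x) fun c : Fin (K + 1) => scl c x)
        (Fin.cons (y x a - y x b) fun c : Fin (K + 1) => (T + 1) * scl c x)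
        (fun c => by
          refine Fin.cases ?_ (fun c => ?_) c
          · simpa using dl_pos x
          · simpa using scl_pos c x)
        (fun c c' h => by
          rw [hcard]
          revert h
          refine Fin.cases ?_ (fun c' => ?_) c'
          · intro h
            exact absurd h (by simp)
          · refine Fin.cases ?_ (fun c => ?_) c
            · intro _
              simp only [Fin.cons_zero, Fin.cons_succ]
              rw [lt_div_iff₀ hTpos, dl_eq x]
              have h1 := scl_anti x (show 0 ≤ (c' : ℕ) from Nat.zero_le _)
              have h3 := scl_pos c' x
              calc (T + 1) * scl c' x * T = (T * (T + 1)) * scl c' x := by ring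
                _ < (T + 2) ^ 2 * scl c' x := mul_lt_mul_of_pos_right hsq h3
                _ ≤ (T + 2) ^ 2 * scl 0 x := mul_le_mul_of_nonneg_left h1 (by positivity)
            · intro h
              simp only [Fin.cons_succ]
              exact hsep _ _ (by simpa using h))
        (fun c => by
          refine Fin.cases ?_ (fun c => ?_) c
          · exact ⟨a, b, by simpa using hab, by simp⟩
          · simpa using hbad c)
      rw [hcard] at this
      omega
  · intro c
    refine planner hr l1 (U c) e e' (fun x => scl c x) dl he he' (scl_cont c) he1 he1' hee
      (fun x l i j h => dl_le x l i j h) ?_ ?_ ?_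
    · intro x i
      have h1 := scl_anti x (show 0 ≤ (c : ℕ) from Nat.zero_le _)
      have h3 := scl_pos c x
      rw [abs_of_nonneg (by positivity), dl_eq x]
      have h4 := hiT i
      have h5 : scl c x * ((i : ℕ) + 1) ≤ scl 0 x * T := by
        apply mul_le_mul h1 h4 (by positivity) (scl_pos 0 x).le
      have h6 := scl_pos 0 x
      have h7 : T < (T + 2) ^ 2 / 2 := by nlinarith
      have h8 : scl 0 x * T < scl 0 x * ((T + 2) ^ 2 / 2) := mul_lt_mul_of_pos_left h7 h6
      change _ < (T + 2) ^ 2 * scl 0 x / 2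
      linarith
    · intro x hx l i j hi hj h
      obtain ⟨a, ha⟩ := exists_item (d := d) l1 l i
      obtain ⟨b, hb⟩ := exists_item (d := d) l1 l j
      rw [← ha x, ← hb x] at h
      have h3 := scl_pos c x
      have h4 := hiT i
      have h5 : |y x a - y x b| = scl c x * ((i : ℕ) + 1) := by
        have : y x a - y x b = - (scl c x * ((i : ℕ) + 1)) := by
          simp only [y]
          linarith
        rw [this, abs_neg, abs_of_nonneg (by positivity)]
      have h6 : (0 : ℝ) ≤ (i : ℕ) := by positivity
      rcases hUmem c x hx a b with h' | h'
      · rw [h5] at h'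
        nlinarith
      · rw [h5] at h'
        nlinarith
    · intro x hx l i j hi hj hij h
      obtain ⟨a, ha⟩ := exists_item (d := d) l1 l i
      obtain ⟨b, hb⟩ := exists_item (d := d) l1 l j
      rw [← ha x, ← hb x] at h
      have h3 := scl_pos c x
      have h4 := hiT i
      have h4' := hiT j
      have h7 : (0 : ℝ) ≤ (i : ℕ) := by positivity
      have h7' : (0 : ℝ) ≤ (j : ℕ) := by positivity
      have h5 : |y x a - y x b| = scl c x * |((j : ℕ) : ℝ) - (i : ℕ)| := by
        have : y x a - y x b = scl c x * (((j : ℕ) : ℝ) - (i : ℕ)) := by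
          simp only [y]
          linarith
        rw [this, abs_mul, abs_of_pos h3]
      have h6 : (1 : ℝ) ≤ |((j : ℕ) : ℝ) - (i : ℕ)| := by
        have : (1 : ℤ) ≤ |((j : ℕ) : ℤ) - (i : ℕ)| := by
          apply Int.one_le_abs
          have := fun h => hij (Fin.ext h)
          omega
        exact_mod_cast this
      have h8 : |((j : ℕ) : ℝ) - (i : ℕ)| ≤ T := by
        rw [abs_le]
        constructor <;> linarith
      rcases hUmem c x hx a b with h' | h'
      · rw [h5] at h'
        nlinarith
      · rw [h5] at h'
        nlinarith

theorem TC_le_odd (hr : 2 ≤ r) (hm : 2 ≤ m) (hd : 2 ≤ d) :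
    TCfib (fadellNeuwirth d m n) r ≤ ((r * n + m - 1 : ℕ) : ℕ∞) := by
  refine TC_le hr hm ⟨0, by omega⟩ (r * n + m - 1)
    (fun _ => EuclideanSpace.single ⟨0, by omega⟩ 1) (fun _ => EuclideanSpace.single ⟨1, by omega⟩ 1)
    continuous_const continuous_const (fun _ => by simp) (fun _ => by simp) (fun _ => by
      simp [EuclideanSpace.inner_single_left]) (Or.inl (by omega))

theorem TC_le_even (hr : 2 ≤ r) (hm : 2 ≤ m) (hd : Even d) :
    TCfib (fadellNeuwirth d m n) r ≤ ((r * n + m - 2 : ℕ) : ℕ∞) := by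
  obtain ⟨J, hJc, hJn, hJo⟩ := exists_J d hd
  let l1 : Fin r := ⟨0, by omega⟩
  let i0 : Fin m := ⟨0, by omega⟩
  let i1 : Fin m := ⟨1, by omega⟩
  let v : FibredProd (fadellNeuwirth d m n) r → EuclideanSpace ℝ (Fin d) := fun x =>
    item l1 x (Sum.inl i1) - item l1 x (Sum.inl i0)
  have hne : Fin.castAdd n i1 ≠ Fin.castAdd n i0 := by
    intro h
    have := congrArg Fin.val h
    simp [i0, i1] at this
  have hvc : Continuous v := (item_cont l1 _).sub (item_cont l1 _)
  have hv0 : ∀ x, ‖v x‖ ≠ 0 := fun x => norm_ne_zero_iff.2 (sub_ne_zero.2 (pt_inj x l1 hne))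
  let e : FibredProd (fadellNeuwirth d m n) r → EuclideanSpace ℝ (Fin d) := fun x => ‖v x‖⁻¹ • v x
  have hec : Continuous e := (hvc.norm.inv₀ hv0).smul hvc
  have hen : ∀ x, ‖e x‖ = 1 := by
    intro x
    simp only [e]
    rw [norm_smul, norm_inv, norm_norm, inv_mul_cancel₀ (hv0 x)]
  refine TC_le hr hm l1 (r * n + m - 2) e (fun x => J (e x)) hec (hJc.comp hec) hen
    (fun x => by rw [hJn, hen]) (fun x => hJo _) (Or.inr ⟨by omega, fun x =>
      ⟨Sum.inl i1, Sum.inl i0, ?_⟩⟩)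
  rw [← inner_sub_right]
  change dl x ≤ inner ℝ (‖v x‖⁻¹ • v x) (v x)
  rw [inner_smul_left, real_inner_self_eq_norm_sq]
  have h1 : dl x ≤ ‖v x‖ := dl_le x l1 _ _ hne
  have h2 := hv0 x
  calc dl x ≤ ‖v x‖ := h1
    _ = _ := by
      simp only [conj_trivial]
      field_simp

end cover

end FN

/-- For all `r, m, d ≥ 2` and `n ≥ 1`, the Fadell–Neuwirth fibration
`p : F(ℝ^d, m+n) → F(ℝ^d, m)` satisfies `dTC_r[p] = rn + m - 1` if `d` is odd and
`dTC_r[p] = rn + m - 2` if `d` is even; in particular `dTC_r[p] = TC_r[p]`. -/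
theorem dTCfib_fadellNeuwirth (r m d n : ℕ) (hr : 2 ≤ r) (hm : 2 ≤ m) (hd : 2 ≤ d)
    (hn : 1 ≤ n) :
    dTCfib (fadellNeuwirth d m n) r
        = (if Odd d then ((r * n + m - 1 : ℕ) : ℕ∞) else ((r * n + m - 2 : ℕ) : ℕ∞)) ∧
      dTCfib (fadellNeuwirth d m n) r = TCfib (fadellNeuwirth d m n) r := by
  obtain ⟨q, rfl⟩ : ∃ q, d = q + 1 := ⟨d - 1, by omega⟩
  have hS := FN.dTC_le_TC r m (q + 1) n
  by_cases ho : Odd (q + 1)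
  · rw [if_pos ho]
    have hq : Even q := by
      rcases Nat.even_or_odd q with h | h
      · exact h
      · exact absurd ho (by rw [Nat.not_odd_iff_even]; exact h.add_one)
    have hU := FN.TC_le_odd (n := n) hr hm hd
    have hL := FN.le_dTC _ _ (FN.no_section_odd q r m n (by omega) hq hr hm hn)
    rw [show m - 2 + r * n + 1 = r * n + m - 1 by omega] at hL
    exact ⟨le_antisymm (hS.trans hU) hL, le_antisymm hS (hU.trans hL)⟩
  · rw [if_neg ho]
    have hU := FN.TC_le_even (n := n) hr hm (Nat.not_odd_iff_even.1 ho)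
    have hL := FN.le_dTC _ _ (FN.no_section_even q r m n (by omega) hr hm hn)
    rw [show m - 2 + r * n = r * n + m - 2 by omega] at hL
    exact ⟨le_antisymm (hS.trans hU) hL, le_antisymm hS (hU.trans hL)⟩
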